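/- arXiv:1402.2751 — 4 statements merged into one kernel-verified Lean document; each statement's English description precedes it below -/
import Mathlib

section
/- The minimum of the Lennard-Jones energy E_LJ among Bravais lattices is achieved: there exists a Bravais lattice L₀ of ℝ² such that E_LJ(L₀) ≤ E_LJ(L) for every Bravais lattice L of ℝ². Moreover, for every A > 0 there exists a Bravais lattice of area A achieving the minimum of E_LJ among all Bravais lattices of ℝ² of area A. -/
/-!
The proof is the direct method on reduced Gram data. A lattice with basis `(u, v)` is encoded by
`(a, b, c) = (‖u‖², ‖v‖², ⟪u, v⟫)`, and its energy is the sum `en` of `W t = t⁻⁶ - 2 t⁻³` over the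
values of the quadratic form `q(m, n) = m² a + 2 m n c + n² b` (the origin contributes nothing,
because `W 0 = 0`). Choosing, among all bases of a lattice with a given `disc = ab - c²`, one that
minimises `‖u‖² + ‖v‖²`, and swapping if necessary, gives a reduced basis: `0 < a ≤ b` and
`2|c| ≤ a` (`exists_reduced`). Conversely every such triple is realised (`exists_lattice`).

On reduced triples `q(m, n) ≥ (a / 2)(m² + n²)`, so `en` is continuous on each compact set
`{c₀ ≤ a ≤ b ≤ C, 2|c| ≤ a}` by the Weierstrass test (`continuousOn_en`). It remains to see that
the energy cannot be lowered outside such a set.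

* As `a → 0` the energy tends to `+∞`: it is at least `s² - 16 S s` with `s = a⁻³` and `S` a
  constant (`coercive`).
* At fixed area `A`, the identity `ab - c² = A²` bounds `b` once `a` is bounded below (`min_area`).
* For free area and `b → ∞`, the sum splits into the chain `n = 0` and the rest. The chain
  contributes `P s² - 2 Q s ≥ -Q² / P`, where `P = ∑ m⁻¹²` and `Q = ∑ m⁻⁶`, and the rest is at
  least `-16 S' / (b a²)` (`en_lower`). A rectangular lattice with the optimal chain `s = Q / P`
  and `b ≥ 1` has energy strictly below `-Q² / P`, since all the remaining terms are negative
  (`exists_below_chain`). Hence large `b` is excluded as well (`min_global`).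
-/

noncomputable section
open Real

abbrev R2 := EuclideanSpace ℝ (Fin 2)

def vec2 (x y : ℝ) : R2 := (WithLp.equiv 2 (Fin 2 → ℝ)).symm ![x, y]

/-- `L` is the Bravais lattice generated by the basis `(u, v)` of `ℝ²`. -/
def LatticeBasis (L : Set R2) (u v : R2) : Prop :=
  LinearIndependent ℝ ![u, v] ∧
    L = {x : R2 | ∃ m n : ℤ, x = (m : ℝ) • u + (n : ℝ) • v}

/-- `L` is a Bravais lattice of `ℝ²`. -/
def IsBravais (L : Set R2) : Prop := ∃ u v : R2, LatticeBasis L u v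

/-- The area `|L| = ‖u‖‖v‖|sin θ|` of a Bravais lattice. -/
def HasArea (L : Set R2) (A : ℝ) : Prop :=
  ∃ u v : R2, LatticeBasis L u v ∧
    ‖u‖ * ‖v‖ * |Real.sin (InnerProductGeometry.angle u v)| = A

/-- The Lennard-Jones potential. -/
def VLJ (r : ℝ) : ℝ := r ^ (-12 : ℤ) - 2 * r ^ (-6 : ℤ)

/-- The Lennard-Jones energy of a lattice. -/
def ELJ (L : Set R2) : ℝ := ∑' x : {x : R2 // x ∈ L ∧ x ≠ 0}, VLJ ‖(x : R2)‖

/-- The Epstein zeta function of a lattice. -/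
def zetaL (L : Set R2) (s : ℝ) : ℝ := ∑' x : {x : R2 // x ∈ L ∧ x ≠ 0}, ‖(x : R2)‖ ^ (-s)

/-- The theta function of a lattice. -/
def thetaL (L : Set R2) (α : ℝ) : ℝ := ∑' x : L, Real.exp (-2 * π * α * ‖(x : R2)‖ ^ 2)

/-- The triangular lattice of area `A`. -/
def triLattice (A : ℝ) : Set R2 :=
  {x : R2 | ∃ m n : ℤ, x =
      (m : ℝ) • (Real.sqrt (2 * A / Real.sqrt 3) • vec2 1 0) +
      (n : ℝ) • (Real.sqrt (2 * A / Real.sqrt 3) • vec2 (1/2) (Real.sqrt 3 / 2))}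

/-- `L` is the image of `M` under a linear isometry of `ℝ²`. -/
def IsRotationOf (L M : Set R2) : Prop := ∃ f : R2 ≃ₗᵢ[ℝ] R2, L = f '' M


/-! ### Energy as a function of Gram data -/

namespace LJ

/-- The squared norm `‖m u + n v‖²` at `i = (m, n)`, for Gram data
`p = (‖u‖², ‖v‖², ⟪u, v⟫)`. -/
def qf (p : ℝ × ℝ × ℝ) (i : ℤ × ℤ) : ℝ :=
  (i.1 : ℝ) ^ 2 * p.1 + 2 * i.1 * i.2 * p.2.2 + (i.2 : ℝ) ^ 2 * p.2.1

/-- The Lennard-Jones potential in the variable `t = r²`. The value at `0` is `0`. -/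
def W (t : ℝ) : ℝ := (t ^ 6)⁻¹ - 2 * (t ^ 3)⁻¹

/-- The energy as a function of Gram data. The sum includes the origin, where the summand is
`W 0 = 0`. -/
def en (p : ℝ × ℝ × ℝ) : ℝ := ∑' i : ℤ × ℤ, W (qf p i)

/-- The reduced Gram data `(‖u‖², ‖v‖², ⟪u, v⟫)`: `u` is nonzero and no longer than `v`, and
`2|⟪u, v⟫| ≤ ‖u‖²`. -/
def Red : Set (ℝ × ℝ × ℝ) := {p | 0 < p.1 ∧ p.1 ≤ p.2.1 ∧ 2 * |p.2.2| ≤ p.1}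

/-- The form `m² + n²`, against which all lattice sums are compared. -/
def nsq (i : ℤ × ℤ) : ℝ := (i.1 : ℝ) ^ 2 + (i.2 : ℝ) ^ 2

lemma nsq_pos {i : ℤ × ℤ} (hi : i ≠ 0) : 0 < nsq i := by
  unfold nsq
  rcases eq_or_ne i.1 0 with h | h
  · have h2 : i.2 ≠ 0 := fun h2 => hi (Prod.ext h h2)
    positivity
  · positivity

lemma one_le_nsq {i : ℤ × ℤ} (hi : i ≠ 0) : 1 ≤ nsq i := by
  have h := nsq_pos hi
  unfold nsq at *
  exact_mod_cast (by exact_mod_cast h : 0 < i.1 ^ 2 + i.2 ^ 2)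

/-- Comparison with the sup-norm sum `∑ ‖x‖⁻⁴`, as `m² + n² ≥ max(|m|, |n|)²`. At the origin the
summand is `0`. -/
lemma summable_nsq (k : ℕ) (hk : 2 ≤ k) : Summable fun i : ℤ × ℤ => (nsq i ^ k)⁻¹ := by
  have h := (EisensteinSeries.summable_one_div_norm_rpow (k := 4) (by norm_num))
  rw [← (finTwoArrowEquiv ℤ).symm.summable_iff] at h
  refine h.of_nonneg_of_le (fun i => by unfold nsq; positivity) fun i => ?_
  rcases eq_or_ne i 0 with rfl | hi
  · have : k ≠ 0 := by omega
    simp only [nsq, Prod.fst_zero, Prod.snd_zero]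
    simp only [Int.cast_zero, ne_eq, OfNat.ofNat_ne_zero, not_false_eq_true, zero_pow, add_zero,
      this, inv_zero]
    simp only [Function.comp]
    positivity
  have h1 := one_le_nsq hi
  have hx : ((finTwoArrowEquiv ℤ).symm i) ≠ 0 := by
    intro h
    exact hi (Prod.ext (congrFun h 0) (congrFun h 1))
  have hn : 0 < ‖((finTwoArrowEquiv ℤ).symm i)‖ := norm_pos_iff.2 hx
  have hle : ‖((finTwoArrowEquiv ℤ).symm i)‖ ^ 2 ≤ nsq i := by
    have : ‖((finTwoArrowEquiv ℤ).symm i)‖ ≤ √(nsq i) := by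
      rw [pi_norm_le_iff_of_nonneg (by positivity)]
      intro j
      apply Real.le_sqrt_of_sq_le
      unfold nsq
      fin_cases j <;> simp [Int.norm_eq_abs] <;> positivity
    calc _ ≤ √(nsq i) ^ 2 := by gcongr
      _ = _ := Real.sq_sqrt (by positivity)
  simp only [Function.comp]
  rw [Real.rpow_neg hn.le]
  apply inv_anti₀ (by positivity)
  have e : ‖((finTwoArrowEquiv ℤ).symm i)‖ ^ (4 : ℝ) = (‖((finTwoArrowEquiv ℤ).symm i)‖ ^ 2) ^ 2 := by
    rw [← pow_mul]; exact_mod_cast Real.rpow_natCast _ 4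
  rw [e]
  calc _ ≤ nsq i ^ 2 := by gcongr
    _ ≤ _ := pow_le_pow_right₀ h1 hk

@[simp] lemma W_zero : W 0 = 0 := by simp [W]

@[simp] lemma qf_zero (p : ℝ × ℝ × ℝ) : qf p 0 = 0 := by simp [qf]

@[simp] lemma nsq_zero : nsq 0 = 0 := by simp [nsq]

/-- On reduced data the cross term costs at most half of the diagonal part. -/
lemma le_qf {p : ℝ × ℝ × ℝ} (hp : p ∈ Red) (i : ℤ × ℤ) :
    (i.1 : ℝ) ^ 2 * p.1 + (i.2 : ℝ) ^ 2 * p.2.1 ≤ 2 * qf p i := by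
  obtain ⟨h0, h1, h2⟩ := hp
  unfold qf
  generalize (i.1 : ℝ) = m
  generalize (i.2 : ℝ) = n
  have h3 := abs_le.1 (show |p.2.2| ≤ p.1 / 2 by linarith)
  nlinarith [mul_nonneg (sub_nonneg.2 h3.2) (sq_nonneg (m - n)), mul_nonneg (sub_nonneg.2 h3.1)
    (sq_nonneg (m + n)), mul_nonneg (sub_nonneg.2 h3.2) (sq_nonneg (m + n)),
    mul_nonneg (sub_nonneg.2 h3.1) (sq_nonneg (m - n)), mul_nonneg (sub_nonneg.2 h1) (sq_nonneg n)]

lemma nsq_le_qf {p : ℝ × ℝ × ℝ} (hp : p ∈ Red) (i : ℤ × ℤ) : p.1 / 2 * nsq i ≤ qf p i := by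
  have := le_qf hp i
  have h1 := mul_le_mul_of_nonneg_left hp.2.1 (sq_nonneg (i.2 : ℝ))
  unfold nsq
  linarith

lemma qf_pos {p : ℝ × ℝ × ℝ} (hp : p ∈ Red) {i : ℤ × ℤ} (hi : i ≠ 0) : 0 < qf p i := by
  have := nsq_le_qf hp i
  have := mul_pos (half_pos hp.1) (nsq_pos hi)
  linarith

lemma qf_nonneg {p : ℝ × ℝ × ℝ} (hp : p ∈ Red) (i : ℤ × ℤ) : 0 ≤ qf p i := by
  rcases eq_or_ne i 0 with rfl | hi
  · simp
  · exact (qf_pos hp hi).le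

lemma inv_qf_le {p : ℝ × ℝ × ℝ} (hp : p ∈ Red) {c : ℝ} (hc : 0 < c) (hcp : c ≤ p.1) (k : ℕ)
    (hk : k ≠ 0) (i : ℤ × ℤ) : (qf p i ^ k)⁻¹ ≤ ((c / 2) ^ k)⁻¹ * (nsq i ^ k)⁻¹ := by
  rcases eq_or_ne i 0 with rfl | hi
  · simp [hk]
  rw [← mul_inv, ← mul_pow]
  have h := nsq_pos hi
  apply inv_anti₀ (by positivity)
  have := nsq_le_qf hp i
  gcongr
  refine le_trans ?_ this
  gcongr

lemma summable_inv_qf {p : ℝ × ℝ × ℝ} (hp : p ∈ Red) (k : ℕ) (hk : 2 ≤ k) :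
    Summable fun i => (qf p i ^ k)⁻¹ :=
  ((summable_nsq k hk).mul_left _).of_nonneg_of_le
    (fun i => inv_nonneg.2 (pow_nonneg (qf_nonneg hp i) k))
    (fun i => inv_qf_le hp hp.1 le_rfl k (by omega) i)

lemma summable_W {p : ℝ × ℝ × ℝ} (hp : p ∈ Red) : Summable fun i => W (qf p i) :=
  (summable_inv_qf hp 6 (by norm_num)).sub ((summable_inv_qf hp 3 (by norm_num)).mul_left 2)

/-- The reduced Gram data with `c ≤ ‖u‖²` and `‖v‖² ≤ C`. -/
def Kset (c C : ℝ) : Set (ℝ × ℝ × ℝ) :=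
  {p | c ≤ p.1 ∧ p.1 ≤ p.2.1 ∧ 2 * |p.2.2| ≤ p.1 ∧ p.2.1 ≤ C}

lemma isCompact_Kset {c C : ℝ} (hc : 0 < c) : IsCompact (Kset c C) := by
  apply IsCompact.of_isClosed_subset
    (s := Set.Icc 0 C ×ˢ Set.Icc 0 C ×ˢ Set.Icc (-C) C)
    (isCompact_Icc.prod (isCompact_Icc.prod isCompact_Icc))
  · unfold Kset
    simp only [Set.ofPred_and]
    refine IsClosed.inter ?_ (IsClosed.inter ?_ (IsClosed.inter ?_ ?_)) <;>
      exact isClosed_le (by fun_prop) (by fun_prop)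
  · rintro ⟨a, b, d⟩ ⟨h1, h2, h3, h4⟩
    simp only at h1 h2 h3 h4
    have h5 := abs_le.1 (show |d| ≤ C by linarith [abs_nonneg d])
    exact ⟨⟨by linarith, by linarith⟩, ⟨by linarith, by linarith⟩, h5⟩

lemma continuousOn_en {c C : ℝ} (hc : 0 < c) : ContinuousOn en (Kset c C) := by
  have hR : ∀ p ∈ Kset c C, p ∈ Red := fun p hp => ⟨hc.trans_le hp.1, hp.2.1, hp.2.2.1⟩
  apply continuousOn_tsum (u := fun i => ((c / 2) ^ 6)⁻¹ * (nsq i ^ 6)⁻¹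
    + 2 * (((c / 2) ^ 3)⁻¹ * (nsq i ^ 3)⁻¹))
  · intro i
    rcases eq_or_ne i 0 with rfl | hi
    · simpa using continuousOn_const
    have hq : ContinuousOn (fun p => qf p i) (Kset c C) := by
      unfold qf; fun_prop
    unfold W
    refine ((hq.pow 6).inv₀ fun p hp => ?_).sub (((hq.pow 3).inv₀ fun p hp => ?_).const_mul 2 )
    all_goals exact pow_ne_zero _ (qf_pos (hR p hp) hi).ne'
  · exact ((summable_nsq 6 (by norm_num)).mul_left _).add
      (((summable_nsq 3 (by norm_num)).mul_left _).mul_left _)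
  · intro i p hp
    have h6 := inv_qf_le (hR p hp) hc hp.1 6 (by norm_num) i
    have h3 := inv_qf_le (hR p hp) hc hp.1 3 (by norm_num) i
    have h0 := qf_nonneg (hR p hp) i
    rw [W, Real.norm_eq_abs]
    refine (abs_sub _ _).trans ?_
    rw [abs_of_nonneg (by positivity), abs_of_nonneg (by positivity)]
    linarith

/-! ### Minimisation over reduced Gram data -/

/-- If the energy outside `Kset c C` is at least that of one competitor `p₀` in the closed
constraint set `S`, then the minimum over the reduced data in `S` is attained. -/
lemma exists_min {S : Set (ℝ × ℝ × ℝ)} (hS : IsClosed S) {p₀ : ℝ × ℝ × ℝ} (hp₀ : p₀ ∈ Red)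
    (hS₀ : p₀ ∈ S) {c C : ℝ} (hc : 0 < c)
    (h : ∀ p ∈ Red, p ∈ S → p.1 < c ∨ C < p.2.1 → en p₀ ≤ en p) :
    ∃ p ∈ Red, p ∈ S ∧ ∀ p' ∈ Red, p' ∈ S → en p ≤ en p' := by
  -- `p₀` may lie outside `Kset c C`, so the compact set is enlarged to contain it.
  have hc' : 0 < min c p₀.1 := lt_min hc hp₀.1
  have hmem : p₀ ∈ Kset (min c p₀.1) (max C p₀.2.1) ∩ S :=
    ⟨⟨min_le_right _ _, hp₀.2.1, hp₀.2.2, le_max_right _ _⟩, hS₀⟩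
  obtain ⟨p, hp, hmin⟩ := ((isCompact_Kset hc').inter_right hS).exists_isMinOn ⟨p₀, hmem⟩
    ((continuousOn_en hc').mono Set.inter_subset_left)
  refine ⟨p, ⟨hc'.trans_le hp.1.1, hp.1.2.1, hp.1.2.2.1⟩, hp.2, fun p' hp' hS' => ?_⟩
  by_cases hK : p'.1 < c ∨ C < p'.2.1
  · exact (hmin hmem).trans (h p' hp' hS' hK)
  · push Not at hK
    exact hmin ⟨⟨(min_le_left _ _).trans hK.1, hp'.2.1, hp'.2.2, hK.2.trans (le_max_left _ _)⟩, hS'⟩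

/-- The energy tends to `+∞` as the shortest vector shrinks. -/
lemma coercive (M : ℝ) : ∃ c : ℝ, 0 < c ∧ ∀ p ∈ Red, p.1 < c → M ≤ en p := by
  set S3 := ∑' i, (nsq i ^ 3)⁻¹ with hS3
  have hS3p : 0 ≤ S3 := tsum_nonneg fun i => by unfold nsq; positivity
  -- The energy is at least `s (s - 16 S3)` with `s = (p.1 ^ 3)⁻¹`, and `p.1 < c ≤ 1` gives
  -- `s ≥ 16 S3 + |M| + 1`.
  refine ⟨(16 * S3 + |M| + 1)⁻¹, by positivity, fun p hp hpc => ?_⟩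
  have ha := hp.1
  set s := (p.1 ^ 3)⁻¹ with hs
  have h6 : s ^ 2 ≤ ∑' i, (qf p i ^ 6)⁻¹ := by
    have := (summable_inv_qf hp 6 (by norm_num)).le_tsum (1, 0)
      (fun i _ => inv_nonneg.2 (pow_nonneg (qf_nonneg hp i) 6))
    refine le_trans (le_of_eq ?_) this
    simp [qf, hs, ← pow_mul]
  have h3 : ∑' i, (qf p i ^ 3)⁻¹ ≤ 8 * s * S3 := by
    have := (summable_inv_qf hp 3 (by norm_num)).tsum_le_tsum
      (inv_qf_le hp ha le_rfl 3 (by norm_num)) ((summable_nsq 3 (by norm_num)).mul_left _)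
    rw [tsum_mul_left] at this
    rw [← hS3] at this
    refine this.trans (le_of_eq ?_)
    rw [hs]; field_simp; ring
  have he : en p = ∑' i, (qf p i ^ 6)⁻¹ - 2 * ∑' i, (qf p i ^ 3)⁻¹ := by
    rw [← tsum_mul_left]
    exact (summable_inv_qf hp 6 (by norm_num)).tsum_sub
      ((summable_inv_qf hp 3 (by norm_num)).mul_left 2)
  have hM := abs_nonneg M
  have hc1 : (16 * S3 + |M| + 1)⁻¹ ≤ 1 := inv_le_one_of_one_le₀ (by linarith)
  have hsl : 16 * S3 + |M| + 1 ≤ s := by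
    rw [hs, le_inv_comm₀ (by positivity) (by positivity)]
    exact (pow_le_of_le_one ha.le (hpc.le.trans hc1) (by norm_num)).trans hpc.le
  rw [he]
  nlinarith [le_abs_self M, mul_nonneg (show 0 ≤ s by positivity) (sub_nonneg.2 hsl)]

lemma min_area {A : ℝ} (hA : 0 < A) : ∃ p ∈ Red, p.1 * p.2.1 - p.2.2 ^ 2 = A ^ 2 ∧
    ∀ p' ∈ Red, p'.1 * p'.2.1 - p'.2.2 ^ 2 = A ^ 2 → en p ≤ en p' := by
  obtain ⟨c, hc, h⟩ := coercive (en (A, A, 0))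
  refine exists_min (S := {p | p.1 * p.2.1 - p.2.2 ^ 2 = A ^ 2})
    (isClosed_eq (by fun_prop) (by fun_prop)) (p₀ := (A, A, 0)) ⟨hA, le_rfl, by simpa using hA.le⟩
    (by simp; ring) hc (C := 4 * A ^ 2 / (3 * c)) fun p hp hS hpC => ?_
  by_cases hpc : p.1 < c
  · exact h p hp hpc
  exfalso
  have h1 := hpC.resolve_left hpc
  rw [div_lt_iff₀ (by positivity)] at h1
  obtain ⟨h2, h3, h4⟩ := hp
  simp only [Set.mem_ofPred_eq] at hS
  have h5 : (2 * p.2.2) ^ 2 ≤ p.1 ^ 2 := by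
    rw [← sq_abs, abs_mul, abs_two]; gcongr
  nlinarith [mul_le_mul_of_nonneg_left h3 h2.le, mul_le_mul_of_nonneg_right (not_lt.1 hpc) (h2.le.trans h3)]

/-- The restriction of `(nsq ^ k)⁻¹` to the row `n = 0`; its sum over `ℤ × ℤ` is the
one-dimensional sum `∑ m⁻²ᵏ` over nonzero `m`. -/
def chain (k : ℕ) (i : ℤ × ℤ) : ℝ := if i.2 = 0 then (nsq i ^ k)⁻¹ else 0

lemma chain_nonneg (k : ℕ) (i : ℤ × ℤ) : 0 ≤ chain k i := by
  unfold chain nsq; split_ifs <;> positivity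

lemma summable_chain (k : ℕ) (hk : 2 ≤ k) : Summable (chain k) :=
  (summable_nsq k hk).of_nonneg_of_le (chain_nonneg k) fun i => by
    unfold chain nsq; split_ifs
    · rfl
    · positivity

lemma tsum_chain_pos (k : ℕ) (hk : 2 ≤ k) : 0 < ∑' i, chain k i :=
  (summable_chain k hk).tsum_pos (chain_nonneg k) (1, 0) (by simp [chain, nsq])

lemma W_qf_of_snd_eq_zero (p : ℝ × ℝ × ℝ) {i : ℤ × ℤ} (hi : i.2 = 0) :
    W (qf p i) = ((p.1 ^ 3)⁻¹) ^ 2 * chain 6 i - 2 * (p.1 ^ 3)⁻¹ * chain 3 i := by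
  simp only [W, qf, chain, hi, nsq, if_true]
  simp [mul_pow, ← pow_mul]
  ring

lemma chain_of_snd_ne_zero {i : ℤ × ℤ} (hi : i.2 ≠ 0) (k : ℕ) : chain k i = 0 := by
  simp [chain, hi]

/-- The first term is the least energy of a one-dimensional chain, the second bounds the
contribution of the rows `n ≠ 0`. -/
lemma en_lower {p : ℝ × ℝ × ℝ} (hp : p ∈ Red) :
    -((∑' i, chain 3 i) ^ 2 / ∑' i, chain 6 i) - 16 / (p.2.1 * p.1 ^ 2) * ∑' i, (nsq i ^ 2)⁻¹
      ≤ en p := by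
  set P := ∑' i, chain 6 i with hP
  set Q := ∑' i, chain 3 i with hQ
  set s := (p.1 ^ 3)⁻¹ with hs
  have hPp : 0 < P := tsum_chain_pos 6 (by norm_num)
  have h6 := summable_chain 6 (by norm_num)
  have h3 := summable_chain 3 (by norm_num)
  have h2 := summable_nsq 2 (by norm_num)
  have ha := hp.1
  have hb := ha.trans_le hp.2.1
  have key : s ^ 2 * P - 2 * s * Q - 16 / (p.2.1 * p.1 ^ 2) * ∑' i, (nsq i ^ 2)⁻¹ ≤ en p := by
    rw [hP, hQ, ← tsum_mul_left, ← tsum_mul_left, ← tsum_mul_left,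
      ← (h6.mul_left _).tsum_sub (h3.mul_left _),
      ← ((h6.mul_left _).sub (h3.mul_left _)).tsum_sub (h2.mul_left _)]
    refine Summable.tsum_le_tsum (fun i => ?_)
      (((h6.mul_left _).sub (h3.mul_left _)).sub (h2.mul_left _)) (summable_W hp)
    by_cases hi : i.2 = 0
    · rw [W_qf_of_snd_eq_zero p hi]
      have : 0 ≤ 16 / (p.2.1 * p.1 ^ 2) * (nsq i ^ 2)⁻¹ := by unfold nsq; positivity
      linarith
    · have hi0 : i ≠ 0 := fun h => hi (by simp [h])
      have hq := qf_pos hp hi0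
      have hn := nsq_pos hi0
      rw [chain_of_snd_ne_zero hi, chain_of_snd_ne_zero hi, W]
      have hq6 : 0 ≤ (qf p i ^ 6)⁻¹ := by positivity
      have hqb : p.2.1 / 2 ≤ qf p i := by
        have h1 : (1 : ℝ) ≤ (i.2 : ℝ) ^ 2 := by
          exact_mod_cast (by positivity : 0 < i.2 ^ 2)
        have := le_qf hp i
        nlinarith [mul_nonneg (sq_nonneg (i.1 : ℝ)) ha.le]
      have hqa := nsq_le_qf hp i
      have : (qf p i ^ 3)⁻¹ ≤ (p.2.1 / 2 * (p.1 / 2 * nsq i) ^ 2)⁻¹ := by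
        apply inv_anti₀ (by positivity)
        calc _ ≤ qf p i * qf p i ^ 2 := by gcongr
          _ = _ := by ring
      have e : 2 * (p.2.1 / 2 * (p.1 / 2 * nsq i) ^ 2)⁻¹
          = 16 / (p.2.1 * p.1 ^ 2) * (nsq i ^ 2)⁻¹ := by
        field_simp; ring
      linarith
  have : -(Q ^ 2 / P) ≤ s ^ 2 * P - 2 * s * Q := by
    rw [← sub_nonneg]
    have : s ^ 2 * P - 2 * s * Q - -(Q ^ 2 / P) = (s * P - Q) ^ 2 / P := by field_simp; ring
    rw [this]; positivity
  linarith

/-- The witness is a rectangular lattice whose short side is the spacing of the optimal chain. -/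
lemma exists_below_chain : ∃ p ∈ Red, en p < -((∑' i, chain 3 i) ^ 2 / ∑' i, chain 6 i) := by
  have h6 := summable_chain 6 (by norm_num)
  have h3 := summable_chain 3 (by norm_num)
  have hPp := tsum_chain_pos 6 (by norm_num)
  have hQp := tsum_chain_pos 3 (by norm_num)
  set P := ∑' i, chain 6 i with hP
  set Q := ∑' i, chain 3 i with hQ
  set a : ℝ := (P / Q) ^ (1 / 3 : ℝ) with ha
  have hap : 0 < a := by positivity
  have ha3 : (a ^ 3)⁻¹ = Q / P := by
    rw [ha, ← Real.rpow_natCast, ← Real.rpow_mul (by positivity)]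
    norm_num
  have hp : ((a, max a 1, 0) : ℝ × ℝ × ℝ) ∈ Red := ⟨hap, le_max_left _ _, by simpa using hap.le⟩
  have hW : ∀ t : ℝ, 1 ≤ t → W t < 0 := by
    intro t ht
    have h1 : (t ^ 3)⁻¹ ≤ 1 := inv_le_one_of_one_le₀ (one_le_pow₀ ht)
    have h2 : 0 < (t ^ 3)⁻¹ := by positivity
    have : W t = (t ^ 3)⁻¹ * ((t ^ 3)⁻¹ - 2) := by
      unfold W; rw [show t ^ 6 = t ^ 3 * t ^ 3 by ring, mul_inv]; ring
    rw [this]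
    exact mul_neg_of_pos_of_neg h2 (by linarith)
  have hoff : ∀ i : ℤ × ℤ, i.2 ≠ 0 → W (qf (a, max a 1, 0) i) < 0 := by
    intro i hi
    apply hW
    have h1 : (1 : ℝ) ≤ (i.2 : ℝ) ^ 2 := by
      exact_mod_cast (by positivity : 0 < i.2 ^ 2)
    have h2 : (1 : ℝ) ≤ max a 1 := le_max_right _ _
    simp only [qf]
    nlinarith [mul_nonneg (sq_nonneg (i.1 : ℝ)) hap.le]
  refine ⟨_, hp, ?_⟩
  have hlt : en (a, max a 1, 0) < ∑' i, ((a ^ 3)⁻¹ ^ 2 * chain 6 i - 2 * (a ^ 3)⁻¹ * chain 3 i) := by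
    refine Summable.tsum_lt_tsum (i := (0, 1)) (fun i => ?_) ?_ (summable_W hp)
      ((h6.mul_left _).sub (h3.mul_left _))
    · by_cases hi : i.2 = 0
      · rw [W_qf_of_snd_eq_zero _ hi]
      · simpa [chain_of_snd_ne_zero hi] using (hoff i hi).le
    · simpa [chain] using hoff (0, 1) (by simp)
  rw [(h6.mul_left _).tsum_sub (h3.mul_left _), tsum_mul_left, tsum_mul_left, ha3] at hlt
  refine hlt.trans_le (le_of_eq ?_)
  rw [← hP, ← hQ]
  field_simp
  ring

lemma min_global : ∃ p ∈ Red, ∀ p' ∈ Red, en p ≤ en p' := by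
  obtain ⟨p₀, hp₀, hlt⟩ := exists_below_chain
  obtain ⟨c, hc, h⟩ := coercive (en p₀)
  set δ := -((∑' i, chain 3 i) ^ 2 / ∑' i, chain 6 i) - en p₀ with hδ
  have hδp : 0 < δ := by linarith
  set S := ∑' i, (nsq i ^ 2)⁻¹ with hS
  have hS0 : 0 ≤ S := tsum_nonneg fun i => by unfold nsq; positivity
  obtain ⟨p, hp, -, hmin⟩ := exists_min (S := Set.univ) isClosed_univ hp₀ trivial hc
    (C := 16 * S / (c ^ 2 * δ)) fun p hp _ hpC => by
      by_cases hpc : p.1 < c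
      · exact h p hp hpc
      have h1 := hpC.resolve_left hpc
      have hl := en_lower hp
      have hb := hp.1.trans_le hp.2.1
      have ha := hp.1
      rw [div_lt_iff₀ (by positivity)] at h1
      have : 16 / (p.2.1 * p.1 ^ 2) * S ≤ δ := by
        rw [div_mul_eq_mul_div, div_le_iff₀ (by positivity)]
        have : c ^ 2 ≤ p.1 ^ 2 := pow_le_pow_left₀ hc.le (not_lt.1 hpc) 2
        nlinarith [mul_le_mul_of_nonneg_left this (mul_pos hb hδp).le]
      linarith
  exact ⟨p, hp, fun p' hp' => hmin p' hp' trivial⟩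


/-! ### Lattices and their Gram data -/

/-- The Gram data `(‖u‖², ‖v‖², ⟪u, v⟫)` of a pair of vectors. -/
def gram (u v : R2) : ℝ × ℝ × ℝ := (‖u‖ ^ 2, ‖v‖ ^ 2, inner ℝ u v)

/-- The Gram determinant, that is, the squared area. -/
def disc (p : ℝ × ℝ × ℝ) : ℝ := p.1 * p.2.1 - p.2.2 ^ 2

lemma norm_sq_comb (u v : R2) (x y : ℝ) :
    ‖x • u + y • v‖ ^ 2 = x ^ 2 * ‖u‖ ^ 2 + 2 * x * y * inner ℝ u v + y ^ 2 * ‖v‖ ^ 2 := by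
  rw [norm_add_sq_real, norm_smul, norm_smul, inner_smul_left, inner_smul_right, mul_pow, mul_pow]
  simp only [Real.norm_eq_abs, sq_abs, conj_trivial]
  ring

/-- Quantitative linear independence: the smaller eigenvalue of the Gram matrix is at least its
determinant divided by its trace. -/
lemma disc_mul_le (u v : R2) (x y : ℝ) :
    disc (gram u v) * (x ^ 2 + y ^ 2) ≤ (‖u‖ ^ 2 + ‖v‖ ^ 2) * ‖x • u + y • v‖ ^ 2 := by
  rw [norm_sq_comb]
  simp only [disc, gram]
  generalize ‖u‖ ^ 2 = a
  generalize ‖v‖ ^ 2 = b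
  generalize inner ℝ u v = c
  nlinarith [sq_nonneg (x * a + y * c), sq_nonneg (x * c + y * b)]

lemma disc_pos {u v : R2} (h : LinearIndependent ℝ ![u, v]) : 0 < disc (gram u v) := by
  have h0 : 0 ≤ disc (gram u v) := by
    have := abs_le_abs (abs_real_inner_le_norm u v) (by linarith [abs_nonneg (inner ℝ u v), norm_nonneg u, mul_nonneg (norm_nonneg u) (norm_nonneg v)])
    have := sq_le_sq.2 this
    simp only [disc, gram]
    rw [sq_abs] at this
    linarith [mul_pow ‖u‖ ‖v‖ 2]
  refine lt_of_le_of_ne h0 fun h1 => ?_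
  rw [LinearIndependent.pair_iff] at h
  have h2 : ‖(‖v‖ ^ 2) • u + (-inner ℝ u v) • v‖ ^ 2 = 0 := by
    rw [norm_sq_comb]
    simp only [disc, gram] at h1
    linear_combination -‖v‖ ^ 2 * h1
  obtain ⟨h3, -⟩ := h _ _ (norm_eq_zero.1 (pow_eq_zero_iff two_ne_zero |>.1 h2))
  have h4 : v = 0 := norm_eq_zero.1 (pow_eq_zero_iff two_ne_zero |>.1 h3)
  have := h 0 1 (by simp [h4])
  simp at this

lemma linearIndependent_of_disc_pos {u v : R2} (h : 0 < disc (gram u v)) :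
    LinearIndependent ℝ ![u, v] := by
  rw [LinearIndependent.pair_iff]
  intro x y hxy
  have h1 := disc_mul_le u v x y
  rw [hxy, norm_zero] at h1
  have h2 : x ^ 2 + y ^ 2 ≤ 0 := by
    by_contra! h3
    nlinarith [mul_pos h h3]
  constructor <;> nlinarith [sq_nonneg x, sq_nonneg y]

lemma area_eq (u v : R2) :
    ‖u‖ * ‖v‖ * |Real.sin (InnerProductGeometry.angle u v)| = √(disc (gram u v)) := by
  rw [abs_of_nonneg (InnerProductGeometry.sin_angle_nonneg u v), mul_comm,
    InnerProductGeometry.sin_angle_mul_norm_mul_norm]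
  simp only [disc, gram, real_inner_self_eq_norm_sq]
  ring_nf

lemma VLJ_eq (x : R2) : VLJ ‖x‖ = W (‖x‖ ^ 2) := by
  rw [VLJ, W, ← pow_mul, ← pow_mul]
  rfl

lemma ELJ_eq {L : Set R2} {u v : R2} (h : LatticeBasis L u v) : ELJ L = en (gram u v) := by
  obtain ⟨hli, rfl⟩ := h
  rw [LinearIndependent.pair_iff] at hli
  set f : ℤ × ℤ → R2 := fun i => (i.1 : ℝ) • u + (i.2 : ℝ) • v with hf
  have hinj : Function.Injective f := by
    intro i j hij
    have := hli (i.1 - j.1) (i.2 - j.2) (by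
      rw [sub_smul, sub_smul, sub_add_sub_comm]; exact sub_eq_zero.2 hij)
    simp only [sub_eq_zero, Int.cast_inj] at this
    exact Prod.ext this.1 this.2
  set T : Set R2 := {x | x ∈ {x : R2 | ∃ m n : ℤ, x = (m : ℝ) • u + (n : ℝ) • v} ∧ x ≠ 0}
  have e1 : ELJ {x : R2 | ∃ m n : ℤ, x = (m : ℝ) • u + (n : ℝ) • v} =
      ∑' x : R2, T.indicator (fun x => VLJ ‖x‖) x := tsum_subtype T fun x => VLJ ‖x‖
  rw [e1, ← hinj.tsum_eq]
  · refine tsum_congr fun i => ?_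
    have e2 : ‖f i‖ ^ 2 = qf (gram u v) i := norm_sq_comb u v i.1 i.2
    rw [← e2, ← VLJ_eq]
    by_cases hi : f i = 0
    · rw [Set.indicator_of_notMem (fun h => h.2 hi), hi, norm_zero]
      norm_num [VLJ, zero_zpow]
    · exact Set.indicator_of_mem (s := T) ⟨⟨i.1, i.2, rfl⟩, hi⟩ _
  · intro x hx
    obtain ⟨⟨m, n, rfl⟩, -⟩ := Set.mem_of_indicator_ne_zero hx
    exact ⟨(m, n), rfl⟩

lemma basis_swap {L : Set R2} {u v : R2} (h : LatticeBasis L u v) : LatticeBasis L v u := by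
  obtain ⟨h1, rfl⟩ := h
  refine ⟨?_, ?_⟩
  · rw [LinearIndependent.pair_iff] at *
    exact fun s t hst => (h1 t s (by rwa [add_comm])).symm
  · ext x
    constructor <;> rintro ⟨m, n, rfl⟩ <;> exact ⟨n, m, add_comm _ _⟩

lemma basis_shear {L : Set R2} {u v : R2} (h : LatticeBasis L u v) (k : ℤ) :
    LatticeBasis L u (v + (k : ℝ) • u) := by
  obtain ⟨h1, rfl⟩ := h
  refine ⟨?_, ?_⟩
  · rw [LinearIndependent.pair_iff] at *
    intro s t hst
    obtain ⟨h2, rfl⟩ := h1 (s + t * k) t (by rw [← hst]; module)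
    simpa using h2
  · ext x
    constructor
    · rintro ⟨m, n, rfl⟩
      exact ⟨m - n * k, n, by push_cast; module⟩
    · rintro ⟨m, n, rfl⟩
      exact ⟨m + n * k, n, by push_cast; module⟩

lemma disc_swap (u v : R2) : disc (gram v u) = disc (gram u v) := by
  simp only [disc, gram, real_inner_comm]
  ring

lemma norm_sq_shear (u v : R2) (k : ℝ) :
    ‖v + k • u‖ ^ 2 = ‖v‖ ^ 2 + 2 * k * inner ℝ u v + k ^ 2 * ‖u‖ ^ 2 := by
  have := norm_sq_comb u v k 1
  rw [one_smul, add_comm] at this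
  rw [this]; ring

lemma disc_shear (u v : R2) (k : ℝ) : disc (gram u (v + k • u)) = disc (gram u v) := by
  simp only [disc, gram]
  rw [norm_sq_shear, inner_add_right, inner_smul_right, real_inner_self_eq_norm_sq]
  ring

/-- A Bravais lattice is discrete. -/
lemma finite_ball {L : Set R2} {u v : R2} (h : LatticeBasis L u v) (r : ℝ) :
    {x ∈ L | ‖x‖ ^ 2 ≤ r}.Finite := by
  obtain ⟨h1, rfl⟩ := h
  have hd := disc_pos h1
  set g := disc (gram u v)
  obtain ⟨B, hB⟩ := exists_nat_ge ((‖u‖ ^ 2 + ‖v‖ ^ 2) * r / g)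
  refine ((Set.finite_Icc (-(B : ℤ)) B).prod (Set.finite_Icc (-(B : ℤ)) B) |>.image
    (fun i : ℤ × ℤ => (i.1 : ℝ) • u + (i.2 : ℝ) • v)).subset ?_
  rintro x ⟨⟨m, n, rfl⟩, hx⟩
  have h2 := disc_mul_le u v m n
  have h3 : (m : ℝ) ^ 2 + (n : ℝ) ^ 2 ≤ B := by
    refine le_trans ?_ hB
    rw [le_div_iff₀ hd]
    nlinarith [mul_le_mul_of_nonneg_left hx (show 0 ≤ ‖u‖ ^ 2 + ‖v‖ ^ 2 by positivity)]
  have h4 : m ^ 2 + n ^ 2 ≤ (B : ℤ) := by exact_mod_cast h3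
  have hle : ∀ k : ℤ, k ≤ k ^ 2 ∧ -k ≤ k ^ 2 := fun k => by
    constructor
    · exact Int.le_self_sq k
    · simpa using Int.le_self_sq (-k)
  have := hle m
  have := hle n
  have := sq_nonneg m
  have := sq_nonneg n
  exact ⟨(m, n), ⟨⟨by linarith, by linarith⟩, ⟨by linarith, by linarith⟩⟩, rfl⟩

lemma left_mem {L : Set R2} {u v : R2} (h : LatticeBasis L u v) : u ∈ L := by
  rw [h.2]; exact ⟨1, 0, by simp⟩

/-- Lagrange reduction, by minimising `‖u‖² + ‖v‖²` over the bases of `L` with the given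
determinant. -/
lemma exists_reduced {L : Set R2} {u₀ v₀ : R2} (h₀ : LatticeBasis L u₀ v₀) :
    ∃ u v, LatticeBasis L u v ∧ disc (gram u v) = disc (gram u₀ v₀) ∧ gram u v ∈ Red := by
  set F : R2 × R2 → ℝ := fun w => ‖w.1‖ ^ 2 + ‖w.2‖ ^ 2 with hF
  set S : Set (R2 × R2) := {w | (LatticeBasis L w.1 w.2 ∧
    disc (gram w.1 w.2) = disc (gram u₀ v₀)) ∧ F w ≤ F (u₀, v₀)} with hS
  have hfin : S.Finite := by
    have hb := finite_ball h₀ (F (u₀, v₀))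
    refine (hb.prod hb).subset ?_
    rintro ⟨u, v⟩ ⟨⟨h1, -⟩, h2⟩
    simp only [hF] at h2 ⊢
    exact ⟨⟨left_mem h1, by nlinarith [sq_nonneg ‖v‖]⟩,
      ⟨left_mem (basis_swap h1), by nlinarith [sq_nonneg ‖u‖]⟩⟩
  obtain ⟨⟨u, v⟩, ⟨⟨hb, hd⟩, hle⟩, hmin⟩ :=
    Set.exists_min_image S F hfin ⟨(u₀, v₀), ⟨h₀, rfl⟩, le_rfl⟩
  simp only at hb hd
  have hmin' : ∀ u' v', LatticeBasis L u' v' → disc (gram u' v') = disc (gram u₀ v₀) →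
      ‖u‖ ^ 2 + ‖v‖ ^ 2 ≤ ‖u'‖ ^ 2 + ‖v'‖ ^ 2 := by
    intro u' v' h1 h2
    by_contra! h3
    exact absurd (hmin (u', v') ⟨⟨h1, h2⟩, h3.le.trans hle⟩) (not_le.2 h3)
  have key : ∀ x y : R2, LatticeBasis L x y → disc (gram x y) = disc (gram u₀ v₀) →
      ‖x‖ ^ 2 + ‖y‖ ^ 2 = ‖u‖ ^ 2 + ‖v‖ ^ 2 → 2 * |inner ℝ x y| ≤ ‖x‖ ^ 2 := by
    intro x y h1 h2 h3
    -- A shear of a minimal basis cannot shorten its second vector.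
    have h4 : ∀ k : ℤ, 0 ≤ 2 * (k : ℝ) * inner ℝ x y + (k : ℝ) ^ 2 * ‖x‖ ^ 2 := fun k => by
      have := hmin' _ _ (basis_shear h1 k) ((disc_shear x y k).trans h2)
      rw [norm_sq_shear] at this
      linarith
    have h5 := h4 1
    have h6 := h4 (-1)
    push_cast at h5 h6
    rcases abs_cases (inner ℝ x y) with h | h <;> linarith
  have fin : ∀ x y : R2, LatticeBasis L x y → disc (gram x y) = disc (gram u₀ v₀) →
      ‖x‖ ^ 2 + ‖y‖ ^ 2 = ‖u‖ ^ 2 + ‖v‖ ^ 2 → ‖x‖ ^ 2 ≤ ‖y‖ ^ 2 → gram x y ∈ Red := by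
    intro x y h1 h2 h3 h4
    refine ⟨?_, h4, key x y h1 h2 h3⟩
    have : x ≠ 0 := h1.1.ne_zero 0
    simp only [gram]
    positivity
  rcases le_total (‖u‖ ^ 2) (‖v‖ ^ 2) with h | h
  · exact ⟨u, v, hb, hd, fin u v hb hd rfl h⟩
  · have hd' := (disc_swap u v).trans hd
    exact ⟨v, u, (basis_swap hb), hd', fin v u (basis_swap hb) hd' (add_comm _ _) h⟩

lemma disc_pos_of_mem {p : ℝ × ℝ × ℝ} (hp : p ∈ Red) : 0 < disc p := by
  obtain ⟨h1, h2, h3⟩ := hp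
  have h5 : (2 * p.2.2) ^ 2 ≤ p.1 ^ 2 := by
    rw [← sq_abs, abs_mul, abs_two]; gcongr
  unfold disc
  nlinarith [mul_le_mul_of_nonneg_left h2 h1.le, mul_pos h1 h1]

lemma exists_gram_eq {p : ℝ × ℝ × ℝ} (hp : p ∈ Red) : ∃ u v : R2, gram u v = p := by
  obtain ⟨a, b, c⟩ := p
  have hd := disc_pos_of_mem hp
  have ha : 0 < a := hp.1
  simp only [disc] at hd
  have h1 := Real.sq_sqrt ha.le
  have h2 := Real.sq_sqrt hd.le
  have h3 : 0 < √a := Real.sqrt_pos.2 ha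
  refine ⟨!₂[√a, 0], !₂[c / √a, √(a * b - c ^ 2) / √a], ?_⟩
  simp only [gram, EuclideanSpace.real_norm_sq_eq, Fin.sum_univ_two, PiLp.inner_apply]
  simp only [Prod.mk.injEq]
  refine ⟨by simp [h1], ?_, ?_⟩
  · simp [div_pow, h1, h2]
    field_simp
    ring
  · simp
    field_simp

lemma exists_lattice {p : ℝ × ℝ × ℝ} (hp : p ∈ Red) :
    ∃ L u v, LatticeBasis L u v ∧ gram u v = p := by
  obtain ⟨u, v, rfl⟩ := exists_gram_eq hp
  exact ⟨_, u, v, ⟨linearIndependent_of_disc_pos (disc_pos_of_mem hp), rfl⟩, rfl⟩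

end LJ

/-- The minimum of the Lennard-Jones energy among Bravais lattices is achieved, and for
every `A > 0` the minimum among Bravais lattices of area `A` is achieved. -/
theorem minimum_of_ELJ_is_achieved :
    (∃ L₀ : Set R2, IsBravais L₀ ∧ ∀ L : Set R2, IsBravais L → ELJ L₀ ≤ ELJ L) ∧
    (∀ A : ℝ, 0 < A → ∃ L₀ : Set R2, IsBravais L₀ ∧ HasArea L₀ A ∧
      ∀ L : Set R2, IsBravais L → HasArea L A → ELJ L₀ ≤ ELJ L) := by
  constructor
  · obtain ⟨p, hp, hmin⟩ := LJ.min_global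
    obtain ⟨L₀, u₀, v₀, h₀, rfl⟩ := LJ.exists_lattice hp
    refine ⟨L₀, ⟨u₀, v₀, h₀⟩, ?_⟩
    rintro L ⟨u, v, h⟩
    obtain ⟨u', v', h', -, hred⟩ := LJ.exists_reduced h
    rw [LJ.ELJ_eq h₀, LJ.ELJ_eq h']
    exact hmin _ hred
  · intro A hA
    obtain ⟨p, hp, hpA, hmin⟩ := LJ.min_area hA
    obtain ⟨L₀, u₀, v₀, h₀, rfl⟩ := LJ.exists_lattice hp
    refine ⟨L₀, ⟨u₀, v₀, h₀⟩, ⟨u₀, v₀, h₀, ?_⟩, ?_⟩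
    · rw [LJ.area_eq, LJ.disc, hpA, Real.sqrt_sq hA.le]
    rintro L - ⟨u, v, h, hLA⟩
    obtain ⟨u', v', h', hd, hred⟩ := LJ.exists_reduced h
    rw [LJ.ELJ_eq h₀, LJ.ELJ_eq h']
    refine hmin _ hred ?_
    rw [LJ.area_eq] at hLA
    rw [← hLA, Real.sq_sqrt (LJ.disc_pos h.1).le, ← hd, LJ.disc]
end
end

section
/- Let A > 0 satisfy A³ ≤ π³/120. Then the triangular lattice Λ_A is the unique, up to rotation, minimizer of the Lennard-Jones energy E_LJ among all Bravais lattices of ℝ² of area A: E_LJ(Λ_A) ≤ E_LJ(L) for every Bravais lattice L with |L| = A, with equality only if L is the image of Λ_A under a linear isometry of ℝ². -/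
/-!
Let `L` have area `A`. A basis of `L` minimising `‖u‖² + ‖v‖²` gives an obtuse superbase
(`exists_obtuse`), so with `l = 2A / √3` the squared lengths in `L` are `l X(m, n)`, where
`X = (a m² + b n² + g (m - n)²) / 2`, `a, b, g ≥ 0` and `ab + bg + ga = 3`. Put `a + b + g = 3 s`;
then `s ≥ 1`, and `s = 1` exactly when `a = b = g = 1`, which is the triangular lattice, with form
`h = m² - m n + n²`. The energy is `l⁻⁶ ∑ (X⁻⁶ - K X⁻³)` with `K = 2 l³`, and the hypothesis on `A`
gives `K ≤ 4 / 5`. It remains to prove that the energy is strictly larger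
than the triangular one when `s > 1` (`tsum_lj_lt`).

* Away from the six minimal vectors of `h`, since `X` and `h` have the same determinant,
  `u = X / h` satisfies `u² - 2 s u + 1 ≤ 0` (`gram_quad`). This yields bounds of `u⁻³` from above
  and of `u⁻⁶` from below that are linear in `u` (`inv_pow_bounds`). By the threefold symmetry of
  `h`, the sums `∑ h⁻ᵏ u` and `s ∑ h⁻ᵏ` agree (`hasSum_moment`). Hence the energy of these vectors
  drops by at most `6 (s - 1) Y + K (4 s³ - 3 s - 1) Z`, up to terms involving only the six minimal
  vectors; here `Z` and `Y` are the sums of `h⁻³` and `h⁻⁶` over the other nonzero vectors, and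
  `Z ≤ 0.44`, `Y ≤ Z / 27` (`Z3_le`, `Z6_le`).
* The six minimal vectors have `X`-values `P, Q, R = (a + g) / 2, (b + g) / 2, (a + b) / 2`, twice
  each. By Cauchy-Schwarz `∑ P⁻⁶ ≥ M² / 3` with `M = ∑ P⁻³`. The sums `P + Q + R` and
  `PQ + QR + RP` depend on `s` only, and `M` is a monotone function of `1 / (PQR)` with
  `PQR = (9 s - a b g) / 8`; the bounds `a b g ≥ 4 s - 3 s³` (Schur) for `s² ≤ 4 / 3`, and
  `a b g ≥ 0` otherwise, leave inequalities in the single variable `s` (`main_ineq`).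
-/

noncomputable section
open Real

/-! ### The six shortest vectors: one-variable estimates -/

/-- `∑ P⁻³`, as a function of `z = 1 / (PQR)` with the elementary symmetric functions
`e₁ = P + Q + R`, `e₂ = PQ + QR + RP` fixed (see `sum_inv_cubes`), is nondecreasing on
`z ≥ 2 e₁ / e₂²`. -/
lemma sum_cubes_mono {e₁ e₂ z z₀ : ℝ} (h2 : 0 ≤ e₂) (hz0 : 0 ≤ z₀)
    (hzz : z₀ ≤ z) (hc : 2 * e₁ ≤ e₂ ^ 2 * z₀) :
    e₂ ^ 3 * z₀ ^ 3 - 3 * e₁ * e₂ * z₀ ^ 2 + 3 * z₀ ≤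
      e₂ ^ 3 * z ^ 3 - 3 * e₁ * e₂ * z ^ 2 + 3 * z := by
  have hz : 0 ≤ z := hz0.trans hzz
  have hc' : 2 * e₁ ≤ e₂ ^ 2 * z := hc.trans (by gcongr)
  have k1 : 0 ≤ e₂ * (z + z₀ / 2) * (e₂ ^ 2 * z - 2 * e₁) :=
    mul_nonneg (by positivity) (by linarith)
  have k2 : 0 ≤ e₂ * (z₀ + z / 2) * (e₂ ^ 2 * z₀ - 2 * e₁) :=
    mul_nonneg (by positivity) (by linarith)
  have k3 : 0 ≤ (z - z₀) * (e₂ ^ 3 * (z ^ 2 + z * z₀ + z₀ ^ 2) - 3 * e₁ * e₂ * (z + z₀) + 3) :=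
    mul_nonneg (by linarith) (by nlinarith)
  nlinarith

lemma sum_inv_cubes {P Q R : ℝ} (hP : 0 < P) (hQ : 0 < Q) (hR : 0 < R) :
    (P⁻¹) ^ 3 + (Q⁻¹) ^ 3 + (R⁻¹) ^ 3 =
      (P * Q + Q * R + R * P) ^ 3 * ((P * Q * R)⁻¹) ^ 3
        - 3 * (P + Q + R) * (P * Q + Q * R + R * P) * ((P * Q * R)⁻¹) ^ 2
        + 3 * (P * Q * R)⁻¹ := by
  field_simp
  ring

/-- Schur's inequality of degree one in terms of elementary symmetric functions. -/
lemma schur {a b g : ℝ} (ha : 0 ≤ a) (hb : 0 ≤ b) (hg : 0 ≤ g) :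
    4 * (a + b + g) * (a * b + b * g + g * a) ≤ (a + b + g) ^ 3 + 9 * (a * b * g) := by
  rcases le_total a b with h1 | h1 <;> rcases le_total b g with h2 | h2 <;>
    rcases le_total a g with h3 | h3 <;>
  nlinarith [mul_nonneg (sub_nonneg.2 h1) (sub_nonneg.2 h2), mul_nonneg (sub_nonneg.2 h1) (sub_nonneg.2 h3),
    mul_nonneg (sub_nonneg.2 h2) (sub_nonneg.2 h3),
    mul_nonneg ha (mul_nonneg (sub_nonneg.2 h1) (sub_nonneg.2 h3)),
    mul_nonneg hb (mul_nonneg (sub_nonneg.2 h1) (sub_nonneg.2 h2)),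
    mul_nonneg hg (mul_nonneg (sub_nonneg.2 h2) (sub_nonneg.2 h3)),
    mul_nonneg ha (sq_nonneg (a-b)), mul_nonneg ha (sq_nonneg (a-g)), mul_nonneg hb (sq_nonneg (b-g)),
    mul_nonneg hb (sq_nonneg (a-b)), mul_nonneg hg (sq_nonneg (a-g)), mul_nonneg hg (sq_nonneg (b-g)),
    mul_nonneg (sub_nonneg.2 h1) (sq_nonneg (a-b)), mul_nonneg (sub_nonneg.2 h3) (sq_nonneg (a-g)), mul_nonneg (sub_nonneg.2 h2) (sq_nonneg (b-g))]

/-- The value of `∑ P⁻³` at the largest product `PQR = s (3 s² + 5) / 8` that Schur's inequality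
allows exceeds its value `3` at the triangular lattice at first order in `s - 1`. This is the
sharp regime, used for `s` close to `1`. -/
lemma M_near {s e : ℝ} (hs : 1 ≤ s) (hs2 : s ^ 2 ≤ 4 / 3) (he : e = 9 / 4 * s ^ 2 + 3 / 4) :
    3 + 3 / 2 * (s - 1) + 3 / 2 * (s - 1) ^ 2 ≤ e ^ 3 * ((s * (3 * s ^ 2 + 5) / 8)⁻¹) ^ 3
      - 3 * (3 * s) * e * ((s * (3 * s ^ 2 + 5) / 8)⁻¹) ^ 2
      + 3 * (s * (3 * s ^ 2 + 5) / 8)⁻¹ := by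
  have hs0 : 0 < s := by linarith
  have hR : e ^ 3 * ((s * (3 * s ^ 2 + 5) / 8)⁻¹) ^ 3
      - 3 * (3 * s) * e * ((s * (3 * s ^ 2 + 5) / 8)⁻¹) ^ 2
      + 3 * (s * (3 * s ^ 2 + 5) / 8)⁻¹ =
      (216 * (3 * s ^ 2 + 1) ^ 3 - 432 * (3 * s ^ 2 + 1) * s ^ 2 * (3 * s ^ 2 + 5) +
        24 * s ^ 2 * (3 * s ^ 2 + 5) ^ 2) / (s ^ 3 * (3 * s ^ 2 + 5) ^ 3) := by
    rw [he]
    field_simp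
    ring
  rw [hR, le_div_iff₀ (by positivity)]
  obtain ⟨t, rfl⟩ : ∃ t, s = 1 + t := ⟨s - 1, by ring⟩
  have ht : 0 ≤ t := by linarith
  have ht2 : t ≤ 31 / 200 := by nlinarith
  have hk : ∀ k : ℕ, t ^ k ≤ (31 / 200) ^ k := fun k => pow_le_pow_left₀ ht ht2 k
  have hr : 0 ≤ 1344 - 3480 * t - 20280 * t ^ 2 - 34356 * t ^ 3 - 31050 * t ^ 4
      - 35667 / 2 * t ^ 5 - 7209 * t ^ 6 - 2106 * t ^ 7 - 405 * t ^ 8 - 81 / 2 * t ^ 9 := by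
    linarith [hk 2, hk 3, hk 4, hk 5, hk 6, hk 7, hk 8, hk 9]
  linarith [mul_nonneg (sq_nonneg t) hr]

/-- The value of `∑ P⁻³` at `PQR = 9 s / 8`, the largest product allowed by `a b g ≥ 0`
alone. -/
lemma M_far {s e : ℝ} (hs : 1 ≤ s) (he : e = 9 / 4 * s ^ 2 + 3 / 4) :
    e ^ 3 * ((9 * s / 8)⁻¹) ^ 3
      - 3 * (3 * s) * e * ((9 * s / 8)⁻¹) ^ 2
      + 3 * (9 * s / 8)⁻¹ = 8 * s ^ 3 - 8 * s + 8 / 27 * (s ^ 3)⁻¹ := by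
  have hs0 : 0 < s := by linarith
  rw [he]
  field_simp
  ring

/-- Energy gain for `s² ≤ 4 / 3`. Here `M` stands for `∑ P⁻³` over the three pairs of short vectors,
and `Z`, `Y` for the sums of `h⁻³`, `h⁻⁶` over the remaining vectors of the triangular lattice. -/
lemma final_near {s M K Z Y : ℝ} (hs : 1 < s) (hs2 : s ^ 2 ≤ 4 / 3) (hM : 3 + 3 / 2 * (s - 1) + 3 / 2 * (s - 1) ^ 2 ≤ M)
    (hK : K ≤ 4 / 5) (hZ0 : 0 ≤ Z) (hZ : Z ≤ 11 / 25) (hY : Y ≤ Z / 27) :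
    0 < 2 / 3 * M ^ 2 - 2 * K * M - 6 * (1 - K) - 6 * (s - 1) * Y
      - K * (4 * s ^ 3 - 3 * s - 1) * Z := by
  obtain ⟨t, rfl⟩ : ∃ t, s = 1 + t := ⟨s - 1, by ring⟩
  have ht : 0 < t := by linarith
  have ht2 : t ≤ 31 / 200 := by nlinarith
  have hM3 : 3 + 3 / 2 * t + 3 / 2 * t ^ 2 ≤ M := by
    rw [add_sub_cancel_left] at hM; exact hM
  have hM0 : 3 ≤ M := by linarith [sq_nonneg t]
  have hT : 0 ≤ 9 * t + 12 * t ^ 2 + 4 * t ^ 3 := by positivity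
  have k1 : K * ((9 * t + 12 * t ^ 2 + 4 * t ^ 3) * Z) ≤ 4 / 5 * ((9 * t + 12 * t ^ 2 + 4 * t ^ 3) * (11 / 25)) := by
    gcongr
  have k2 : t * Y ≤ t * (11 / 25 / 27) := by gcongr; linarith
  have k3 : K * (M - 3) ≤ 4 / 5 * (M - 3) := by
    apply mul_le_mul_of_nonneg_right hK; linarith
  have k4 : (3 / 2 * t + 3 / 2 * t ^ 2) * (2 / 3 * (6 + 3 / 2 * t) - 8 / 5) ≤ (M - 3) * (2 / 3 * (M + 3) - 8 / 5) := by
    apply mul_le_mul <;> linarith [sq_nonneg t]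
  nlinarith [mul_nonneg ht.le (sub_nonneg.2 ht2), mul_nonneg (mul_nonneg ht.le ht.le) (sub_nonneg.2 ht2)]

/-- Energy gain for `s² ≥ 4 / 3`, with `M`, `Z`, `Y` as in `final_near`. -/
lemma final_far {s M K Z Y : ℝ} (hs0 : 1 < s) (hs2 : 4 / 3 ≤ s ^ 2)
    (hM : 8 * s ^ 3 - 8 * s + 8 / 27 * (s ^ 3)⁻¹ ≤ M)
    (hK : K ≤ 4 / 5) (hZ0 : 0 ≤ Z) (hZ : Z ≤ 11 / 25) (hY : Y ≤ Z / 27) :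
    0 < 2 / 3 * M ^ 2 - 2 * K * M - 6 * (1 - K) - 6 * (s - 1) * Y
      - K * (4 * s ^ 3 - 3 * s - 1) * Z := by
  have hi : 1 - 3 * (s - 1) + 6 * (s - 1) ^ 2 - 10 * (s - 1) ^ 3 ≤ (s ^ 3)⁻¹ := by
    rw [← one_div, le_div_iff₀ (by positivity)]
    obtain ⟨t, rfl⟩ : ∃ t, s = 1 + t := ⟨s - 1, by ring⟩
    have ht : 0 ≤ t := by linarith
    have : 0 ≤ 15 * t ^ 4 + 24 * t ^ 5 + 10 * t ^ 6 := by positivity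
    linarith
  obtain ⟨t, rfl⟩ : ∃ t, s = 1 + t := ⟨s - 1, by ring⟩
  have ht : 77 / 500 ≤ t := by nlinarith
  have ht0 : 0 < t := by linarith
  have hM1 : 8 * (2 * t + 3 * t ^ 2 + t ^ 3) + 8 / 27 * (1 - 3 * t + 6 * t ^ 2 - 10 * t ^ 3) ≤ M := by
    rw [add_sub_cancel_left] at hi
    linarith
  have hM3 : 13 / 4 ≤ M := by nlinarith
  have hT : 0 ≤ 9 * t + 12 * t ^ 2 + 4 * t ^ 3 := by positivity
  have k1 : K * ((9 * t + 12 * t ^ 2 + 4 * t ^ 3) * Z) ≤ 4 / 5 * ((9 * t + 12 * t ^ 2 + 4 * t ^ 3) * (11 / 25)) := by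
    gcongr
  have k2 : t * Y ≤ t * (11 / 25 / 27) := by gcongr; linarith
  have k3 : K * (M - 3) ≤ 4 / 5 * (M - 3) := by
    apply mul_le_mul_of_nonneg_right hK; linarith
  have k4 : (M - 3) * (64 / 25) ≤ (M - 3) * (2 / 3 * (M + 3) - 8 / 5) := by
    apply mul_le_mul_of_nonneg_left <;> linarith
  nlinarith

/-- The gain in energy of the six short vectors beats the possible loss
`6 (s - 1) Y + K (4 s³ - 3 s - 1) Z` of all the others. The squared lengths `(a + g) / 2`,
`(b + g) / 2`, `(a + b) / 2` are those of the vectors `(±1, 0)`, `(0, ±1)`, `±(1, 1)`. -/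
lemma main_ineq {a b g s K Z Y : ℝ} (ha : 0 ≤ a) (hb : 0 ≤ b) (hg : 0 ≤ g)
    (h1 : a + b + g = 3 * s) (h2 : a * b + b * g + g * a = 3) (hs : 1 < s)
    (hK : K ≤ 4 / 5) (hZ0 : 0 ≤ Z) (hZ : Z ≤ 11 / 25) (hY : Y ≤ Z / 27) :
    0 < 2 * ((((a + g) / 2)⁻¹ ^ 6 - K * ((a + g) / 2)⁻¹ ^ 3) +
        (((b + g) / 2)⁻¹ ^ 6 - K * ((b + g) / 2)⁻¹ ^ 3) +
        (((a + b) / 2)⁻¹ ^ 6 - K * ((a + b) / 2)⁻¹ ^ 3)) - 6 * (1 - K)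
      - 6 * (s - 1) * Y - K * (4 * s ^ 3 - 3 * s - 1) * Z := by
  have hP : 0 < (a + g) / 2 := by
    by_contra! h
    have : a = 0 := by linarith
    have : g = 0 := by linarith
    subst a g; norm_num at h2
  have hQ : 0 < (b + g) / 2 := by
    by_contra! h
    have : b = 0 := by linarith
    have : g = 0 := by linarith
    subst b g; norm_num at h2
  have hR : 0 < (a + b) / 2 := by
    by_contra! h
    have : a = 0 := by linarith
    have : b = 0 := by linarith
    subst a b; norm_num at h2
  set P := (a + g) / 2 with hPd
  set Q := (b + g) / 2 with hQd
  set R := (a + b) / 2 with hRd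
  have e1 : P + Q + R = 3 * s := by rw [hPd, hQd, hRd]; linarith
  have e2 : P * Q + Q * R + R * P = 9 / 4 * s ^ 2 + 3 / 4 := by
    rw [hPd, hQd, hRd]
    have : s = (a + b + g) / 3 := by linarith
    rw [this]
    linear_combination (1 / 4) * h2
  have e3 : P * Q * R = (9 * s - a * b * g) / 8 := by
    rw [hPd, hQd, hRd]
    linear_combination (1 / 8) * (a * b + b * g + g * a) * h1 + (3 / 8) * s * h2
  have hs2 : 1 ≤ s ^ 2 := by nlinarith
  obtain ⟨M, hM⟩ : ∃ M, M = P⁻¹ ^ 3 + Q⁻¹ ^ 3 + R⁻¹ ^ 3 := ⟨_, rfl⟩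
  have hMz := hM
  rw [sum_inv_cubes hP hQ hR, e1] at hMz
  have hPQR : 0 < P * Q * R := by positivity
  -- `∑ P⁻⁶ ≥ (∑ P⁻³)² / 3`
  have hcs : M ^ 2 / 3 ≤ P⁻¹ ^ 6 + Q⁻¹ ^ 6 + R⁻¹ ^ 6 := by
    rw [hM]
    nlinarith [sq_nonneg (P⁻¹ ^ 3 - Q⁻¹ ^ 3), sq_nonneg (Q⁻¹ ^ 3 - R⁻¹ ^ 3),
      sq_nonneg (P⁻¹ ^ 3 - R⁻¹ ^ 3)]
  suffices 0 < 2 / 3 * M ^ 2 - 2 * K * M - 6 * (1 - K) - 6 * (s - 1) * Y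
      - K * (4 * s ^ 3 - 3 * s - 1) * Z by
    rw [hM] at this hcs
    linarith
  have hmono : ∀ E : ℝ, 0 < E → P * Q * R ≤ E → E ≤ 9 * s / 8 →
      (P * Q + Q * R + R * P) ^ 3 * (E⁻¹) ^ 3
        - 3 * (3 * s) * (P * Q + Q * R + R * P) * (E⁻¹) ^ 2 + 3 * E⁻¹ ≤ M := by
    intro E hE hle hE2
    rw [hMz]
    refine sum_cubes_mono (by positivity) (by positivity) (by gcongr) ?_
    rw [e2, ← div_eq_mul_inv, le_div_iff₀ hE]
    have : s * E ≤ s * (9 * s / 8) := by gcongr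
    nlinarith [sq_nonneg (3 * s ^ 2 - 1)]
  rcases le_total (s ^ 2) (4 / 3) with h | h
  · have hE : P * Q * R ≤ s * (3 * s ^ 2 + 5) / 8 := by
      have := schur ha hb hg
      rw [h1, h2] at this
      rw [e3]
      linarith
    -- the constraint `E ≤ 9 s / 8` is exactly `s² ≤ 4 / 3`
    refine final_near hs h ((M_near hs.le h e2).trans (hmono _ (by positivity) hE ?_))
      hK hZ0 hZ hY
    nlinarith
  · have hE : P * Q * R ≤ 9 * s / 8 := by
      rw [e3]
      have : 0 ≤ a * b * g := by positivity
      linarith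
    refine final_far hs h ((M_far hs.le e2).symm.le.trans (hmono _ (by positivity) hE le_rfl))
      hK hZ0 hZ hY

/-! ### Sums over the triangular lattice -/

/-- The quadratic form `m² - m n + n²` of the triangular lattice of minimal length one. -/
def hexForm (w : ℤ × ℤ) : ℝ := (w.1 : ℝ) ^ 2 - w.1 * w.2 + (w.2 : ℝ) ^ 2

/-- The six minimal vectors of `hexForm`. -/
def hexMin : Finset (ℤ × ℤ) := {(1, 0), (-1, 0), (0, 1), (0, -1), (1, 1), (-1, -1)}

/-- The quadratic form with Selling parameters `a`, `b`, `g`: up to scaling it is the squared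
length of `m u + n v` where `a`, `b`, `g` are minus the inner products of the pairs of vectors of
the superbase `(u, v, -u - v)`, so that nonnegative parameters mean an obtuse superbase. -/
def gramForm (a b g : ℝ) (w : ℤ × ℤ) : ℝ :=
  (a * (w.1 : ℝ) ^ 2 + b * (w.2 : ℝ) ^ 2 + g * ((w.1 : ℝ) - w.2) ^ 2) / 2

lemma gramForm_one (w : ℤ × ℤ) : gramForm 1 1 1 w = hexForm w := by
  simp only [gramForm, hexForm]; ring

lemma hexForm_nonneg (w : ℤ × ℤ) : 0 ≤ hexForm w := by
  simp only [hexForm]; nlinarith [sq_nonneg ((w.1 : ℝ) - w.2), sq_nonneg ((w.1 : ℝ)), sq_nonneg ((w.2 : ℝ))]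

lemma hexForm_pos {w : ℤ × ℤ} (hw : w ≠ 0) : 0 < hexForm w := by
  refine lt_of_le_of_ne (hexForm_nonneg w) fun h => hw ?_
  simp only [hexForm] at h
  have h1 : (w.1 : ℝ) = 0 := by nlinarith [sq_nonneg ((w.1 : ℝ)), sq_nonneg ((w.1 : ℝ) - 2 * w.2)]
  have h2 : (w.2 : ℝ) = 0 := by nlinarith [sq_nonneg ((w.2 : ℝ)), sq_nonneg ((w.2 : ℝ) - 2 * w.1)]
  exact Prod.ext (by exact_mod_cast h1) (by exact_mod_cast h2)

lemma hexForm_zero : hexForm 0 = 0 := by simp [hexForm]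

lemma three_le_hexForm {w : ℤ × ℤ} (hw : w ≠ 0) (hm : w ∉ hexMin) : 3 ≤ hexForm w := by
  obtain ⟨m, n⟩ := w
  have key : 3 ≤ m ^ 2 - m * n + n ^ 2 := by
    by_contra! h
    have hm1 : m ≤ 1 := by nlinarith [sq_nonneg (m - 2 * n)]
    have hm2 : -1 ≤ m := by nlinarith [sq_nonneg (m - 2 * n)]
    have hn1 : n ≤ 1 := by nlinarith [sq_nonneg (n - 2 * m)]
    have hn2 : -1 ≤ n := by nlinarith [sq_nonneg (n - 2 * m)]
    interval_cases m <;> interval_cases n <;> simp_all [hexMin]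
  have : ((3 : ℤ) : ℝ) ≤ ((m ^ 2 - m * n + n ^ 2 : ℤ) : ℝ) := by exact_mod_cast key
  simpa [hexForm] using this

lemma sum_hexMin (f : ℤ × ℤ → ℝ) :
    ∑ w ∈ hexMin, f w = f (1, 0) + f (-1, 0) + f (0, 1) + f (0, -1) + f (1, 1) + f (-1, -1) := by
  simp [hexMin, add_assoc]

/-- Exact evaluation of the sum of `h⁻³` over the `7 × 7` box; the origin contributes `0⁻¹ = 0`. -/
lemma box_sum_rat :
    ∑ w ∈ Finset.Icc ((-3 : ℤ × ℤ)) 3, (((w.1 : ℚ) ^ 2 - w.1 * w.2 + w.2 ^ 2)⁻¹) ^ 3 ≤ 6377 / 1000 := by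
  decide +kernel

/-- The sum over the shell of sup-norm `N + 1`, which has `8 (N + 1)` points where
`h ≥ 3 (N + 1)² / 4`, is telescoped by the term `128 / 27 N⁻⁴`. -/
lemma sum_Icc_le (N : ℕ) (hN : 3 ≤ N) :
    ∑ w ∈ Finset.Icc (-(N : ℤ × ℤ)) N, (hexForm w)⁻¹ ^ 3 ≤
      6436 / 1000 - 128 / 27 * ((N : ℝ)⁻¹) ^ 4 := by
  induction N, hN using Nat.le_induction with
  | base =>
    have := (Rat.cast_le (K := ℝ)).2 box_sum_rat
    push_cast at this
    refine le_trans (le_of_eq ?_) (this.trans (by norm_num))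
    rfl
  | succ N hN ih =>
    rw [← Finset.box_succ_disjUnion, Finset.sum_disjUnion]
    have hN0 : (0 : ℝ) < N := by exact_mod_cast (by omega : 0 < N)
    have hb : ∑ w ∈ Finset.box (N + 1), (hexForm w)⁻¹ ^ 3 ≤
        ((8 * (N + 1) : ℕ) : ℝ) * ((3 / 4 * ((N : ℝ) + 1) ^ 2)⁻¹ ^ 3) := by
      rw [← Int.card_box (Nat.succ_ne_zero N), ← nsmul_eq_mul]
      refine Finset.sum_le_card_nsmul _ _ _ fun w hw => ?_
      rw [Int.mem_box] at hw
      have hp := hexForm_nonneg w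
      suffices 3 / 4 * ((N : ℝ) + 1) ^ 2 ≤ hexForm w by gcongr
      have hm : ((N : ℝ) + 1) ^ 2 = (w.1 : ℝ) ^ 2 ∨ ((N : ℝ) + 1) ^ 2 = (w.2 : ℝ) ^ 2 := by
        rcases max_choice w.1.natAbs w.2.natAbs with h | h <;> rw [h] at hw
        · left
          rw [← Int.cast_pow, ← Int.natAbs_sq, hw]; push_cast; ring
        · right
          rw [← Int.cast_pow, ← Int.natAbs_sq, hw]; push_cast; ring
      simp only [hexForm]
      rcases hm with h | h <;> rw [h]
      · nlinarith [sq_nonneg ((w.1 : ℝ) - 2 * w.2)]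
      · nlinarith [sq_nonneg ((w.2 : ℝ) - 2 * w.1)]
    have ht : ((8 * (N + 1) : ℕ) : ℝ) * ((3 / 4 * ((N : ℝ) + 1) ^ 2)⁻¹ ^ 3) +
        128 / 27 * (((N + 1 : ℕ) : ℝ)⁻¹) ^ 4 ≤ 128 / 27 * ((N : ℝ)⁻¹) ^ 4 := by
      push_cast
      have e : (8 * ((N : ℝ) + 1)) * ((3 / 4 * ((N : ℝ) + 1) ^ 2)⁻¹ ^ 3) +
        128 / 27 * (((N : ℝ) + 1)⁻¹) ^ 4 = 128 / 27 * (((N : ℝ) + 5) / ((N : ℝ) + 1) ^ 5) := by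
        field_simp
        ring
      rw [e, inv_pow, ← one_div]
      refine mul_le_mul_of_nonneg_left ?_ (by norm_num)
      rw [div_le_div_iff₀ (by positivity) (by positivity)]
      have : 0 ≤ 10 * (N:ℝ) ^ 3 + 10 * (N : ℝ) ^ 2 + 5 * N + 1 := by positivity
      nlinarith
    linarith

lemma finset_sum_hex (S : Finset (ℤ × ℤ)) : ∑ w ∈ S, (hexForm w)⁻¹ ^ 3 ≤ 644 / 100 := by
  obtain ⟨N, hN⟩ : ∃ N : ℕ, S ⊆ Finset.Icc (-(N : ℤ × ℤ)) N := by
    refine ⟨S.sup fun w => max w.1.natAbs w.2.natAbs, fun w hw => ?_⟩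
    have := Finset.le_sup (f := fun w : ℤ × ℤ => max w.1.natAbs w.2.natAbs) hw
    rw [Finset.mem_Icc]
    constructor <;> constructor <;> simp <;> omega
  have hN' : S ⊆ Finset.Icc (-((N + 3 : ℕ) : ℤ × ℤ)) (N + 3 : ℕ) := by
    refine hN.trans (Finset.Icc_subset_Icc ?_ ?_)
    · constructor <;> simp
    · constructor <;> simp
  refine (Finset.sum_le_sum_of_subset_of_nonneg hN' fun w _ _ => ?_).trans
    ((sum_Icc_le (N + 3) (by omega)).trans ?_)
  · have := hexForm_nonneg w
    positivity
  · have : (0 : ℝ) ≤ 128 / 27 * (((N + 3 : ℕ) : ℝ)⁻¹) ^ 4 := by positivity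
    linarith

lemma summable_hex3 : Summable fun w => (hexForm w)⁻¹ ^ 3 :=
  summable_of_sum_le (fun w => by have := hexForm_nonneg w; positivity) finset_sum_hex

/-- Off the minimal vectors `h ≥ 3`, hence `h⁻⁶ ≤ h⁻³ / 27`. -/
lemma hex6_le (w : ℤ × ℤ) :
    (hexForm w)⁻¹ ^ 6 ≤ 1 / 27 * (hexForm w)⁻¹ ^ 3 + if w ∈ hexMin then 26 / 27 else 0 := by
  by_cases h0 : w = 0
  · subst h0
    have : (0 : ℤ × ℤ) ∉ hexMin := by decide
    simp [hexForm_zero, this]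
  by_cases hm : w ∈ hexMin
  · have : hexForm w = 1 := by
      simp only [hexMin, Finset.mem_insert, Finset.mem_singleton] at hm
      rcases hm with h | h | h | h | h | h <;> subst h <;> norm_num [hexForm]
    rw [if_pos hm, this]; norm_num
  · have h3 := three_le_hexForm h0 hm
    rw [if_neg hm, add_zero]
    have : (hexForm w)⁻¹ ≤ 1 / 3 := by
      rw [inv_le_comm₀ (by linarith) (by norm_num)]; linarith
    have h4 : (hexForm w)⁻¹ ^ 3 ≤ (1 / 3) ^ 3 := by
      have := hexForm_nonneg w
      gcongr
    have h5 : 0 ≤ (hexForm w)⁻¹ ^ 3 := by have := hexForm_nonneg w; positivity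
    nlinarith

lemma hasSum_ind : HasSum (fun w => if w ∈ hexMin then (26 / 27 : ℝ) else 0) (6 * (26 / 27)) := by
  have : HasSum (fun w => if w ∈ hexMin then (26 / 27 : ℝ) else 0) _ :=
    hasSum_sum_of_ne_finset_zero (s := hexMin) (fun w hw => by simp [hw])
  convert this using 1
  rw [sum_hexMin]
  simp [hexMin]
  norm_num

lemma summable_hex6 : Summable fun w => (hexForm w)⁻¹ ^ 6 :=
  Summable.of_nonneg_of_le (fun w => by have := hexForm_nonneg w; positivity) hex6_le
    ((summable_hex3.mul_left _).add hasSum_ind.summable)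

lemma Z3_le : ∑' w, (hexForm w)⁻¹ ^ 3 ≤ 6 + 11 / 25 :=
  (Real.tsum_le_of_sum_le (fun w => by have := hexForm_nonneg w; positivity) finset_sum_hex).trans
    (by norm_num)

lemma Z3_ge : 6 ≤ ∑' w, (hexForm w)⁻¹ ^ 3 := by
  refine le_trans ?_ (summable_hex3.sum_le_tsum hexMin fun w _ => by
    have := hexForm_nonneg w; positivity)
  rw [sum_hexMin]
  norm_num [hexForm]

lemma Z6_le : ∑' w, (hexForm w)⁻¹ ^ 6 - 6 ≤ (∑' w, (hexForm w)⁻¹ ^ 3 - 6) / 27 := by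
  have := summable_hex6.tsum_le_tsum hex6_le ((summable_hex3.mul_left _).add hasSum_ind.summable)
  rw [(summable_hex3.mul_left _).tsum_add hasSum_ind.summable, hasSum_ind.tsum_eq, tsum_mul_left]
    at this
  linarith

/-! ### Vectors other than the six shortest -/

/-- Rotation by a third of a turn in the coordinates of the triangular lattice. -/
def hexRot : ℤ × ℤ ≃ ℤ × ℤ where
  toFun w := (-w.2, w.1 - w.2)
  invFun w := (w.2 - w.1, -w.1)
  left_inv w := by ext <;> simp
  right_inv w := by ext <;> simp

lemma hexForm_hexRot (w : ℤ × ℤ) : hexForm (hexRot w) = hexForm w := by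
  simp only [hexForm, hexRot, Equiv.coe_fn_mk]; push_cast; ring

/-- Summed against a function of `h`, every form `X` averages to `s h`: the squares `m²`, `n²`,
`(m - n)²` are permuted by `hexRot`, which preserves `h`, and they add up to `2 h`. -/
lemma hasSum_moment {a b g s : ℝ} (h1 : a + b + g = 3 * s) {k : ℕ} (hk : k ≠ 0)
    (hsum : Summable fun w => (hexForm w)⁻¹ ^ k) :
    HasSum (fun w => (hexForm w)⁻¹ ^ k * ((hexForm w)⁻¹ * gramForm a b g w))
      (s * ∑' w, (hexForm w)⁻¹ ^ k) := by
  set f : ℤ × ℤ → ℝ := fun w => (hexForm w)⁻¹ ^ k * ((hexForm w)⁻¹ * (w.1 : ℝ) ^ 2) with hf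
  have hfs : Summable f := by
    refine Summable.of_nonneg_of_le (fun w => ?_) (fun w => ?_) (hsum.mul_right (4 / 3))
    · have := hexForm_nonneg w
      simp only [hf]; positivity
    · have h0 := hexForm_nonneg w
      simp only [hf]
      refine mul_le_mul_of_nonneg_left ?_ (by positivity)
      rcases h0.eq_or_lt with h | h
      · rw [← h]; norm_num
      · rw [inv_mul_le_iff₀ h]
        simp only [hexForm]
        nlinarith [sq_nonneg ((w.1 : ℝ) - 2 * w.2)]
  have s1 := hfs.hasSum
  have s2 : HasSum (f ∘ hexRot) _ := (hexRot.hasSum_iff).2 s1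
  have s3 : HasSum (f ∘ hexRot ∘ hexRot) _ := (hexRot.hasSum_iff (f := f ∘ hexRot)).2 s2
  have e2 : ∀ w, (f ∘ hexRot) w = (hexForm w)⁻¹ ^ k * ((hexForm w)⁻¹ * (w.2 : ℝ) ^ 2) := by
    intro w
    simp only [hf, Function.comp, hexForm_hexRot]
    simp [hexRot]
  have e3 : ∀ w, (f ∘ hexRot ∘ hexRot) w =
      (hexForm w)⁻¹ ^ k * ((hexForm w)⁻¹ * ((w.1 : ℝ) - w.2) ^ 2) := by
    intro w
    simp only [hf, Function.comp, hexForm_hexRot]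
    simp only [hexRot, Equiv.coe_fn_mk]; push_cast; ring
  have hS : ∑' w, f w + ∑' w, f w + ∑' w, f w = 2 * ∑' w, (hexForm w)⁻¹ ^ k := by
    refine ((s1.add s2).add s3).unique ?_
    have e : (fun w => f w + (f ∘ hexRot) w + (f ∘ hexRot ∘ hexRot) w) =
        fun w => 2 * (hexForm w)⁻¹ ^ k := by
      funext w
      rw [e2, e3]
      simp only [hf]
      by_cases hw : w = 0
      · subst hw; simp [hexForm_zero, hk]
      · have := (hexForm_pos hw).ne'
        have e : (w.1 : ℝ) ^ 2 + (w.2 : ℝ) ^ 2 + ((w.1 : ℝ) - w.2) ^ 2 = 2 * hexForm w := by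
          simp only [hexForm]; ring
        rw [← mul_add, ← mul_add, ← mul_add, ← mul_add, e]
        field_simp
    rw [e]
    exact hsum.hasSum.mul_left 2
  have h := ((s1.mul_left (a / 2)).add (s2.mul_left (b / 2))).add (s3.mul_left (g / 2))
  have e : (fun w => (hexForm w)⁻¹ ^ k * ((hexForm w)⁻¹ * gramForm a b g w)) =
      fun w => a / 2 * f w + b / 2 * (f ∘ hexRot) w + g / 2 * (f ∘ hexRot ∘ hexRot) w := by
    funext w
    rw [e2, e3]
    simp only [hf, gramForm]; ring
  have hv : s * ∑' w, (hexForm w)⁻¹ ^ k =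
      a / 2 * ∑' w, f w + b / 2 * ∑' w, f w + g / 2 * ∑' w, f w := by
    linear_combination (-(∑' w, f w) / 2) * h1 - s / 2 * hS
  rw [e, hv]
  exact h

/-- The forms `X` and `h` have the same determinant, so the eigenvalues of `X` relative to `h` are
`μ`, `μ⁻¹` with sum `2 s`, and `u = X / h` lies between them. The proof writes `-12` times the
left side as the square of a quadratic form, a multiple of the Jacobian of `X` and `h`. -/
lemma gram_quad {a b g s : ℝ} (h1 : a + b + g = 3 * s) (h2 : a * b + b * g + g * a = 3)
    (w : ℤ × ℤ) :
    gramForm a b g w ^ 2 - 2 * s * hexForm w * gramForm a b g w + hexForm w ^ 2 ≤ 0 := by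
  have : gramForm a b g w ^ 2 - 2 * s * hexForm w * gramForm a b g w + hexForm w ^ 2 =
      -(a * w.1 * (w.1 - 2 * w.2) + b * w.2 * (w.2 - 2 * w.1) * (-1)
        + g * (w.2 - w.1) * (w.1 + w.2)) ^ 2 / 12 := by
    have e : gramForm a b g w ^ 2 - 2 / 3 * (a + b + g) * hexForm w * gramForm a b g w
        + hexForm w ^ 2 * ((a * b + b * g + g * a) / 3) =
      -(a * w.1 * (w.1 - 2 * w.2) + b * w.2 * (w.2 - 2 * w.1) * (-1)
        + g * (w.2 - w.1) * (w.1 + w.2)) ^ 2 / 12 := by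
      simp only [gramForm, hexForm]; ring
    linear_combination e + (2 / 3 * hexForm w * gramForm a b g w) * h1 - (hexForm w ^ 2 / 3) * h2
  rw [this]
  have := sq_nonneg (a * w.1 * (w.1 - 2 * w.2) + b * w.2 * (w.2 - 2 * w.1) * (-1)
        + g * (w.2 - w.1) * (w.1 + w.2))
  linarith

/-- Bounds linear in `u` for the two powers: the first follows by reducing `u⁻³` modulo
`u⁻² - 2 s u⁻¹ + 1 ≤ 0`, the second is the tangent line at `u = 1`. -/
lemma inv_pow_bounds {u s : ℝ} (hu : 0 < u) (hs : 1 ≤ s) (h : u ^ 2 - 2 * s * u + 1 ≤ 0) :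
    u⁻¹ ^ 3 ≤ 8 * s ^ 3 - 4 * s - (4 * s ^ 2 - 1) * u ∧ 7 - 6 * u ≤ u⁻¹ ^ 6 := by
  have hy : 0 < u⁻¹ := by positivity
  have huy : u * u⁻¹ = 1 := mul_inv_cancel₀ hu.ne'
  have y1 : u⁻¹ ≤ 2 * s - u := by
    rw [inv_le_iff_one_le_mul₀ hu]; linarith
  constructor
  · have q2 : u⁻¹ ^ 2 ≤ 2 * s * u⁻¹ - 1 := by nlinarith
    have q3 : u⁻¹ ^ 3 ≤ 2 * s * u⁻¹ ^ 2 - u⁻¹ := by nlinarith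
    nlinarith [mul_nonneg (by nlinarith : 0 ≤ 4 * s ^ 2 - 1) (sub_nonneg.2 y1)]
  · have b := one_add_mul_le_pow (a := u⁻¹ - 1) (by linarith) 6
    have : 2 - u ≤ u⁻¹ := by nlinarith [mul_nonneg hy.le (sq_nonneg (u - 1))]
    rw [add_sub_cancel] at b
    push_cast at b
    linarith

/-- The Lennard-Jones interaction `t⁻⁶ - K t⁻³` as a function of the squared distance `t`; the
value at `t = 0` is `0`, so that lattice sums may include the origin. -/
def ljTerm (K t : ℝ) : ℝ := t⁻¹ ^ 6 - K * t⁻¹ ^ 3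

lemma hexForm_le {a b g s : ℝ} (h1 : a + b + g = 3 * s)
    (h2 : a * b + b * g + g * a = 3) {w : ℤ × ℤ} (hw : w ≠ 0) :
    hexForm w ≤ 2 * s * gramForm a b g w := by
  have h := hexForm_pos hw
  have := gram_quad h1 h2 w
  by_contra! hc
  nlinarith [mul_pos h (sub_pos.2 hc), sq_nonneg (gramForm a b g w)]

lemma summable_ljTerm {a b g s : ℝ} (K : ℝ) (hs : 0 < s) (h1 : a + b + g = 3 * s)
    (h2 : a * b + b * g + g * a = 3) :
    Summable fun w => ljTerm K (gramForm a b g w) := by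
  have hle : ∀ w, 0 ≤ (gramForm a b g w)⁻¹ ∧
      (gramForm a b g w)⁻¹ ≤ 2 * s * (hexForm w)⁻¹ := by
    intro w
    by_cases hw : w = 0
    · subst hw; simp [hexForm_zero, gramForm]
    · have h := hexForm_pos hw
      have hX := hexForm_le h1 h2 hw
      have hX0 : 0 < gramForm a b g w := by
        by_contra! hc; nlinarith
      refine ⟨by positivity, ?_⟩
      rw [← div_eq_mul_inv, le_div_iff₀ h, inv_mul_le_iff₀ hX0]
      linarith
  have hpow : ∀ k : ℕ, (Summable fun w => (hexForm w)⁻¹ ^ k) →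
      Summable fun w => (gramForm a b g w)⁻¹ ^ k := by
    intro k hk
    refine Summable.of_nonneg_of_le (fun w => pow_nonneg (hle w).1 _) (fun w => ?_)
      (hk.mul_left ((2 * s) ^ k))
    rw [← mul_pow]
    exact pow_le_pow_left₀ (hle w).1 (hle w).2 k
  exact (hpow 6 summable_hex6).sub ((hpow 3 summable_hex3).mul_left K)

/-- Among forms of the same determinant with an obtuse superbase, the triangular one has strictly
smaller energy as soon as `0 ≤ K ≤ 4 / 5`. -/
lemma tsum_lj_lt {a b g s K : ℝ} (ha : 0 ≤ a) (hb : 0 ≤ b) (hg : 0 ≤ g)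
    (h1 : a + b + g = 3 * s) (h2 : a * b + b * g + g * a = 3) (hs : 1 < s)
    (hK0 : 0 ≤ K) (hK : K ≤ 4 / 5) :
    ∑' w, ljTerm K (gramForm 1 1 1 w) < ∑' w, ljTerm K (gramForm a b g w) := by
  have sF := summable_ljTerm K (by linarith : 0 < s) h1 h2
  have sF1 := summable_ljTerm (a := 1) (b := 1) (g := 1) (s := 1) K (by norm_num) (by norm_num)
    (by norm_num)
  set Z3 := ∑' w, (hexForm w)⁻¹ ^ 3 with hZ3
  set Z6 := ∑' w, (hexForm w)⁻¹ ^ 6 with hZ6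
  -- `T` bounds the energy difference from below off `hexMin`, and its sum is known
  let T : ℤ × ℤ → ℝ := fun w =>
    6 * ((hexForm w)⁻¹ ^ 6 - (hexForm w)⁻¹ ^ 6 * ((hexForm w)⁻¹ * gramForm a b g w)) -
    K * ((8 * s ^ 3 - 4 * s - 1) * (hexForm w)⁻¹ ^ 3 -
      (4 * s ^ 2 - 1) * ((hexForm w)⁻¹ ^ 3 * ((hexForm w)⁻¹ * gramForm a b g w)))
  have hT : HasSum T (6 * (Z6 - s * Z6) - K * ((8 * s ^ 3 - 4 * s - 1) * Z3 -
      (4 * s ^ 2 - 1) * (s * Z3))) :=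
    ((summable_hex6.hasSum.sub (hasSum_moment h1 (by norm_num) summable_hex6)).mul_left 6).sub
      (((summable_hex3.hasSum.mul_left _).sub
        ((hasSum_moment h1 (by norm_num) summable_hex3).mul_left _)).mul_left K)
  have hpt : ∀ w ∉ hexMin, 0 ≤ ljTerm K (gramForm a b g w) - ljTerm K (gramForm 1 1 1 w) - T w := by
    intro w _
    by_cases hw : w = 0
    · subst hw; simp [T, ljTerm, hexForm_zero, gramForm]
    have h := hexForm_pos hw
    have hX0 : 0 < gramForm a b g w := by
      have := hexForm_le h1 h2 hw
      by_contra! hc; nlinarith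
    have hq : ((hexForm w)⁻¹ * gramForm a b g w) ^ 2
        - 2 * s * ((hexForm w)⁻¹ * gramForm a b g w) + 1 ≤ 0 := by
      have e : ((hexForm w)⁻¹ * gramForm a b g w) ^ 2
        - 2 * s * ((hexForm w)⁻¹ * gramForm a b g w) + 1 = (hexForm w)⁻¹ ^ 2 *
          (gramForm a b g w ^ 2 - 2 * s * hexForm w * gramForm a b g w + hexForm w ^ 2) := by
        field_simp
      rw [e]
      exact mul_nonpos_of_nonneg_of_nonpos (by positivity) (gram_quad h1 h2 w)
    obtain ⟨q3, q6⟩ := inv_pow_bounds (by positivity) hs.le hq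
    have eX : (gramForm a b g w)⁻¹ = (hexForm w)⁻¹ * ((hexForm w)⁻¹ * gramForm a b g w)⁻¹ := by
      field_simp
    have q3' := mul_le_mul_of_nonneg_left q3 (by positivity : 0 ≤ K * (hexForm w)⁻¹ ^ 3)
    have q6' := mul_le_mul_of_nonneg_left q6 (by positivity : 0 ≤ (hexForm w)⁻¹ ^ 6)
    simp only [T, ljTerm, gramForm_one]
    rw [eX, mul_pow, mul_pow]
    linarith
  -- dropping the nonnegative terms off `hexMin` leaves the six short vectors
  have hsum := ((sF.sub sF1).sub hT.summable).sum_le_tsum hexMin hpt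
  rw [(sF.sub sF1).tsum_sub hT.summable, sF.tsum_sub sF1, hT.tsum_eq, sum_hexMin] at hsum
  have hmain := main_ineq ha hb hg h1 h2 hs hK (sub_nonneg.2 Z3_ge)
    (sub_le_iff_le_add'.2 Z3_le) Z6_le
  rw [← hZ3, ← hZ6] at hmain
  generalize ∑' w, ljTerm K (gramForm a b g w) = E at hsum ⊢
  generalize ∑' w, ljTerm K (gramForm 1 1 1 w) = E₁ at hsum ⊢
  norm_num [T, ljTerm, gramForm, hexForm] at hsum
  norm_num at hmain
  have hl : K * (4 * s ^ 2 - 1) * (a + b + g) = K * (4 * s ^ 2 - 1) * (3 * s) := by rw [h1]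
  linarith

/-! ### Reduction of planar lattices -/

/-- A unimodular change of basis. -/
lemma latticeBasis_change {L : Set R2} {u v : R2} (h : LatticeBasis L u v) {a b c d : ℤ}
    (hdet : (a * d - b * c) ^ 2 = 1) :
    LatticeBasis L ((a : ℝ) • u + (b : ℝ) • v) ((c : ℝ) • u + (d : ℝ) • v) := by
  obtain ⟨hli, rfl⟩ := h
  have hdR : ((a : ℝ) * d - b * c) ^ 2 = 1 := by exact_mod_cast hdet
  constructor
  · rw [LinearIndependent.pair_iff] at hli ⊢
    intro x y hxy
    obtain ⟨h1, h2⟩ := hli (x * a + y * c) (x * b + y * d) (by rw [← hxy]; module)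
    constructor
    · linear_combination (-x) * hdR + (a * d - b * c) * d * h1 - (a * d - b * c) * c * h2
    · linear_combination (-y) * hdR - (a * d - b * c) * b * h1 + (a * d - b * c) * a * h2
  · ext x
    constructor
    · rintro ⟨m, n, rfl⟩
      refine ⟨(a * d - b * c) * (m * d - n * c), (a * d - b * c) * (n * a - m * b), ?_⟩
      have e1 : ((a * d - b * c) * (m * d - n * c) : ℝ) * a + (a * d - b * c) * (n * a - m * b) * c = m := by
        linear_combination (m : ℝ) * hdR
      have e2 : ((a * d - b * c) * (m * d - n * c) : ℝ) * b + (a * d - b * c) * (n * a - m * b) * d = n := by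
        linear_combination (n : ℝ) * hdR
      push_cast
      rw [smul_add, smul_add, smul_smul, smul_smul, smul_smul, smul_smul, add_add_add_comm, ← add_smul,
        ← add_smul, e1, e2]
    · rintro ⟨m, n, rfl⟩
      refine ⟨m * a + n * c, m * b + n * d, ?_⟩
      push_cast
      module

lemma norm_sq_comb (u v : R2) (x y : ℝ) :
    ‖x • u + y • v‖ ^ 2 = x ^ 2 * ‖u‖ ^ 2 + 2 * x * y * inner ℝ u v + y ^ 2 * ‖v‖ ^ 2 := by
  rw [norm_add_sq_real, norm_smul, norm_smul, inner_smul_left, inner_smul_right, mul_pow, mul_pow]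
  simp only [Real.norm_eq_abs, sq_abs, conj_trivial]
  ring

lemma inner_comb (u v : R2) (a b c d : ℝ) :
    inner ℝ (a • u + b • v) (c • u + d • v) =
      a * c * ‖u‖ ^ 2 + (a * d + b * c) * inner ℝ u v + b * d * ‖v‖ ^ 2 := by
  simp only [inner_add_left, inner_add_right, real_inner_smul_left, real_inner_smul_right,
    real_inner_self_eq_norm_sq, real_inner_comm u v]
  ring

lemma ELJ_eq {L : Set R2} {u v : R2} (h : LatticeBasis L u v) :
    ELJ L = ∑' w : ℤ × ℤ, ljTerm 2 (‖(w.1 : ℝ) • u + (w.2 : ℝ) • v‖ ^ 2) := by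
  obtain ⟨hli, hL⟩ := h
  set φ : ℤ × ℤ → R2 := fun w => (w.1 : ℝ) • u + (w.2 : ℝ) • v with hφ
  have hinj : Function.Injective φ := by
    intro w w' hw
    rw [LinearIndependent.pair_iff] at hli
    simp only [hφ] at hw
    obtain ⟨h1, h2⟩ := hli (w.1 - w'.1) (w.2 - w'.2) (by
      rw [sub_smul, sub_smul, sub_add_sub_comm, hw, sub_self])
    exact Prod.ext (by exact_mod_cast sub_eq_zero.1 h1) (by exact_mod_cast sub_eq_zero.1 h2)
  have hr : L = Set.range φ := by
    rw [hL]; ext x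
    simp only [Set.mem_ofPred_eq, Set.mem_range, Prod.exists, hφ, eq_comm]
  have h1 : ∀ x : R2, VLJ ‖x‖ = ljTerm 2 (‖x‖ ^ 2) := by
    intro x
    have e12 : ‖x‖ ^ (-12 : ℤ) = (‖x‖ ^ 12)⁻¹ := by
      rw [zpow_neg]; norm_cast
    have e6 : ‖x‖ ^ (-6 : ℤ) = (‖x‖ ^ 6)⁻¹ := by
      rw [zpow_neg]; norm_cast
    rw [VLJ, ljTerm, e12, e6, inv_pow, inv_pow, ← pow_mul, ← pow_mul]
  have h2 := hinj.tsum_eq (f := fun x : R2 => ({x : R2 | x ∈ L ∧ x ≠ 0}).indicator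
      (fun x => VLJ ‖x‖) x) (fun x hx => by
        have := (Set.mem_of_indicator_ne_zero hx).1
        rwa [hr] at this)
  have h3 : ELJ L = ∑' x : {x : R2 | x ∈ L ∧ x ≠ 0}, VLJ ‖(x : R2)‖ := rfl
  rw [h3, tsum_subtype {x : R2 | x ∈ L ∧ x ≠ 0} (fun x => VLJ ‖x‖), ← h2]
  refine tsum_congr fun w => ?_
  rw [← h1]
  by_cases hw : φ w = 0
  · have e0 : VLJ ‖(0 : R2)‖ = 0 := by rw [h1]; simp [ljTerm]
    have : (w.1 : ℝ) • u + (w.2 : ℝ) • v = 0 := hw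
    rw [this, hw, e0, Set.indicator_of_notMem]
    simp
  · rw [Set.indicator_of_mem]
    exact ⟨hr ▸ Set.mem_range_self w, hw⟩

/-- Every planar lattice has a basis `(u, v)` such that the superbase `(u, v, -u - v)` is
obtuse. A basis minimising `‖u‖² + ‖v‖²`, with the sign of `v` adjusted, has this property. -/
lemma exists_obtuse {L : Set R2} {u v : R2} (h : LatticeBasis L u v)
    (hD : 0 < ‖u‖ ^ 2 * ‖v‖ ^ 2 - inner ℝ u v ^ 2) :
    ∃ u' v' : R2, LatticeBasis L u' v' ∧ inner ℝ u' v' ≤ 0 ∧ 0 ≤ ‖u'‖ ^ 2 + inner ℝ u' v' ∧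
      0 ≤ ‖v'‖ ^ 2 + inner ℝ u' v' ∧
      ‖u'‖ ^ 2 * ‖v'‖ ^ 2 - inner ℝ u' v' ^ 2 = ‖u‖ ^ 2 * ‖v‖ ^ 2 - inner ℝ u v ^ 2 := by
  let V : ℤ → ℤ → R2 := fun a b => (a : ℝ) • u + (b : ℝ) • v
  let E : ℤ × ℤ × ℤ × ℤ → ℝ := fun w => ‖V w.1 w.2.1‖ ^ 2 + ‖V w.2.2.1 w.2.2.2‖ ^ 2
  set D := ‖u‖ ^ 2 * ‖v‖ ^ 2 - inner ℝ u v ^ 2 with hDd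
  have hE1 : E (1, 0, 0, 1) = ‖u‖ ^ 2 + ‖v‖ ^ 2 := by simp [E, V]
  -- coefficients of short vectors are bounded
  have hb1 : ∀ a b : ℤ, D * (a : ℝ) ^ 2 ≤ ‖V a b‖ ^ 2 * (‖u‖ ^ 2 + ‖v‖ ^ 2) := by
    intro a b
    simp only [V, norm_sq_comb, hDd]
    nlinarith [sq_nonneg (a * inner ℝ u v + b * ‖v‖ ^ 2), sq_nonneg (a * ‖u‖ ^ 2 + b * inner ℝ u v),
      sq_nonneg (b : ℝ), sq_nonneg (a : ℝ), mul_nonneg hD.le (sq_nonneg (b : ℝ))]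
  have hb2 : ∀ a b : ℤ, D * (b : ℝ) ^ 2 ≤ ‖V a b‖ ^ 2 * (‖u‖ ^ 2 + ‖v‖ ^ 2) := by
    intro a b
    simp only [V, norm_sq_comb, hDd]
    nlinarith [sq_nonneg (a * inner ℝ u v + b * ‖v‖ ^ 2), sq_nonneg (a * ‖u‖ ^ 2 + b * inner ℝ u v),
      sq_nonneg (b : ℝ), sq_nonneg (a : ℝ), mul_nonneg hD.le (sq_nonneg (a : ℝ))]
  obtain ⟨N, hN⟩ := exists_nat_gt (max 1 ((‖u‖ ^ 2 + ‖v‖ ^ 2) * (‖u‖ ^ 2 + ‖v‖ ^ 2) / D))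
  have hN1 : (1 : ℝ) < N := (le_max_left _ _).trans_lt hN
  have hN2 := (le_max_right _ _).trans_lt hN
  rw [div_lt_iff₀ hD] at hN2
  have hbd : ∀ x : ℤ, D * (x : ℝ) ^ 2 ≤ (‖u‖ ^ 2 + ‖v‖ ^ 2) * (‖u‖ ^ 2 + ‖v‖ ^ 2) →
      x ∈ Finset.Icc (-(N : ℤ)) N := by
    intro x hx
    have h1 : D * (x : ℝ) ^ 2 < D * N := by linarith
    have h2 : (x : ℝ) ^ 2 < N := lt_of_mul_lt_mul_left h1 hD.le
    have h3 : x ^ 2 < (N : ℤ) := by exact_mod_cast h2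
    rw [Finset.mem_Icc]
    constructor <;> nlinarith
  let I := Finset.Icc (-(N : ℤ)) N
  let T := (I ×ˢ I ×ˢ I ×ˢ I).filter fun w => (w.1 * w.2.2.2 - w.2.1 * w.2.2.1) ^ 2 = 1
  have hN1' : (1 : ℤ) < N := by exact_mod_cast hN1
  have h1T : ((1, 0, 0, 1) : ℤ × ℤ × ℤ × ℤ) ∈ T := by
    simp [T, I]; omega
  obtain ⟨⟨a, b, c, d⟩, hmT, hmin⟩ := T.exists_min_image E ⟨_, h1T⟩
  have hdet : (a * d - b * c) ^ 2 = 1 := (Finset.mem_filter.1 hmT).2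
  have hmin' : ∀ a' b' c' d' : ℤ, (a' * d' - b' * c') ^ 2 = 1 →
      E (a, b, c, d) ≤ E (a', b', c', d') := by
    intro a' b' c' d' h'
    by_cases hE : E (a', b', c', d') ≤ ‖u‖ ^ 2 + ‖v‖ ^ 2
    · refine hmin _ (Finset.mem_filter.2 ⟨?_, h'⟩)
      simp only [E] at hE
      have k1 : ‖V a' b'‖ ^ 2 * (‖u‖ ^ 2 + ‖v‖ ^ 2) ≤ (‖u‖ ^ 2 + ‖v‖ ^ 2) * (‖u‖ ^ 2 + ‖v‖ ^ 2) := by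
        gcongr; linarith [sq_nonneg ‖V c' d'‖]
      have k2 : ‖V c' d'‖ ^ 2 * (‖u‖ ^ 2 + ‖v‖ ^ 2) ≤ (‖u‖ ^ 2 + ‖v‖ ^ 2) * (‖u‖ ^ 2 + ‖v‖ ^ 2) := by
        gcongr; linarith [sq_nonneg ‖V a' b'‖]
      simp only [Finset.mem_product]
      exact ⟨hbd _ ((hb1 _ _).trans k1), hbd _ ((hb2 _ _).trans k1),
        hbd _ ((hb1 _ _).trans k2), hbd _ ((hb2 _ _).trans k2)⟩
    · exact (hmin _ h1T).trans (hE1.le.trans (not_le.1 hE).le)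
  have m1 := hmin' a b (c + a) (d + b) (by rw [← hdet]; ring)
  have m2 := hmin' a b (c - a) (d - b) (by rw [← hdet]; ring)
  have m3 := hmin' (a + c) (b + d) c d (by rw [← hdet]; ring)
  have m4 := hmin' (a - c) (b - d) c d (by rw [← hdet]; ring)
  have eD : ‖V a b‖ ^ 2 * ‖V c d‖ ^ 2 - inner ℝ (V a b) (V c d) ^ 2 = D := by
    have hdR : ((a : ℝ) * d - b * c) ^ 2 = 1 := by exact_mod_cast hdet
    simp only [V, norm_sq_comb, inner_comb, hDd]
    linear_combination (‖u‖ ^ 2 * ‖v‖ ^ 2 - inner ℝ u v ^ 2) * hdR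
  have hV : ∀ a b c d : ℤ, V (a + c) (b + d) = V a b + V c d := by
    intro a b c d; simp only [V]; push_cast; module
  have hV' : ∀ a b c d : ℤ, V (a - c) (b - d) = V a b - V c d := by
    intro a b c d; simp only [V]; push_cast; module
  simp only [E, hV, hV', norm_add_sq_real, norm_sub_sq_real, real_inner_comm (V a b) (V c d)] at m1 m2 m3 m4
  have hB := latticeBasis_change h hdet
  rcases le_total (inner ℝ (V a b) (V c d)) 0 with ht | ht
  · exact ⟨V a b, V c d, hB, ht, by linarith, by linarith, eD⟩
  · refine ⟨V a b, -V c d, ?_, ?_, ?_, ?_, ?_⟩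
    · have := latticeBasis_change hB (a := 1) (b := 0) (c := 0) (d := -1) (by norm_num)
      simpa [V, ← neg_add_rev, add_comm] using this
    · rw [inner_neg_right]; linarith
    · rw [inner_neg_right]; linarith
    · rw [inner_neg_right, norm_neg]; linarith
    · rw [inner_neg_right, norm_neg, neg_sq, eD]

lemma gram_det_of_area {u v : R2} {A : ℝ}
    (h : ‖u‖ * ‖v‖ * |Real.sin (InnerProductGeometry.angle u v)| = A) :
    ‖u‖ ^ 2 * ‖v‖ ^ 2 - inner ℝ u v ^ 2 = A ^ 2 := by
  rw [← h, ← InnerProductGeometry.cos_angle_mul_norm_mul_norm u v]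
  have := Real.sin_sq_add_cos_sq (InnerProductGeometry.angle u v)
  rw [mul_pow _ |_|, sq_abs]
  linear_combination (-‖u‖ ^ 2 * ‖v‖ ^ 2) * this

/-- Lattices having bases with the same Gram matrix are isometric. -/
lemma isRotationOf_of_gram {L M : Set R2} {u v u₀ v₀ : R2} (hL : LatticeBasis L u v)
    (hM : LatticeBasis M u₀ v₀) (hu : ‖u‖ ^ 2 = ‖u₀‖ ^ 2) (hv : ‖v‖ ^ 2 = ‖v₀‖ ^ 2)
    (huv : inner ℝ u v = inner ℝ u₀ v₀) : IsRotationOf L M := by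
  obtain ⟨hli, rfl⟩ := hL
  obtain ⟨hli₀, rfl⟩ := hM
  let B := basisOfLinearIndependentOfCardEqFinrank hli (by simp)
  let B₀ := basisOfLinearIndependentOfCardEqFinrank hli₀ (by simp)
  let f := B₀.equiv B (Equiv.refl _)
  have f0 : f u₀ = u := by
    have := B₀.equiv_apply 0 B (Equiv.refl _)
    simpa [B, B₀] using this
  have f1 : f v₀ = v := by
    have := B₀.equiv_apply 1 B (Equiv.refl _)
    simpa [B, B₀] using this
  have fc : ∀ x y : ℝ, f (x • u₀ + y • v₀) = x • u + y • v := by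
    intro x y; rw [map_add, map_smul, map_smul, f0, f1]
  refine ⟨⟨f, fun x => ?_⟩, ?_⟩
  · have hx : x = B₀.repr x 0 • u₀ + B₀.repr x 1 • v₀ := by
      have := (B₀.sum_repr x).symm
      rw [Fin.sum_univ_two] at this
      simpa [B₀] using this
    rw [hx, fc]
    refine (sq_eq_sq₀ (norm_nonneg _) (norm_nonneg _)).1 ?_
    rw [norm_sq_comb, norm_sq_comb, hu, hv, huv]
  · ext x
    constructor
    · rintro ⟨m, n, rfl⟩
      exact ⟨(m : ℝ) • u₀ + (n : ℝ) • v₀, ⟨m, n, rfl⟩, fc _ _⟩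
    · rintro ⟨_, ⟨m, n, rfl⟩, rfl⟩
      exact ⟨m, n, (fc _ _)⟩

/-- The basis of `Λ_A` obtained by reversing the second vector of the standard one has an angle of
`2π / 3`, hence belongs to an obtuse superbase. -/
lemma tri_basis {A : ℝ} (hA : 0 < A) :
    ∃ u v : R2, LatticeBasis (triLattice A) u v ∧ ‖u‖ ^ 2 = 2 * A / √3 ∧ ‖v‖ ^ 2 = 2 * A / √3 ∧
      inner ℝ u v = -(A / √3) := by
  set r := √(2 * A / √3) with hr
  have hr2 : r ^ 2 = 2 * A / √3 := Real.sq_sqrt (by positivity)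
  have hr0 : 0 < r := by positivity
  have h3 : (√3) ^ 2 = 3 := Real.sq_sqrt (by norm_num)
  have h30 : 0 < √3 := by positivity
  have hb : LatticeBasis (triLattice A) (r • vec2 1 0) (r • vec2 (1 / 2) (√3 / 2)) := by
    refine ⟨?_, rfl⟩
    rw [LinearIndependent.pair_iff]
    intro x y hxy
    have e0 := congrArg (fun w : R2 => w 0) hxy
    have e1 := congrArg (fun w : R2 => w 1) hxy
    simp [vec2] at e0 e1
    have hy : y = 0 := by
      rcases e1 with h | h
      · exact h
      · exact absurd h hr0.ne'
    subst hy
    simp at e0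
    refine ⟨?_, rfl⟩
    rcases e0 with h | h
    · exact h
    · exact absurd h hr0.ne'
  have hb' := latticeBasis_change hb (a := 1) (b := 0) (c := 0) (d := -1) (by norm_num)
  refine ⟨_, _, hb', ?_, ?_, ?_⟩
  · rw [← hr2, EuclideanSpace.real_norm_sq_eq]
    simp [vec2, Fin.sum_univ_two]
  · rw [← hr2, EuclideanSpace.real_norm_sq_eq]
    simp [vec2, Fin.sum_univ_two]
    linear_combination r ^ 2 / 4 * h3
  · rw [show -(A / √3) = -(r ^ 2 / 2) by rw [hr2]; ring]
    simp [vec2, Fin.sum_univ_two, PiLp.inner_apply]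
    ring

lemma ELJ_eq_gram {L : Set R2} {u v : R2} (h : LatticeBasis L u v) {l a b g : ℝ}
    (hl : 0 < l) (ha : ‖u‖ ^ 2 + inner ℝ u v = l * a / 2) (hb : ‖v‖ ^ 2 + inner ℝ u v = l * b / 2)
    (hg : -inner ℝ u v = l * g / 2) :
    ELJ L = l⁻¹ ^ 6 * ∑' w, ljTerm (2 * l ^ 3) (gramForm a b g w) := by
  rw [ELJ_eq h, ← tsum_mul_left]
  refine tsum_congr fun w => ?_
  have e : ‖(w.1 : ℝ) • u + (w.2 : ℝ) • v‖ ^ 2 = l * gramForm a b g w := by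
    rw [norm_sq_comb, gramForm]
    linear_combination (w.1 : ℝ) ^ 2 * ha + (w.2 : ℝ) ^ 2 * hb + ((w.1 : ℝ) - w.2) ^ 2 * hg
  rw [e, ljTerm, ljTerm, mul_inv, mul_pow, mul_pow]
  have : l⁻¹ ^ 3 * l ^ 3 = 1 := by rw [← mul_pow, inv_mul_cancel₀ hl.ne', one_pow]
  linear_combination (2 * l⁻¹ ^ 3 * (gramForm a b g w)⁻¹ ^ 3) * this

/-! ### Comparison with the triangular lattice -/

/-- A lattice of area `A` has larger energy than `Λ_A` or is isometric to it. -/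
lemma dichotomy {A : ℝ} (hA : 0 < A) (h : A ^ 3 ≤ π ^ 3 / 120) {L : Set R2} (hL : HasArea L A) :
    ELJ (triLattice A) < ELJ L ∨
      (ELJ (triLattice A) = ELJ L ∧ IsRotationOf L (triLattice A)) := by
  obtain ⟨u₁, v₁, hB₁, hA₁⟩ := hL
  have hD := gram_det_of_area hA₁
  obtain ⟨u, v, hB, ht, hp, hq, hD'⟩ := exists_obtuse hB₁ (by rw [hD]; positivity)
  rw [hD] at hD'
  obtain ⟨u₀, v₀, hB₀, hu₀, hv₀, ht₀⟩ := tri_basis hA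
  have h3 : (√3) ^ 2 = 3 := Real.sq_sqrt (by norm_num)
  have h30 : 0 < √3 := by positivity
  set l := 2 * A / √3 with hl
  have hl0 : 0 < l := by positivity
  have hl2 : l ^ 2 = 4 * A ^ 2 / 3 := by rw [hl, div_pow, h3]; ring
  -- `2 l³ = 16 A³ / (3 √3) ≤ 16 π³ / (360 √3) ≈ 0.796`
  have hK : 2 * l ^ 3 ≤ 4 / 5 := by
    have e : l ^ 3 * √3 = 8 / 3 * A ^ 3 := by
      rw [pow_succ, hl2, hl]; field_simp; ring
    have hpi : π ^ 3 ≤ 3.1416 ^ 3 := by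
      have := Real.pi_lt_d4
      have := Real.pi_pos
      gcongr
    have h31 : 1.732 ≤ √3 := Real.le_sqrt_of_sq_le (by norm_num)
    have : l ^ 3 * 1.732 ≤ l ^ 3 * √3 := by gcongr
    norm_num at this hpi ⊢
    linarith
  have et := ELJ_eq_gram hB₀ hl0 (a := 1) (b := 1) (g := 1) (by rw [hu₀, ht₀, hl]; ring)
    (by rw [hv₀, ht₀, hl]; ring) (by rw [ht₀, hl]; ring)
  obtain ⟨a, ha⟩ : ∃ a, ‖u‖ ^ 2 + inner ℝ u v = l * a / 2 :=
    ⟨2 * (‖u‖ ^ 2 + inner ℝ u v) / l, by field_simp⟩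
  obtain ⟨b, hb⟩ : ∃ b, ‖v‖ ^ 2 + inner ℝ u v = l * b / 2 :=
    ⟨2 * (‖v‖ ^ 2 + inner ℝ u v) / l, by field_simp⟩
  obtain ⟨g, hg⟩ : ∃ g, -inner ℝ u v = l * g / 2 :=
    ⟨2 * (-inner ℝ u v) / l, by field_simp⟩
  have eL := ELJ_eq_gram hB hl0 ha hb hg
  have ha0 : 0 ≤ a := by
    rw [ha] at hp; by_contra! hc; nlinarith
  have hb0 : 0 ≤ b := by
    rw [hb] at hq; by_contra! hc; nlinarith
  have hg0 : 0 ≤ g := by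
    by_contra! hc; nlinarith
  have hdet : a * b + b * g + g * a = 3 := by
    have e1 : inner ℝ u v = -(l * g / 2) := by linarith
    have e2 : ‖u‖ ^ 2 = l * a / 2 + l * g / 2 := by linarith
    have e3 : ‖v‖ ^ 2 = l * b / 2 + l * g / 2 := by linarith
    rw [e1, e2, e3] at hD'
    have : l ^ 2 * (a * b + b * g + g * a) = l ^ 2 * 3 := by
      linear_combination 4 * hD' - 3 * hl2
    exact mul_left_cancel₀ (by positivity) this
  obtain ⟨s, hs⟩ : ∃ s, a + b + g = 3 * s := ⟨(a + b + g) / 3, by ring⟩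
  have hss : 1 ≤ s ^ 2 := by
    have e : (a + b + g) ^ 2 = 9 * s ^ 2 := by rw [hs]; ring
    linarith [sq_nonneg (a - b), sq_nonneg (b - g), sq_nonneg (a - g)]
  have hs1 : 1 ≤ s := (one_le_sq_iff₀ (by linarith)).1 hss
  rcases hs1.eq_or_lt with hs1 | hs1
  · right
    subst hs1
    have hsq : (a - b) ^ 2 + (b - g) ^ 2 + (a - g) ^ 2 = 0 := by
      linear_combination 2 * (a + b + g + 3) * hs - 6 * hdet
    have hab : a = b := by
      refine sub_eq_zero.1 (pow_eq_zero_iff (two_ne_zero)|>.1 (le_antisymm ?_ (sq_nonneg _)))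
      linarith [sq_nonneg (b - g), sq_nonneg (a - g)]
    have hbg : b = g := by
      refine sub_eq_zero.1 (pow_eq_zero_iff (two_ne_zero)|>.1 (le_antisymm ?_ (sq_nonneg _)))
      linarith [sq_nonneg (a - b), sq_nonneg (a - g)]
    obtain rfl : a = 1 := by linarith
    subst hab hbg
    refine ⟨by rw [et, eL], isRotationOf_of_gram hB hB₀ ?_ ?_ ?_⟩
    · rw [hu₀]; linarith
    · rw [hv₀]; linarith
    · have e : A / √3 = l / 2 := by rw [hl]; ring
      rw [ht₀, e]; linarith
  · left
    rw [et, eL]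
    have := tsum_lj_lt ha0 hb0 hg0 hs hdet hs1 (K := 2 * l ^ 3) (by positivity) hK
    gcongr

/-- If `A³ ≤ π³/120` then the triangular lattice `Λ_A` is the unique (up to rotation)
minimizer of the Lennard-Jones energy among Bravais lattices of area `A`. -/
theorem triangular_minimizes_ELJ_of_small_area (A : ℝ) (hA : 0 < A)
    (h : A ^ 3 ≤ π ^ 3 / 120) :
    (∀ L : Set R2, IsBravais L → HasArea L A → ELJ (triLattice A) ≤ ELJ L) ∧
    (∀ L : Set R2, IsBravais L → HasArea L A → ELJ L = ELJ (triLattice A) →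
      IsRotationOf L (triLattice A)) := by
  refine ⟨fun L _ hL => ?_, fun L _ hL heq => ?_⟩
  · rcases dichotomy hA h hL with h1 | h1
    exacts [h1.le, h1.1.le]
  · rcases dichotomy hA h hL with h1 | h1
    exacts [absurd heq h1.ne', h1.2]
end
end

section
/- For every A > 0 and every Bravais lattice L of ℝ² with area A, the Lennard-Jones energy has the integral representation E_LJ(L) = C_A + (π³/A³) ∫_1^∞ (θ_L(α/(2A)) − 1) g_A(α) dα/α, where g_A(α) = (π³/(120A³))(α⁶ + α^{−5}) − (α³ + α^{−2}) and C_A = π⁶/(3600 A⁶) − π³/(6 A³). -/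
/-!
The proof is Riemann's method for the Epstein zeta function. Choose a basis `(u, v)` of `L` realizing
the area `A`; then `‖m u + n v‖² = A q(m, n)`, where `q` is a positive definite binary quadratic form
of determinant one, and `θ_L(α / (2A))` is the theta series `θ(α) = ∑ exp (-π α q)`.

* `formTheta_inv` is the functional equation `θ(1/t) = t θ(t)`. One-dimensional Poisson summation in
  the first variable already suffices: it turns `θ(t)` into `(t a)^(-1/2)` times a double series in
  which `t ↦ 1/t` amounts to swapping the two summation variables, because `q` has determinant one.
* `hasSum_mellin_formTheta` integrates termwise:
  `∫_0^∞ t^k (θ(t) - 1) dt = ∑_{p ≠ 0} k! / (π q(p))^(k+1)` for `k ≥ 1`.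
* `integral_formTheta_fold` splits this integral at `1` and substitutes `t ↦ 1/t` on `(0, 1)`. By the
  functional equation it equals `∫_1^∞ (θ(t) - 1) (t^k + t^(-k-1)) dt + 1/k - 1/(k+1)`.

The energy is the combination of the cases `k = 5` (the sum of `‖x‖^(-12)`) and `k = 2` (the sum of
`‖x‖^(-6)`); the terms `1/k - 1/(k+1)`, that is `1/30` and `1/6`, produce the constant `C_A`.
-/

noncomputable section
open Real

/-! ### Positive definite binary forms and summability -/

/-- The binary quadratic form `a m² + 2 b m n + c n²` on `ℤ²`. -/
def qform (a b c : ℝ) (p : ℤ × ℤ) : ℝ :=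
  a * (p.1 : ℝ) ^ 2 + 2 * b * p.1 * p.2 + c * (p.2 : ℝ) ^ 2

/-- The theta series `∑ exp (-π t q)` over `ℤ²` of the form `q = qform a b c`. -/
def formTheta (a b c t : ℝ) : ℝ := ∑' p : ℤ × ℤ, Real.exp (-π * t * qform a b c p)

/-- A form of determinant one is bounded below by `(m² + n²) / (a + c)`: both `a q - n²` and
`c q - m²` are squares. -/
lemma sq_add_sq_le_qform {a b c : ℝ} (hdet : a * c - b ^ 2 = 1) (p : ℤ × ℤ) :
    (p.1 : ℝ) ^ 2 + (p.2 : ℝ) ^ 2 ≤ (a + c) * qform a b c p := by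
  unfold qform
  nlinarith [sq_nonneg (a * p.1 + b * p.2 : ℝ), sq_nonneg (b * p.1 + c * p.2 : ℝ)]

lemma add_pos_of_det {a b c : ℝ} (ha : 0 < a) (hdet : a * c - b ^ 2 = 1) : 0 < a + c := by
  have : 0 < a * c := by nlinarith [sq_nonneg b]
  have := pos_of_mul_pos_right this ha.le
  linarith

lemma qform_pos {a b c : ℝ} (ha : 0 < a) (hdet : a * c - b ^ 2 = 1) {p : ℤ × ℤ} (hp : p ≠ 0) :
    0 < qform a b c p := by
  have h1 := sq_add_sq_le_qform hdet p
  have h2 : 0 < (p.1 : ℝ) ^ 2 + (p.2 : ℝ) ^ 2 := by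
    have : p.1 ≠ 0 ∨ p.2 ≠ 0 := by
      by_contra! h
      exact hp (Prod.ext h.1 h.2)
    rcases this with h | h
    · have : (p.1 : ℝ) ≠ 0 := by exact_mod_cast h
      positivity
    · have : (p.2 : ℝ) ≠ 0 := by exact_mod_cast h
      positivity
  exact pos_of_mul_pos_right (h2.trans_le h1) (add_pos_of_det ha hdet).le

lemma summable_gauss {r : ℝ} (hr : 0 < r) :
    Summable fun n : ℤ => Real.exp (-π * r * (n : ℝ) ^ 2) := by
  have h := ((summable_jacobiTheta₂_term_iff 0 (r * Complex.I)).2 (by simpa using hr)).norm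
  refine h.congr fun n => ?_
  rw [norm_jacobiTheta₂_term]
  congr 1
  simp
  ring

lemma summable_gauss_prod {r s : ℝ} (hr : 0 < r) (hs : 0 < s) :
    Summable fun p : ℤ × ℤ =>
      Real.exp (-π * r * (p.1 : ℝ) ^ 2) * Real.exp (-π * s * (p.2 : ℝ) ^ 2) :=
  (summable_gauss hr).mul_of_nonneg (summable_gauss hs) (fun _ => (Real.exp_pos _).le)
    (fun _ => (Real.exp_pos _).le)

lemma summable_formTheta {a b c t : ℝ} (ha : 0 < a) (hdet : a * c - b ^ 2 = 1) (ht : 0 < t) :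
    Summable fun p : ℤ × ℤ => Real.exp (-π * t * qform a b c p) := by
  have hac := add_pos_of_det ha hdet
  refine Summable.of_nonneg_of_le (fun _ => (Real.exp_pos _).le) (fun p => ?_)
    (summable_gauss_prod (r := t / (a + c)) (s := t / (a + c)) (by positivity) (by positivity))
  rw [← Real.exp_add, Real.exp_le_exp]
  have h := sq_add_sq_le_qform hdet p
  have h2 : ((p.1 : ℝ) ^ 2 + (p.2 : ℝ) ^ 2) / (a + c) ≤ qform a b c p := by
    rw [div_le_iff₀ hac]; linarith
  have h3 : π * t * (((p.1 : ℝ) ^ 2 + (p.2 : ℝ) ^ 2) / (a + c)) ≤ π * t * qform a b c p := by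
    gcongr
  have h4 : π * t * (((p.1 : ℝ) ^ 2 + (p.2 : ℝ) ^ 2) / (a + c)) =
    π * (t / (a + c)) * (p.1 : ℝ) ^ 2 + π * (t / (a + c)) * (p.2 : ℝ) ^ 2 := by ring
  linarith

/-- Convergence of the Epstein zeta series, by comparison with `∑ ‖p‖^(-2(k+1))` for the sup norm.
The term at `p = 0` is the junk value `0`. -/
lemma summable_inv_qform_pow {a b c : ℝ} (ha : 0 < a) (hdet : a * c - b ^ 2 = 1) {k : ℕ}
    (hk : 1 ≤ k) : Summable fun p : ℤ × ℤ => ((qform a b c p) ^ (k + 1))⁻¹ := by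
  have hac := add_pos_of_det ha hdet
  have h := EisensteinSeries.summable_one_div_norm_rpow (k := ((2 * (k + 1) : ℕ) : ℝ))
    (by exact_mod_cast (by omega : 2 < 2 * (k + 1)))
  rw [← (finTwoArrowEquiv _).symm.summable_iff] at h
  refine Summable.of_nonneg_of_le (fun p => ?_) (fun p => ?_) (h.mul_left ((a + c) ^ (k + 1)))
  · by_cases hp : p = 0
    · simp [hp, qform]
    · have := qform_pos ha hdet hp
      positivity
  · by_cases hp : p = 0
    · simp only [hp, qform]
      simp
      positivity
    have hq := qform_pos ha hdet hp
    set x : Fin 2 → ℤ := (finTwoArrowEquiv ℤ).symm p with hx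
    have hx0 : 0 < ‖x‖ := norm_pos_iff.2 fun h0 => hp (by
      have : p = finTwoArrowEquiv ℤ x := by simp [hx]
      rw [this, h0]; rfl)
    have hle : ‖x‖ ^ 2 ≤ (a + c) * qform a b c p := by
      refine le_trans ?_ (sq_add_sq_le_qform hdet p)
      have : ‖x‖ ≤ √((p.1 : ℝ) ^ 2 + (p.2 : ℝ) ^ 2) := by
        refine (pi_norm_le_iff_of_nonneg (Real.sqrt_nonneg _)).2 fun i => ?_
        rw [Int.norm_eq_abs]
        refine Real.abs_le_sqrt ?_
        fin_cases i
        · simp [hx]; positivity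
        · simp [hx]; positivity
      calc ‖x‖ ^ 2 ≤ √((p.1 : ℝ) ^ 2 + (p.2 : ℝ) ^ 2) ^ 2 := by gcongr
        _ = _ := Real.sq_sqrt (by positivity)
    simp only [Function.comp_apply]
    rw [Real.rpow_neg hx0.le, Real.rpow_natCast, pow_mul, ← div_eq_mul_inv,
      le_div_iff₀ (by positivity), inv_mul_le_iff₀ (by positivity), ← mul_pow]
    gcongr
    linarith

/-! ### Functional equation of the theta series -/

/-- The common double series obtained from the theta series of a form by Poisson summation in the
first variable: `∑ exp (-π k² / (t a)) exp (-π t n² / a) exp (2 π i k n b / a)`. -/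
def dualSum (a b t : ℝ) : ℂ :=
  ∑' p : ℤ × ℤ, Complex.exp (2 * π * Complex.I * p.1 * p.2 * b / a) *
    (Real.exp (-π * (1 / (t * a)) * (p.1 : ℝ) ^ 2) * Real.exp (-π * (t / a) * (p.2 : ℝ) ^ 2) : ℝ)

lemma summable_dualSum {a t : ℝ} (b : ℝ) (ha : 0 < a) (ht : 0 < t) :
    Summable fun p : ℤ × ℤ => Complex.exp (2 * π * Complex.I * p.1 * p.2 * b / a) *
    (Real.exp (-π * (1 / (t * a)) * (p.1 : ℝ) ^ 2) *
      Real.exp (-π * (t / a) * (p.2 : ℝ) ^ 2) : ℝ) := by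
  refine Summable.of_norm ((summable_gauss_prod (r := 1 / (t * a)) (s := t / a)
    (by positivity) (by positivity)).congr fun p => ?_)
  rw [norm_mul, Complex.norm_real, Real.norm_of_nonneg (by positivity)]
  have : (2 * π * Complex.I * p.1 * p.2 * b / a : ℂ) =
    ((2 * π * p.1 * p.2 * b / a : ℝ) : ℂ) * Complex.I := by push_cast; ring
  rw [this, Complex.norm_exp_ofReal_mul_I, one_mul]

/-- Replacing `t` by `1/t` only interchanges the roles of the two summation variables. -/
lemma dualSum_inv {a t : ℝ} (b : ℝ) (ht : 0 < t) : dualSum a b (1 / t) = dualSum a b t := by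
  unfold dualSum
  rw [← (Equiv.prodComm ℤ ℤ).tsum_eq]
  refine tsum_congr fun p => ?_
  simp only [Equiv.prodComm_apply, Prod.fst_swap, Prod.snd_swap]
  congr 1
  · congr 1; ring
  · rw [mul_comm]
    congr 4 <;> field_simp

lemma tsum_prod_right {f : ℤ × ℤ → ℂ} (hf : Summable f) :
    ∑' p, f p = ∑' n, ∑' m, f (m, n) := by
  rw [← (Equiv.prodComm ℤ ℤ).tsum_eq]
  exact ((Equiv.prodComm ℤ ℤ).summable_iff.2 hf).tsum_prod

/-- Poisson summation in the first variable. As `a c - b² = 1`, what remains of the form in the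
second variable after completing the square is `n² / a`. -/
lemma formTheta_eq_dualSum {a b c t : ℝ} (ha : 0 < a) (hdet : a * c - b ^ 2 = 1) (ht : 0 < t) :
    (formTheta a b c t : ℂ) = (1 / √(t * a) : ℝ) * dualSum a b t := by
  have hta : 0 < t * a := by positivity
  have hsum := summable_formTheta ha hdet ht
  have hac : (a : ℂ) ≠ 0 := by exact_mod_cast ha.ne'
  have htc : (t : ℂ) ≠ 0 := by exact_mod_cast ht.ne'
  unfold formTheta dualSum
  rw [Complex.ofReal_tsum, tsum_prod_right (by exact_mod_cast hsum),
    tsum_prod_right (summable_dualSum b ha ht), ← tsum_mul_left]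
  refine tsum_congr fun n => ?_
  have h := Complex.tsum_exp_neg_quadratic (a := ((t * a : ℝ) : ℂ)) (by simpa using hta)
    (-(t * b * n : ℝ) : ℂ)
  have hc : (1 : ℂ) / ((t * a : ℝ) : ℂ) ^ (1 / 2 : ℂ) = (1 / √(t * a) : ℝ) := by
    rw [Real.sqrt_eq_rpow, Complex.ofReal_div, Complex.ofReal_cpow hta.le]
    norm_num
  rw [hc] at h
  -- `h` transforms the sum over `m`; restore the factor of the summand depending only on `n`.
  have h2 := congrArg (fun z => Complex.exp (-π * t * c * n ^ 2) * z) h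
  rw [← tsum_mul_left, mul_left_comm, ← tsum_mul_left] at h2
  have hdet' : (c : ℂ) = (1 + b ^ 2) / a := by
    rw [eq_div_iff hac]; exact_mod_cast (by linarith : c * a = 1 + b ^ 2)
  refine Eq.trans (tsum_congr fun m => ?_)
    (h2.trans (congrArg (((1 / √(t * a) : ℝ) : ℂ) * ·) (tsum_congr fun m => ?_)))
  · rw [← Complex.exp_add]
    push_cast [qform]
    congr 1; ring
  · push_cast
    simp only [← Complex.exp_add]
    congr 1
    rw [hdet']
    field_simp
    ring_nf
    simp only [Complex.I_sq]
    ring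

/-- The functional equation `θ(1/t) = t θ(t)` of the theta series of a form of determinant one. -/
lemma formTheta_inv {a b c t : ℝ} (ha : 0 < a) (hdet : a * c - b ^ 2 = 1) (ht : 0 < t) :
    formTheta a b c (1 / t) = t * formTheta a b c t := by
  have h1 := formTheta_eq_dualSum ha hdet ht
  have h2 := formTheta_eq_dualSum ha hdet (one_div_pos.2 ht)
  rw [dualSum_inv b ht] at h2
  have h3 : 1 / √(1 / t * a) = t * (1 / √(t * a)) := by
    have : t * a = t ^ 2 * (1 / t * a) := by field_simp
    rw [this, Real.sqrt_mul (sq_nonneg t), Real.sqrt_sq ht.le]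
    field_simp
  rw [h3, Complex.ofReal_mul, mul_assoc, ← h1] at h2
  exact_mod_cast h2

/-! ### Mellin transform of the theta series -/

open MeasureTheory Set in
lemma integral_pow_mul_exp (k : ℕ) {r : ℝ} (hr : 0 < r) :
    ∫ t in Ioi (0 : ℝ), t ^ k * Real.exp (-(r * t)) = k.factorial / r ^ (k + 1) := by
  have h := Real.integral_rpow_mul_exp_neg_mul_Ioi (a := (k : ℝ) + 1) (by positivity) hr
  rw [Real.Gamma_nat_eq_factorial] at h
  simp only [add_sub_cancel_right, Real.rpow_natCast] at h
  rw [h, show (k : ℝ) + 1 = ((k + 1 : ℕ) : ℝ) by push_cast; rfl, Real.rpow_natCast, one_div,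
    inv_pow, div_eq_mul_inv, mul_comm]

lemma formTheta_sub_one {a b c t : ℝ} (ha : 0 < a) (hdet : a * c - b ^ 2 = 1) (ht : 0 < t) :
    formTheta a b c t - 1 =
      ∑' p : {p : ℤ × ℤ // p ≠ 0}, Real.exp (-π * t * qform a b c p) := by
  have h := (summable_formTheta ha hdet ht).tsum_subtype_add_tsum_subtype_compl {0}
  rw [tsum_singleton (0 : ℤ × ℤ) (fun p => Real.exp (-π * t * qform a b c p))] at h
  have h0 : Real.exp (-π * t * qform a b c 0) = 1 := by simp [qform]
  rw [h0] at h
  unfold formTheta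
  rw [← h, add_sub_cancel_left]
  rfl

open MeasureTheory Set in
/-- Termwise Mellin transform of `θ - 1` at the integer `k + 1`. -/
lemma hasSum_mellin_formTheta {a b c : ℝ} (ha : 0 < a) (hdet : a * c - b ^ 2 = 1) {k : ℕ}
    (hk : 1 ≤ k) :
    HasSum (fun p : {p : ℤ × ℤ // p ≠ 0} => k.factorial / (π * qform a b c p) ^ (k + 1))
      (∫ t in Ioi (0 : ℝ), t ^ k * (formTheta a b c t - 1)) := by
  let F : {p : ℤ × ℤ // p ≠ 0} → ℝ → ℝ := fun p t => t ^ k * Real.exp (-(π * qform a b c p * t))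
  have hq (p : {p : ℤ × ℤ // p ≠ 0}) : 0 < π * qform a b c p :=
    mul_pos pi_pos (qform_pos ha hdet p.2)
  have hF (p) : ∫ t in Ioi (0 : ℝ), F p t = k.factorial / (π * qform a b c p) ^ (k + 1) :=
    integral_pow_mul_exp k (hq p)
  have hFi (p) : Integrable (F p) (volume.restrict (Ioi 0)) := by
    refine Integrable.of_integral_ne_zero ?_
    rw [hF]
    have := hq p
    positivity
  have hnorm (p) : ∫ t in Ioi (0 : ℝ), ‖F p t‖ = k.factorial / (π * qform a b c p) ^ (k + 1) := by
    rw [← hF]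
    refine setIntegral_congr_fun measurableSet_Ioi fun t ht => ?_
    have : 0 < t := ht
    exact Real.norm_of_nonneg (by positivity)
  have hsum : Summable fun p => ∫ t in Ioi (0 : ℝ), ‖F p t‖ := by
    simp only [hnorm]
    refine (((summable_inv_qform_pow ha hdet hk).subtype _).mul_left
      ((k.factorial : ℝ) / π ^ (k + 1))).congr fun p => ?_
    simp only [Function.comp_apply]
    rw [mul_pow, ← div_eq_mul_inv, div_div]
  have h := hasSum_integral_of_summable_integral_norm hFi hsum
  simp only [hF] at h
  have hθ : EqOn (fun t => t ^ k * (formTheta a b c t - 1)) (fun t => ∑' p, F p t) (Ioi 0) := by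
    intro t ht
    simp only [F]
    rw [formTheta_sub_one ha hdet ht, tsum_mul_left]
    congr 1
    refine tsum_congr fun p => ?_
    congr 1; ring
  rwa [← setIntegral_congr_fun measurableSet_Ioi hθ] at h

open MeasureTheory Set in
/-- The Mellin integrand is integrable because its integral is a nonzero sum of positive terms. -/
lemma integrableOn_formTheta {a b c : ℝ} (ha : 0 < a) (hdet : a * c - b ^ 2 = 1) {k : ℕ}
    (hk : 1 ≤ k) : IntegrableOn (fun t => t ^ k * (formTheta a b c t - 1)) (Ioi 0) := by
  refine Integrable.of_integral_ne_zero ?_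
  have h := hasSum_mellin_formTheta ha hdet hk
  rw [← h.tsum_eq]
  have hpos (p : {p : ℤ × ℤ // p ≠ 0}) : 0 < k.factorial / (π * qform a b c p) ^ (k + 1) := by
    have := qform_pos ha hdet p.2
    positivity
  exact (h.summable.tsum_pos (fun p => (hpos p).le) ⟨(1, 0), by simp⟩ (hpos _)).ne'

open MeasureTheory Set in
lemma integral_Ioi_one_inv_pow {n : ℕ} (hn : 2 ≤ n) :
    IntegrableOn (fun t : ℝ => (t ^ n)⁻¹) (Ioi 1) ∧
      ∫ t in Ioi (1 : ℝ), (t ^ n)⁻¹ = 1 / ((n : ℝ) - 1) := by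
  have hn' : (2 : ℝ) ≤ n := by exact_mod_cast hn
  have he : EqOn (fun t : ℝ => t ^ (-(n : ℝ))) (fun t : ℝ => (t ^ n)⁻¹) (Ioi 1) := by
    intro t ht
    have : 0 < t := zero_lt_one.trans ht
    simp only [Real.rpow_neg this.le, Real.rpow_natCast]
  refine ⟨(integrableOn_Ioi_rpow_of_lt (by linarith) one_pos).congr_fun he measurableSet_Ioi, ?_⟩
  rw [← setIntegral_congr_fun measurableSet_Ioi he, integral_Ioi_rpow_of_lt (by linarith) one_pos,
    Real.one_rpow, neg_div, ← div_neg]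
  congr 1; ring

open MeasureTheory Set in
/-- On `(1, ∞)` this integrand is the one of `integrableOn_formTheta` times the bounded factor
`t ^ (-(2 k + 1))`. -/
lemma integrableOn_formTheta_inv {a b c : ℝ} (ha : 0 < a) (hdet : a * c - b ^ 2 = 1) {k : ℕ}
    (hk : 1 ≤ k) :
    IntegrableOn (fun t => (formTheta a b c t - 1) * (t ^ (k + 1))⁻¹) (Ioi 1) := by
  have h := (integrableOn_formTheta ha hdet hk).mono_set (Ioi_subset_Ioi zero_le_one)
  have h' : IntegrableOn (fun t : ℝ => (t ^ (2 * k + 1))⁻¹ *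
      (t ^ k * (formTheta a b c t - 1))) (Ioi 1) := by
    refine h.bdd_mul (c := 1) (by fun_prop) ?_
    refine (ae_restrict_iff' measurableSet_Ioi).2 (.of_forall fun t ht => ?_)
    have : (1 : ℝ) ≤ t := le_of_lt ht
    rw [norm_inv, norm_pow, Real.norm_of_nonneg (by linarith)]
    exact inv_le_one_of_one_le₀ (one_le_pow₀ this)
  refine h'.congr_fun (fun t ht => ?_) measurableSet_Ioi
  have : t ≠ 0 := (zero_lt_one.trans ht).ne'
  simp only
  field_simp
  ring

open MeasureTheory Set in
/-- The substitution `t ↦ 1/t` on `(0, 1)`. -/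
lemma integral_Ioc_zero_one (f : ℝ → ℝ) :
    ∫ t in Ioc (0 : ℝ) 1, f t = ∫ t in Ioi (1 : ℝ), (t ^ 2)⁻¹ * f (1 / t) := by
  rw [integral_Ioc_eq_integral_Ioo]
  have h := integral_comp_rpow_Ioi ((Ioo (0 : ℝ) 1).indicator f) (p := -1) (by norm_num)
  rw [setIntegral_indicator measurableSet_Ioo,
    inter_eq_self_of_subset_right (fun x hx => hx.1)] at h
  rw [← h, ← inter_eq_self_of_subset_right (Ioi_subset_Ioi (zero_le_one (α := ℝ))),
    ← setIntegral_indicator measurableSet_Ioi]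
  refine setIntegral_congr_fun measurableSet_Ioi fun t ht => ?_
  have ht : 0 < t := ht
  simp only [Real.rpow_neg_one, smul_eq_mul]
  by_cases h1 : 1 < t
  · rw [indicator_of_mem (show t⁻¹ ∈ Ioo (0 : ℝ) 1 from ⟨by positivity, inv_lt_one_of_one_lt₀ h1⟩),
      indicator_of_mem (show t ∈ Ioi (1 : ℝ) from h1), one_div]
    congr 1
    norm_num
  · rw [indicator_of_notMem, indicator_of_notMem (show t ∉ Ioi (1 : ℝ) from h1), mul_zero]
    exact fun h2 => h1 ((inv_lt_one₀ ht).1 h2.2)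

open MeasureTheory Set in
/-- Riemann's splitting of the Mellin integral at `1`, folding `(0, 1)` onto `(1, ∞)` by the
functional equation. -/
lemma integral_formTheta_fold {a b c : ℝ} (ha : 0 < a) (hdet : a * c - b ^ 2 = 1) {k : ℕ}
    (hk : 1 ≤ k) :
    ∫ t in Ioi (0 : ℝ), t ^ k * (formTheta a b c t - 1) =
      (∫ t in Ioi (1 : ℝ), (formTheta a b c t - 1) * (t ^ k + (t ^ (k + 1))⁻¹)) +
        (1 / (k : ℝ) - 1 / (k + 1)) := by
  have hi := integrableOn_formTheta ha hdet hk
  have hi1 := hi.mono_set (Ioi_subset_Ioi (zero_le_one (α := ℝ)))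
  have hi2 := integrableOn_formTheta_inv ha hdet hk
  obtain ⟨hj1, hj1'⟩ := integral_Ioi_one_inv_pow (n := k + 1) (by omega)
  obtain ⟨hj2, hj2'⟩ := integral_Ioi_one_inv_pow (n := k + 2) (by omega)
  rw [← Ioc_union_Ioi_eq_Ioi (zero_le_one (α := ℝ)), setIntegral_union
    (Ioc_disjoint_Ioi le_rfl) measurableSet_Ioi (hi.mono_set Ioc_subset_Ioi_self) hi1,
    integral_Ioc_zero_one]
  have e1 : ∫ t in Ioi (1 : ℝ), (t ^ 2)⁻¹ * ((1 / t) ^ k * (formTheta a b c (1 / t) - 1)) =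
      ∫ t in Ioi (1 : ℝ), ((formTheta a b c t - 1) * (t ^ (k + 1))⁻¹ +
        ((t ^ (k + 1))⁻¹ - (t ^ (k + 2))⁻¹)) := by
    refine setIntegral_congr_fun measurableSet_Ioi fun t ht => ?_
    have ht : 0 < t := zero_lt_one.trans ht
    rw [formTheta_inv ha hdet ht, one_div, inv_pow]
    field_simp
    ring
  have e2 : ∫ t in Ioi (1 : ℝ), (formTheta a b c t - 1) * (t ^ k + (t ^ (k + 1))⁻¹) =
      ∫ t in Ioi (1 : ℝ), (t ^ k * (formTheta a b c t - 1) +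
        (formTheta a b c t - 1) * (t ^ (k + 1))⁻¹) := by
    congr 1; ext t; ring
  have e3 := integral_add hi2 (hj1.sub hj2)
  simp only [Pi.sub_apply] at e3
  rw [e1, e2, e3, integral_sub hj1 hj2, integral_add hi1 hi2, hj1', hj2']
  push_cast
  ring

open MeasureTheory Set in
lemma integrableOn_formTheta_fold {a b c : ℝ} (ha : 0 < a) (hdet : a * c - b ^ 2 = 1) {k : ℕ}
    (hk : 1 ≤ k) :
    IntegrableOn (fun t => (formTheta a b c t - 1) * (t ^ k + (t ^ (k + 1))⁻¹)) (Ioi 1) := by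
  have hi1 := (integrableOn_formTheta ha hdet hk).mono_set (Ioi_subset_Ioi (zero_le_one (α := ℝ)))
  refine (hi1.add (integrableOn_formTheta_inv ha hdet hk)).congr_fun (fun t _ => ?_)
    measurableSet_Ioi
  simp only [Pi.add_apply]
  ring

/-! ### Parametrization of the lattice -/

/-- The lattice points `m u + n v`, parametrized by `ℤ²`. -/
def latPt (u v : R2) (p : ℤ × ℤ) : R2 := (p.1 : ℝ) • u + (p.2 : ℝ) • v

lemma latPt_injective {u v : R2} (h : LinearIndependent ℝ ![u, v]) :
    Function.Injective (latPt u v) := by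
  intro p p' hp
  have h' := LinearIndependent.pair_iff.1 h ((p.1 : ℝ) - p'.1) ((p.2 : ℝ) - p'.2) (by
    have := sub_eq_zero.2 hp
    rw [← this]
    unfold latPt
    module)
  exact Prod.ext (by exact_mod_cast sub_eq_zero.1 h'.1) (by exact_mod_cast sub_eq_zero.1 h'.2)

/-- The parametrization of a lattice by `ℤ²`. -/
def latEquiv {L : Set R2} {u v : R2} (h : LatticeBasis L u v) : ℤ × ℤ ≃ L :=
  Equiv.ofBijective (fun p => ⟨latPt u v p, by rw [h.2]; exact ⟨p.1, p.2, rfl⟩⟩) (by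
    refine ⟨fun p p' hp => latPt_injective h.1 (congrArg Subtype.val hp), fun x => ?_⟩
    have hx := h.2.subset x.2
    obtain ⟨m, n, hmn⟩ := hx
    exact ⟨(m, n), Subtype.ext hmn.symm⟩)

/-- The parametrization of the nonzero lattice vectors by the nonzero elements of `ℤ²`. -/
def latEquivNe {L : Set R2} {u v : R2} (h : LatticeBasis L u v) :
    {p : ℤ × ℤ // p ≠ 0} ≃ {x : R2 // x ∈ L ∧ x ≠ 0} :=
  Equiv.ofBijective (fun p => ⟨latPt u v p, (latEquiv h p).2, fun h0 =>
      p.2 (latPt_injective h.1 (h0.trans (by simp [latPt])))⟩) (by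
    refine ⟨fun p p' hp => Subtype.ext (latPt_injective h.1 (congrArg Subtype.val hp)),
      fun x => ?_⟩
    have hx := h.2.subset x.2.1
    obtain ⟨m, n, hmn⟩ := hx
    refine ⟨⟨(m, n), fun h0 => x.2.2 ?_⟩, Subtype.ext hmn.symm⟩
    rw [Prod.ext_iff] at h0
    simp only [Prod.fst_zero, Prod.snd_zero] at h0
    rw [hmn, h0.1, h0.2]
    simp)

/-- The squared norm on the lattice is `A` times the Gram form of the basis rescaled by `1/A`. -/
lemma norm_latPt_sq (u v : R2) {A : ℝ} (hA : A ≠ 0) (p : ℤ × ℤ) :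
    ‖latPt u v p‖ ^ 2 =
      A * qform (‖u‖ ^ 2 / A) (inner ℝ u v / A) (‖v‖ ^ 2 / A) p := by
  unfold latPt qform
  rw [norm_add_sq_real, norm_smul, norm_smul, inner_smul_left, inner_smul_right, mul_pow, mul_pow]
  simp only [Real.norm_eq_abs, sq_abs, conj_trivial]
  field_simp

/-- The Gram matrix of the basis has determinant `A²`, so the rescaled form has determinant one. -/
lemma det_eq_one {u v : R2} {A : ℝ} (hA : A ≠ 0)
    (h : ‖u‖ * ‖v‖ * |Real.sin (InnerProductGeometry.angle u v)| = A) :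
    ‖u‖ ^ 2 / A * (‖v‖ ^ 2 / A) - (inner ℝ u v / A) ^ 2 = 1 := by
  have h1 := InnerProductGeometry.cos_angle_mul_norm_mul_norm u v
  have h2 := Real.sin_sq_add_cos_sq (InnerProductGeometry.angle u v)
  have h3 : A ^ 2 = ‖u‖ ^ 2 * ‖v‖ ^ 2 * Real.sin (InnerProductGeometry.angle u v) ^ 2 := by
    rw [← h, mul_pow, mul_pow, sq_abs]
  rw [← h1]
  field_simp
  rw [h3]
  linear_combination -‖u‖ ^ 2 * ‖v‖ ^ 2 * h2

lemma VLJ_eq {r s : ℝ} (h : r ^ 2 = s) : VLJ r = (s ^ 6)⁻¹ - 2 * (s ^ 3)⁻¹ := by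
  subst h
  unfold VLJ
  rw [zpow_neg, zpow_neg, ← pow_mul, ← pow_mul]
  rfl

/-! ### The Lennard-Jones energy -/

/-- Integral representation of the Lennard-Jones energy of a lattice of area `A`:
`E_LJ(L) = C_A + (π³/A³) ∫_1^∞ (θ_L(α/(2A)) − 1) g_A(α) dα/α`. -/
theorem ELJ_integral_representation (A : ℝ) (hA : 0 < A)
    (L : Set R2) (hL : IsBravais L) (harea : HasArea L A) :
    ELJ L = (π ^ 6 / (3600 * A ^ 6) - π ^ 3 / (6 * A ^ 3)) +
      π ^ 3 / A ^ 3 *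
        ∫ α in Set.Ioi (1 : ℝ),
          (thetaL L (α / (2 * A)) - 1) *
            (π ^ 3 / (120 * A ^ 3) * (α ^ 6 + α ^ (-5 : ℤ)) - (α ^ 3 + α ^ (-2 : ℤ))) / α := by
  obtain ⟨u, v, hb, hsin⟩ := harea
  have hdet := det_eq_one hA.ne' hsin
  have hu : u ≠ 0 := by simpa using hb.1.ne_zero 0
  have ha : 0 < ‖u‖ ^ 2 / A := by
    have := norm_pos_iff.2 hu
    positivity
  have hnorm := norm_latPt_sq u v hA.ne'
  set a := ‖u‖ ^ 2 / A
  set b := inner ℝ u v / A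
  set c := ‖v‖ ^ 2 / A
  have hθ (α : ℝ) : thetaL L (α / (2 * A)) = formTheta a b c α := by
    unfold thetaL formTheta
    rw [← (latEquiv hb).tsum_eq]
    refine tsum_congr fun p => ?_
    change Real.exp (-2 * π * (α / (2 * A)) * ‖latPt u v p‖ ^ 2) = _
    rw [hnorm]
    congr 1
    field_simp
  have h5 := hasSum_mellin_formTheta ha hdet (k := 5) (by norm_num)
  have h2 := hasSum_mellin_formTheta ha hdet (k := 2) (by norm_num)
  rw [integral_formTheta_fold ha hdet (by norm_num)] at h5 h2
  have i5 := integrableOn_formTheta_fold ha hdet (k := 5) (by norm_num)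
  have i2 := integrableOn_formTheta_fold ha hdet (k := 2) (by norm_num)
  -- The coefficients come from `A^(-s) q^(-s) = (π / A)^s / (s-1)! * ((s-1)! / (π q)^s)` for
  -- `s = 6` and `s = 3`, the latter carrying the factor `2` of the potential.
  have hE : ELJ L = ∑' p : {p : ℤ × ℤ // p ≠ 0},
      (π ^ 6 / (120 * A ^ 6) * ((Nat.factorial 5 : ℝ) / (π * qform a b c p) ^ (5 + 1)) -
        π ^ 3 / A ^ 3 * ((Nat.factorial 2 : ℝ) / (π * qform a b c p) ^ (2 + 1))) := by
    unfold ELJ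
    rw [← (latEquivNe hb).tsum_eq]
    refine tsum_congr fun p => ?_
    change VLJ ‖latPt u v p‖ = _
    have hq := qform_pos ha hdet p.2
    rw [VLJ_eq (hnorm p)]
    norm_num [Nat.factorial]
    field_simp
  rw [hE, ((h5.mul_left _).sub (h2.mul_left _)).tsum_eq]
  have hint : ∫ α in Set.Ioi (1 : ℝ), (thetaL L (α / (2 * A)) - 1) *
      (π ^ 3 / (120 * A ^ 3) * (α ^ 6 + α ^ (-5 : ℤ)) - (α ^ 3 + α ^ (-2 : ℤ))) / α =
      ∫ α in Set.Ioi (1 : ℝ),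
        (π ^ 3 / (120 * A ^ 3) * ((formTheta a b c α - 1) * (α ^ 5 + (α ^ (5 + 1))⁻¹)) -
          (formTheta a b c α - 1) * (α ^ 2 + (α ^ (2 + 1))⁻¹)) := by
    refine MeasureTheory.setIntegral_congr_fun measurableSet_Ioi fun α hα => ?_
    have : 0 < α := zero_lt_one.trans hα
    simp only [hθ, zpow_neg]
    norm_cast
    field_simp
    ring
  rw [hint, MeasureTheory.integral_sub (i5.const_mul _) i2, MeasureTheory.integral_const_mul]
  norm_num
  field_simp
  ring
end
end

section
/- For A > 0, the triangular lattice Λ_A satisfies E_LJ(Λ_A) ≤ E_LJ(L) for every Bravais lattice L of ℝ² with area A if and only if A ≤ inf{ ((ζ_L(12) − ζ_{Λ_1}(12)) / (2(ζ_L(6) − ζ_{Λ_1}(6))))^{1/3} : L a Bravais lattice of ℝ² with |L| = 1 that is not the image of Λ_1 under a linear isometry of ℝ² }. -/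
/-!
Rescaling a lattice of area `A` to area one, and writing `D_s(L) = ζ_L(s) - ζ_{Λ₁}(s)`, the inequality
between the energies of `Λ_A` and `√A • L` becomes `2 A³ D₆(L) ≤ D₁₂(L)` (`energy_le_iff`). When
`D₆(L) > 0` and `D₁₂(L) ≥ 0` this says that `A` is at most the ratio occurring in the infimum
(`le_ratio_iff`). The theorem therefore rests on the fact that `Λ₁` is, up to isometry, the only minimizer
of `ζ_L(6)` and of `ζ_L(12)` among lattices of area one (`zeta_lt`).

The proof of `zeta_lt` is as follows. Take a Lagrange-reduced basis of `L`, with Gram form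
`Q = a m² + 2b mn + c n²`, where `ac - b² = 1`, `-a ≤ 2b ≤ 0` and `a ≤ c`, and compare `Q` with the
hexagonal form `N = m² - mn + n²`, the Gram form of `Λ₁` being `(2/√3) N`.

* If `a ≤ 0.73`, the two shortest vectors alone contribute more to the zeta function of `L` than
  the whole zeta function of `Λ₁` (`cusp_lt`), the latter being bounded by summing over square shells.
* Otherwise `a + b + c ≤ 2.1`, and the comparison holds orbit by orbit for the automorphism of order three
  of `N` (`orbit_lt`). The values `x, y, z` of `√3 Q / (2N)` along such an orbit satisfy
  `x + y + z = 3C` with `C = (a + b + c) / √3` and `2(xy + yz + zx) - x² - y² - z² = 3`, whatever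
  the orbit. For `1 < C ≤ 1.2125` these relations force `x⁻³ + y⁻³ + z⁻³ > 3` (`core`), by
  minorizing `x⁻³` by a quadratic polynomial tangent to it at `1`, and the same with sixth powers by
  convexity.
-/

noncomputable section
open Real

/-! ### An inequality for three positive numbers -/

/-- The quadratic `1 - 3 (x - 1) + ν (x - 1)²` is tangent to `x⁻³` at `1`; `ν = 6 / (3 C - 1)` is the
value for which its sum over `x, y, z` in `core` is exactly `3`. The hypothesis `h` is the
discriminant condition on the two other numbers, and gives `x + 1 / x ≤ 2 C`, hence `x < 1.9`. -/
lemma core_le {C x : ℝ} (hx : 0 < x) (hC1 : 1 ≤ C) (hC2 : C ≤ 1.2125)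
    (h : x ^ 2 - 2 * C * x + 1 ≤ 0) :
    1 - 3 * (x - 1) + 6 / (3 * C - 1) * (x - 1) ^ 2 ≤ x⁻¹ ^ 3 ∧
      (x ≠ 1 → 1 - 3 * (x - 1) + 6 / (3 * C - 1) * (x - 1) ^ 2 < x⁻¹ ^ 3) := by
  have hx2 : x < 1.9 := by
    by_contra! hh
    nlinarith [mul_le_mul_of_nonneg_right hC2 hx.le]
  have hC : 0 < 3 * C - 1 := by linarith
  -- by `h2` below, this reduces to a polynomial inequality in `x` alone, valid for `x < 1.9`
  have hpoly : 6 * x ^ 3 < (3 * x ^ 2 + 2 * x + 1) * (3 * C - 1) := by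
    have h1 : 3 * x ^ 4 < 8 * x ^ 2 + 4 * x + 3 := by
      nlinarith [mul_pos hx hx, mul_pos (mul_pos hx hx) hx, mul_pos hx (sub_pos.2 hx2),
        mul_pos (mul_pos hx hx) (sub_pos.2 hx2), mul_pos (mul_pos (mul_pos hx hx) hx) (sub_pos.2 hx2)]
    have h2 : 3 * x ^ 2 - 2 * x + 3 ≤ 2 * x * (3 * C - 1) := by linarith
    have h3 : 0 < 3 * x ^ 2 + 2 * x + 1 := by positivity
    have h4 := mul_le_mul_of_nonneg_left h2 h3.le
    have h5 : (2 * x) * (6 * x ^ 3) < (2 * x) * ((3 * x ^ 2 + 2 * x + 1) * (3 * C - 1)) := by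
      nlinarith
    exact lt_of_mul_lt_mul_left h5 (by positivity)
  have key : x⁻¹ ^ 3 - (1 - 3 * (x - 1) + 6 / (3 * C - 1) * (x - 1) ^ 2) =
      (x - 1) ^ 2 * ((3 * x ^ 2 + 2 * x + 1) * (3 * C - 1) - 6 * x ^ 3) /
        (x ^ 3 * (3 * C - 1)) := by
    field_simp
    ring
  have h6 : 0 < (3 * x ^ 2 + 2 * x + 1) * (3 * C - 1) - 6 * x ^ 3 := by linarith
  constructor
  · have : 0 ≤ x⁻¹ ^ 3 - (1 - 3 * (x - 1) + 6 / (3 * C - 1) * (x - 1) ^ 2) := by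
      rw [key]; positivity
    linarith
  · intro h1
    have h1' : x - 1 ≠ 0 := sub_ne_zero.2 h1
    have : 0 < x⁻¹ ^ 3 - (1 - 3 * (x - 1) + 6 / (3 * C - 1) * (x - 1) ^ 2) := by
      rw [key]; positivity
    linarith

/-- The relations `hs` and `hq` say that `x, y, z` have the form `C + √(C² - 1) cos (ψ + 2πj/3)`,
`j = 0, 1, 2`. -/
lemma core {C x y z : ℝ} (hx : 0 < x) (hy : 0 < y) (hz : 0 < z) (hC1 : 1 < C) (hC2 : C ≤ 1.2125)
    (hs : x + y + z = 3 * C) (hq : 2 * (x * y + y * z + z * x) - x ^ 2 - y ^ 2 - z ^ 2 = 3) :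
    3 < x⁻¹ ^ 3 + y⁻¹ ^ 3 + z⁻¹ ^ 3 := by
  obtain ⟨hx1, hx2⟩ := core_le hx hC1.le hC2 (by nlinarith [sq_nonneg (y - z)])
  obtain ⟨hy1, hy2⟩ := core_le hy hC1.le hC2 (by nlinarith [sq_nonneg (x - z)])
  obtain ⟨hz1, hz2⟩ := core_le hz hC1.le hC2 (by nlinarith [sq_nonneg (y - x)])
  have hC : 0 < 3 * C - 1 := by linarith
  have hsum : (1 - 3 * (x - 1) + 6 / (3 * C - 1) * (x - 1) ^ 2) +
      (1 - 3 * (y - 1) + 6 / (3 * C - 1) * (y - 1) ^ 2) +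
      (1 - 3 * (z - 1) + 6 / (3 * C - 1) * (z - 1) ^ 2) = 3 := by
    have h2 : (x - 1) ^ 2 + (y - 1) ^ 2 + (z - 1) ^ 2 = (3 * C - 1) * (3 * (C - 1) / 2) := by
      have : z = 3 * C - x - y := by linarith
      subst this
      nlinarith
    have : 6 / (3 * C - 1) * ((x - 1) ^ 2 + (y - 1) ^ 2 + (z - 1) ^ 2) = 9 * (C - 1) := by
      rw [h2]; field_simp; ring
    linear_combination this - 3 * hs
  by_cases h : x = 1
  · by_cases h' : y = 1
    · have : z ≠ 1 := by rintro rfl; subst h h'; linarith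
      have := hz2 this
      linarith
    · have := hy2 h'
      linarith
  · have := hx2 h
    linarith

/-! ### The hexagonal form -/

/-- The hexagonal form `m² - mn + n²` at `p = (m, n)`. Since `0⁻¹ = 0`, the sum of `(hexN p)⁻¹ ^ k` over
all of `ℤ × ℤ` is the sum over nonzero `p`. -/
def hexN (p : ℤ × ℤ) : ℝ := (p.1 : ℝ) ^ 2 - p.1 * p.2 + (p.2 : ℝ) ^ 2

lemma hexN_nonneg (p : ℤ × ℤ) : 0 ≤ hexN p := by
  unfold hexN; nlinarith [sq_nonneg ((p.1 : ℝ) - p.2), sq_nonneg (p.1 : ℝ), sq_nonneg (p.2 : ℝ)]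

lemma hexN_eq_zero_or (p : ℤ × ℤ) : hexN p = 0 ∨ 1 ≤ hexN p := by
  have h : hexN p = ((p.1 ^ 2 - p.1 * p.2 + p.2 ^ 2 : ℤ) : ℝ) := by unfold hexN; push_cast; ring
  have h0 := hexN_nonneg p
  rw [h] at h0 ⊢
  have h0' : 0 ≤ (p.1 ^ 2 - p.1 * p.2 + p.2 ^ 2 : ℤ) := by exact_mod_cast h0
  rcases h0'.eq_or_lt with h1 | h1
  · left; rw [← h1]; simp
  · right; exact_mod_cast h1

lemma hexN_lower {p : ℤ × ℤ} {k : ℕ} (h : max p.1.natAbs p.2.natAbs = k) :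
    3 / 4 * (k : ℝ) ^ 2 ≤ hexN p := by
  have key : ((k : ℝ)) ^ 2 = (p.1 : ℝ) ^ 2 ∨ ((k : ℝ)) ^ 2 = (p.2 : ℝ) ^ 2 := by
    rcases max_choice p.1.natAbs p.2.natAbs with h1 | h1 <;> rw [h] at h1
    · left; rw [h1, Nat.cast_natAbs]; simp
    · right; rw [h1, Nat.cast_natAbs]; simp
  unfold hexN
  rcases key with h1 | h1 <;> rw [h1]
  · nlinarith [sq_nonneg ((p.1 : ℝ) - 2 * p.2)]
  · nlinarith [sq_nonneg ((p.2 : ℝ) - 2 * p.1)]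

/-- Each of the `8 k` points of the shell `max |m| |n| = k` has `hexN p ≥ 3 k² / 4`; the resulting bound
`512 / (27 k⁵)` is weakened to a telescoping one. -/
lemma box_bound (k : ℕ) (hk : 2 ≤ k) :
    ∑ p ∈ (Finset.box k : Finset (ℤ × ℤ)), (hexN p)⁻¹ ^ 3 ≤
      64 / 27 * (1 / (((k : ℝ) - 1) * k) - 1 / (k * (k + 1))) := by
  have hk' : (2 : ℝ) ≤ k := by exact_mod_cast hk
  have h1 : ∀ p ∈ (Finset.box k : Finset (ℤ × ℤ)), (hexN p)⁻¹ ^ 3 ≤ (3 / 4 * (k : ℝ) ^ 2)⁻¹ ^ 3 := by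
    intro p hp
    rw [Int.mem_box] at hp
    have := hexN_lower hp
    have h00 := hexN_nonneg p
    have h0 : (0 : ℝ) < 3 / 4 * (k : ℝ) ^ 2 := by positivity
    gcongr
  refine (Finset.sum_le_card_nsmul _ _ _ h1).trans ?_
  rw [Int.card_box (by omega), nsmul_eq_mul]
  have hk1 : (0 : ℝ) < k - 1 := by linarith
  have e1 : ((8 * k : ℕ) : ℝ) * (3 / 4 * (k : ℝ) ^ 2)⁻¹ ^ 3 = 512 / 27 * (1 / (k : ℝ) ^ 5) := by
    push_cast; field_simp; norm_num
  have e2 : 64 / 27 * (1 / (((k : ℝ) - 1) * k) - 1 / (k * (k + 1))) =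
      512 / 27 * (1 / (4 * (((k : ℝ) - 1) * k * (k + 1)))) := by
    field_simp; ring
  rw [e1, e2]
  gcongr
  have : (k : ℝ) ^ 5 = k ^ 3 * k ^ 2 := by ring
  rw [this]
  nlinarith [mul_nonneg (pow_nonneg (by linarith : (0 : ℝ) ≤ k) 3) (by nlinarith : (0 : ℝ) ≤ (k:ℝ) ^ 2 - 4)]

lemma box_one_bound :
    ∑ p ∈ (Finset.box 1 : Finset (ℤ × ℤ)), (hexN p)⁻¹ ^ 3 = 6 + 2 / 27 := by
  have : (Finset.box 1 : Finset (ℤ × ℤ)) =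
      {(1, 0), (-1, 0), (0, 1), (0, -1), (1, 1), (-1, -1), (1, -1), (-1, 1)} := by decide
  rw [this]
  simp [hexN, Finset.sum_insert]
  norm_num

lemma box_sum_bound (K : ℕ) :
    ∑ k ∈ Finset.range (K + 2), ∑ p ∈ (Finset.box k : Finset (ℤ × ℤ)), (hexN p)⁻¹ ^ 3 ≤
      6 + 2 / 27 + 64 / 27 * (1 / 2 - 1 / (((K : ℝ) + 1) * (K + 2))) := by
  induction K with
  | zero =>
    rw [Finset.sum_range_succ, Finset.sum_range_succ, box_one_bound]
    simp [hexN]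
  | succ K ih =>
    rw [Finset.sum_range_succ]
    have := box_bound (K + 1 + 1) (by omega)
    push_cast at this ⊢
    have e : (K : ℝ) + 1 + 1 - 1 = K + 1 := by ring
    have e' : (K : ℝ) + 1 + 1 = K + 2 := by ring
    have e'' : (K : ℝ) + 1 + 2 = K + 2 + 1 := by ring
    rw [e, e'] at this
    rw [e', e'']
    linarith

/-- The exact value of the full sum is about `6.376`. -/
lemma hex_sum_le (s : Finset (ℤ × ℤ)) : ∑ p ∈ s, (hexN p)⁻¹ ^ 3 ≤ 7.26 := by
  let h : ℤ × ℤ → ℕ := fun p => max p.1.natAbs p.2.natAbs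
  let K := s.sup h
  have hm : ∀ p ∈ s, h p ∈ Finset.range (K + 2) := fun p hp => by
    have : h p ≤ K := Finset.le_sup hp
    simp only [Finset.mem_range]; omega
  have hle : ∑ p ∈ s, (hexN p)⁻¹ ^ 3 ≤
      ∑ k ∈ Finset.range (K + 2), ∑ p ∈ (Finset.box k : Finset (ℤ × ℤ)), (hexN p)⁻¹ ^ 3 := by
    rw [← Finset.sum_fiberwise_of_maps_to hm]
    refine Finset.sum_le_sum fun k _ => Finset.sum_le_sum_of_subset_of_nonneg ?_ ?_
    · intro p hp
      rw [Int.mem_box]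
      exact (Finset.mem_filter.1 hp).2
    · intro p _ _
      have := hexN_nonneg p
      positivity
  refine hle.trans ((box_sum_bound K).trans ?_)
  have : (0 : ℝ) ≤ 1 / (((K : ℝ) + 1) * (K + 2)) := by positivity
  norm_num
  norm_num at this
  linarith

lemma hex_summable3 : Summable fun p : ℤ × ℤ => (hexN p)⁻¹ ^ 3 :=
  summable_of_sum_le (fun p => by have := hexN_nonneg p; positivity) hex_sum_le

lemma hexInv_pow_le (p : ℤ × ℤ) {k : ℕ} (hk : 3 ≤ k) : (hexN p)⁻¹ ^ k ≤ (hexN p)⁻¹ ^ 3 := by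
  have h0 := hexN_nonneg p
  refine pow_le_pow_of_le_one (by positivity) ?_ hk
  rcases hexN_eq_zero_or p with h | h
  · simp [h]
  · exact inv_le_one_of_one_le₀ h

lemma hex_summable {k : ℕ} (hk : 3 ≤ k) : Summable fun p : ℤ × ℤ => (hexN p)⁻¹ ^ k :=
  hex_summable3.of_nonneg_of_le (fun p => by have := hexN_nonneg p; positivity)
    fun p => hexInv_pow_le p hk

lemma hex_tsum_le {k : ℕ} (hk : 3 ≤ k) : ∑' p : ℤ × ℤ, (hexN p)⁻¹ ^ k ≤ 7.26 :=
  ((hex_summable hk).tsum_le_tsum (fun p => hexInv_pow_le p hk) hex_summable3).trans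
    (hex_summable3.tsum_le_of_sum_le hex_sum_le)

/-! ### Comparison of reduced forms with the hexagonal form -/

/-- The binary quadratic form `a m² + 2 b m n + c n²` evaluated at `p = (m, n)`. -/
def qf (a b c : ℝ) (p : ℤ × ℤ) : ℝ := a * (p.1 : ℝ) ^ 2 + 2 * b * p.1 * p.2 + c * (p.2 : ℝ) ^ 2

section
variable {a b c : ℝ}

/-- Comes from `(a + c) Q = (am + bn)² + (bm + cn)² + m² + n²` and `N ≤ 3/2 (m² + n²)`. -/
lemma hexN_le_qf (hD : a * c - b ^ 2 = 1) (p : ℤ × ℤ) :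
    hexN p ≤ 3 / 2 * (a + c) * qf a b c p := by
  have hc : (a + c) * qf a b c p = (a * p.1 + b * p.2) ^ 2 + (b * p.1 + c * p.2) ^ 2 +
      ((p.1 : ℝ) ^ 2 + (p.2 : ℝ) ^ 2) := by
    unfold qf; linear_combination ((p.1 : ℝ) ^ 2 + (p.2 : ℝ) ^ 2) * hD
  rw [mul_assoc, hc]
  unfold hexN
  nlinarith [sq_nonneg ((p.1 : ℝ) + p.2), sq_nonneg (a * p.1 + b * p.2),
    sq_nonneg (b * p.1 + c * p.2)]

lemma c_pos (ha : 0 < a) (hD : a * c - b ^ 2 = 1) : 0 < c := by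
  have : 0 < a * c := by nlinarith [sq_nonneg b]
  exact pos_of_mul_pos_right this ha.le

lemma qf_pos (ha : 0 < a) (hD : a * c - b ^ 2 = 1) {p : ℤ × ℤ} (h : 0 < hexN p) :
    0 < qf a b c p := by
  have h1 := h.trans_le (hexN_le_qf hD p)
  have hc := c_pos ha hD
  exact pos_of_mul_pos_right h1 (by positivity)

lemma eq_zero_of_hexN {p : ℤ × ℤ} (h : hexN p = 0) : p = 0 := by
  unfold hexN at h
  have h1 : (p.1 : ℝ) = 0 := by
    nlinarith [sq_nonneg ((p.1 : ℝ) - 2 * p.2), sq_nonneg (p.1 : ℝ)]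
  have h2 : (p.2 : ℝ) = 0 := by
    nlinarith [sq_nonneg ((p.2 : ℝ) - 2 * p.1), sq_nonneg (p.2 : ℝ)]
  ext
  · exact_mod_cast h1
  · exact_mod_cast h2

lemma hexN_pos {p : ℤ × ℤ} (h : p ≠ 0) : 0 < hexN p :=
  (hexN_nonneg p).lt_of_ne fun h' => h (eq_zero_of_hexN h'.symm)

lemma qf_nonneg (ha : 0 < a) (hD : a * c - b ^ 2 = 1) (p : ℤ × ℤ) : 0 ≤ qf a b c p := by
  by_cases h : p = 0
  · subst h; simp [qf]
  · exact (qf_pos ha hD (hexN_pos h)).le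

lemma qf_summable (ha : 0 < a) (hD : a * c - b ^ 2 = 1) {k : ℕ} (hk : 3 ≤ k) :
    Summable fun p : ℤ × ℤ => (qf a b c p)⁻¹ ^ k := by
  refine ((hex_summable hk).mul_left ((3 / 2 * (a + c)) ^ k)).of_nonneg_of_le
    (fun p => by have := qf_nonneg ha hD p; positivity) fun p => ?_
  rw [← mul_pow]
  have h0 := qf_nonneg ha hD p
  by_cases h : p = 0
  · subst h; simp [qf, hexN]
  · have h1 := hexN_pos h
    have h2 := qf_pos ha hD h1
    gcongr
    rw [inv_le_iff_one_le_mul₀ h2, mul_right_comm, ← div_eq_mul_inv, one_le_div h1]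
    exact hexN_le_qf hD p

/-- The automorphism of order three of the hexagonal form. -/
def rot : (ℤ × ℤ) ≃ (ℤ × ℤ) where
  toFun p := (-p.2, p.1 - p.2)
  invFun p := (p.2 - p.1, -p.1)
  left_inv p := by ext <;> simp
  right_inv p := by ext <;> simp

lemma hexN_rot (p : ℤ × ℤ) : hexN (rot p) = hexN p := by
  simp [hexN, rot]; ring

/-- The comparison with `(2/√3) N` holds on each single orbit of `rot`. -/
lemma orbit_lt (ha : 0 < a) (hD : a * c - b ^ 2 = 1)
    (h1 : √3 < a + b + c) (h2 : a + b + c ≤ 2.1) {k : ℕ} (hk : k = 3 ∨ k = 6) {p : ℤ × ℤ}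
    (hp : p ≠ 0) :
    3 * ((√3 / 2) ^ k * (hexN p)⁻¹ ^ k) <
      (qf a b c p)⁻¹ ^ k + (qf a b c (rot p))⁻¹ ^ k + (qf a b c (rot (rot p)))⁻¹ ^ k := by
  have hN := hexN_pos hp
  have q1 := qf_pos ha hD hN
  have q2 : 0 < qf a b c (rot p) := qf_pos ha hD (by rwa [hexN_rot])
  have q3 : 0 < qf a b c (rot (rot p)) := qf_pos ha hD (by rwa [hexN_rot, hexN_rot])
  have h3 : (0 : ℝ) < √3 := by positivity
  have h33 : √3 ^ 2 = 3 := Real.sq_sqrt (by norm_num)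
  set N := hexN p with hNdef
  set r : ℝ := √3 / (2 * N) with hr
  have hrpos : 0 < r := by positivity
  have hrN : r * N = √3 / 2 := by rw [hr]; field_simp
  -- the first two symmetric functions along the orbit depend on `p` through `N` only
  have hsum : qf a b c p + qf a b c (rot p) + qf a b c (rot (rot p)) = 2 * N * (a + b + c) := by
    simp [hNdef, hexN, qf, rot]; ring
  have hquad : 2 * (qf a b c p * qf a b c (rot p) + qf a b c (rot p) * qf a b c (rot (rot p)) +
      qf a b c (rot (rot p)) * qf a b c p) - qf a b c p ^ 2 - qf a b c (rot p) ^ 2 -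
      qf a b c (rot (rot p)) ^ 2 = 4 * N ^ 2 := by
    have : 2 * (qf a b c p * qf a b c (rot p) + qf a b c (rot p) * qf a b c (rot (rot p)) +
      qf a b c (rot (rot p)) * qf a b c p) - qf a b c p ^ 2 - qf a b c (rot p) ^ 2 -
      qf a b c (rot (rot p)) ^ 2 = 4 * N ^ 2 * (a * c - b ^ 2) := by
      simp [hNdef, hexN, qf, rot]; ring
    rw [this, hD, mul_one]
  have key : 3 < (r * qf a b c p)⁻¹ ^ 3 + (r * qf a b c (rot p))⁻¹ ^ 3 +
      (r * qf a b c (rot (rot p)))⁻¹ ^ 3 := by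
    refine core (C := (a + b + c) / √3) (by positivity) (by positivity) (by positivity) ?_ ?_ ?_ ?_
    · rwa [one_lt_div h3]
    · rw [div_le_iff₀ h3]
      nlinarith
    · rw [← mul_add, ← mul_add, hsum, ← mul_assoc, mul_left_comm, hrN]
      field_simp
      linear_combination (a + b + c) * h33
    · have : (r * N) ^ 2 = 3 / 4 := by rw [hrN]; linear_combination h33 / 4
      linear_combination r ^ 2 * hquad + 4 * this
  have key' : 3 < (r * qf a b c p)⁻¹ ^ k + (r * qf a b c (rot p))⁻¹ ^ k +
      (r * qf a b c (rot (rot p)))⁻¹ ^ k := by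
    rcases hk with rfl | rfl
    · exact key
    · -- a sum of cubes exceeding `3` forces the sum of their squares to exceed `3`
      generalize (r * qf a b c p)⁻¹ = x at *
      generalize (r * qf a b c (rot p))⁻¹ = y at *
      generalize (r * qf a b c (rot (rot p)))⁻¹ = z at *
      nlinarith [sq_nonneg (x ^ 3 - 1), sq_nonneg (y ^ 3 - 1), sq_nonneg (z ^ 3 - 1)]
  have hmul : ∀ q : ℝ, q⁻¹ ^ k = r ^ k * (r * q)⁻¹ ^ k := fun q => by
    rw [← mul_pow, mul_inv, mul_inv_cancel_left₀ hrpos.ne']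
  rw [hmul (qf a b c p), hmul (qf a b c (rot p)), hmul (qf a b c (rot (rot p))), ← mul_add,
    ← mul_add, ← mul_pow]
  have : √3 / 2 * N⁻¹ = r := by rw [hr]; field_simp
  rw [this, mul_comm]
  gcongr

/-- Averages `orbit_lt` over `ℤ × ℤ`, which `rot` permutes. -/
lemma moderate_lt (ha : 0 < a) (hD : a * c - b ^ 2 = 1)
    (h1 : √3 < a + b + c) (h2 : a + b + c ≤ 2.1) {k : ℕ} (hk : k = 3 ∨ k = 6) :
    (√3 / 2) ^ k * ∑' p, (hexN p)⁻¹ ^ k < ∑' p, (qf a b c p)⁻¹ ^ k := by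
  have hk3 : 3 ≤ k := by omega
  have s0 := qf_summable ha hD hk3
  have s1 : Summable fun p => (qf a b c (rot p))⁻¹ ^ k := rot.summable_iff.2 s0
  have s2 : Summable fun p => (qf a b c (rot (rot p)))⁻¹ ^ k := rot.summable_iff.2 s1
  have e1 : ∑' p, (qf a b c (rot p))⁻¹ ^ k = ∑' p, (qf a b c p)⁻¹ ^ k :=
    rot.tsum_eq fun p => (qf a b c p)⁻¹ ^ k
  have e2 : ∑' p, (qf a b c (rot (rot p)))⁻¹ ^ k = ∑' p, (qf a b c p)⁻¹ ^ k := by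
    rw [← e1]; exact rot.tsum_eq fun p => (qf a b c (rot p))⁻¹ ^ k
  have e : 3 * ∑' p, (qf a b c p)⁻¹ ^ k = ∑' p, ((qf a b c p)⁻¹ ^ k +
      (qf a b c (rot p))⁻¹ ^ k + (qf a b c (rot (rot p)))⁻¹ ^ k) := by
    rw [(s0.add s1).tsum_add s2, s0.tsum_add s1, e1, e2]; ring
  have hlt : ∑' p, 3 * ((√3 / 2) ^ k * (hexN p)⁻¹ ^ k) < 3 * ∑' p, (qf a b c p)⁻¹ ^ k := by
    rw [e]
    refine Summable.tsum_lt_tsum (i := (1, 0)) (fun p => ?_)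
      (orbit_lt ha hD h1 h2 hk (by simp)) (((hex_summable hk3).mul_left _).mul_left _)
      ((s0.add s1).add s2)
    by_cases hp : p = 0
    · have : k ≠ 0 := by omega
      subst hp; simp [hexN, qf, rot, this]
    · exact (orbit_lt ha hD h1 h2 hk hp).le
  rw [tsum_mul_left, tsum_mul_left] at hlt
  linarith

/-- Here `(±1, 0)` alone give `2 a⁻ᵏ`, which exceeds the whole hexagonal sum. -/
lemma cusp_lt (ha : 0 < a) (hD : a * c - b ^ 2 = 1) (h : a ≤ 0.73) {k : ℕ} (hk : k = 3 ∨ k = 6) :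
    (√3 / 2) ^ k * ∑' p, (hexN p)⁻¹ ^ k < ∑' p, (qf a b c p)⁻¹ ^ k := by
  have hk3 : 3 ≤ k := by omega
  have h3 : √3 < 1.7321 := by
    rw [Real.sqrt_lt' (by norm_num)]; norm_num
  have hlow : 2 * a⁻¹ ^ k ≤ ∑' p, (qf a b c p)⁻¹ ^ k := by
    have := (qf_summable ha hD hk3).sum_le_tsum {((1 : ℤ), (0 : ℤ)), (-1, 0)}
      (fun p _ => by have := qf_nonneg ha hD p; positivity)
    rw [Finset.sum_pair (by decide)] at this
    simp only [qf] at this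
    norm_num at this
    simp only [inv_pow, qf]
    linarith
  refine lt_of_lt_of_le ?_ hlow
  have hup : (√3 / 2) ^ k * ∑' p, (hexN p)⁻¹ ^ k ≤ (1.7321 / 2) ^ k * 7.26 := by
    have := hex_tsum_le hk3
    have h0 : 0 ≤ ∑' p, (hexN p)⁻¹ ^ k :=
      tsum_nonneg fun p => by have := hexN_nonneg p; positivity
    gcongr
  have hinv : (0.73 : ℝ)⁻¹ ≤ a⁻¹ := by gcongr
  have : 2 * (0.73 : ℝ)⁻¹ ^ k ≤ 2 * a⁻¹ ^ k := by gcongr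
  refine hup.trans_lt (lt_of_lt_of_le ?_ this)
  rcases hk with rfl | rfl <;> norm_num

/-- Among reduced forms of determinant one, `a + b + c = √3` singles out the hexagonal form. -/
lemma reduced_cases (ha : 0 < a) (hD : a * c - b ^ 2 = 1) (hb1 : -a ≤ 2 * b) (hb2 : b ≤ 0)
    (hac : a ≤ c) {k : ℕ} (hk : k = 3 ∨ k = 6) (hne : a + b + c ≠ √3) :
    (√3 / 2) ^ k * ∑' p, (hexN p)⁻¹ ^ k < ∑' p, (qf a b c p)⁻¹ ^ k := by
  by_cases h : a ≤ 0.73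
  · exact cusp_lt ha hD h hk
  push Not at h
  have hσ : √3 < a + b + c := by
    refine lt_of_le_of_ne ?_ hne.symm
    rw [Real.sqrt_le_left (by linarith)]
    nlinarith [sq_nonneg (a + b - (c + b)), sq_nonneg (a + b + b), sq_nonneg (c + b + b)]
  refine moderate_lt ha hD hσ ?_ hk
  -- `a (a + b + c) = a² + 1 + b (a + b) ≤ a² + 1`, and `a² + 1 ≤ 2.1 a` on `[0.73, 1.2]`
  have ha2 : a ≤ 1.2 := by nlinarith
  have h5 : a * (a + b + c) ≤ a * 2.1 := by nlinarith
  exact le_of_mul_le_mul_left h5 ha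
end

/-! ### Gram forms and reduction of lattices -/

open scoped RealInnerProductSpace

/-- The form `qf` with coefficients the Gram matrix of `(u, v)`. -/
def gram (u v : R2) : ℤ × ℤ → ℝ := qf (‖u‖ ^ 2) ⟪u, v⟫ (‖v‖ ^ 2)

lemma gram_eq (u v : R2) (p : ℤ × ℤ) : gram u v p = ‖(p.1 : ℝ) • u + (p.2 : ℝ) • v‖ ^ 2 := by
  rw [norm_add_sq_real, norm_smul, norm_smul, mul_pow, mul_pow, inner_smul_left, inner_smul_right]
  simp [gram, qf]; ring

/-- The determinant of the Gram matrix of `(u, v)`: the square of the area of the lattice it spans. -/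
def detG (u v : R2) : ℝ := ‖u‖ ^ 2 * ‖v‖ ^ 2 - ⟪u, v⟫ ^ 2

lemma area_sq (u v : R2) :
    (‖u‖ * ‖v‖ * |Real.sin (InnerProductGeometry.angle u v)|) ^ 2 = detG u v := by
  rw [mul_pow, sq_abs, Real.sin_sq, detG, ← InnerProductGeometry.cos_angle_mul_norm_mul_norm]
  ring

lemma area_eq_iff (u v : R2) {A : ℝ} (hA : 0 ≤ A) :
    ‖u‖ * ‖v‖ * |Real.sin (InnerProductGeometry.angle u v)| = A ↔ detG u v = A ^ 2 := by
  rw [← area_sq, sq_eq_sq₀ (by positivity) hA]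

lemma linInd_iff (u v : R2) : LinearIndependent ℝ ![u, v] ↔
    ∀ x y : ℝ, x • u + y • v = 0 → x = 0 ∧ y = 0 := LinearIndependent.pair_iff

/-- The zeta function as a sum over `ℤ × ℤ`; the term at `0` is `0⁻¹ ^ k = 0`. -/
lemma zeta_eq {L : Set R2} {u v : R2} (h : LatticeBasis L u v) {k : ℕ} (hk : k ≠ 0) {s : ℝ}
    (hs : s = 2 * (k : ℝ)) :
    zetaL L s = ∑' p, (gram u v p)⁻¹ ^ k := by
  obtain ⟨hli, rfl⟩ := h
  rw [linInd_iff] at hli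
  have hterm : ∀ x : R2, ‖x‖ ^ (-s) = (‖x‖ ^ 2)⁻¹ ^ k := fun x => by
    rw [Real.rpow_neg (norm_nonneg _), hs, Real.rpow_mul (norm_nonneg _), Real.rpow_natCast]
    norm_num
  let e : {p : ℤ × ℤ // p ≠ 0} →
      {x : R2 // x ∈ {x : R2 | ∃ m n : ℤ, x = (m : ℝ) • u + (n : ℝ) • v} ∧ x ≠ 0} := fun p =>
    ⟨(p.1.1 : ℝ) • u + (p.1.2 : ℝ) • v, ⟨p.1.1, p.1.2, rfl⟩, fun h0 => p.2 <| by
      obtain ⟨h1, h2⟩ := hli _ _ h0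
      ext
      · exact_mod_cast h1
      · exact_mod_cast h2⟩
  have he : Function.Bijective e := by
    constructor
    · intro p q hpq
      have h0 : (p.1.1 : ℝ) • u + (p.1.2 : ℝ) • v = (q.1.1 : ℝ) • u + (q.1.2 : ℝ) • v :=
        congrArg Subtype.val hpq
      have h1 : ((p.1.1 : ℝ) - q.1.1) • u + ((p.1.2 : ℝ) - q.1.2) • v = 0 := by
        rw [sub_smul, sub_smul, ← sub_eq_zero.2 h0]; abel
      obtain ⟨h2, h3⟩ := hli _ _ h1
      ext
      · exact_mod_cast sub_eq_zero.1 h2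
      · exact_mod_cast sub_eq_zero.1 h3
    · rintro ⟨x, ⟨m, n, rfl⟩, hx⟩
      refine ⟨⟨(m, n), ?_⟩, rfl⟩
      rintro h0
      simp only [Prod.mk_eq_zero] at h0
      exact hx (by simp [h0.1, h0.2])
  unfold zetaL
  rw [← (Equiv.ofBijective e he).tsum_eq]
  simp only [hterm]
  have h1 : ∀ p : {p : ℤ × ℤ // p ≠ 0}, (‖((Equiv.ofBijective e he p : _) : R2)‖ ^ 2)⁻¹ ^ k =
      (gram u v p)⁻¹ ^ k := fun p => by rw [gram_eq]; rfl
  simp only [h1]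
  refine tsum_subtype_eq_of_support_subset (f := fun p => (gram u v p)⁻¹ ^ k)
    (s := {p | p ≠ 0}) ?_
  intro p hp h0
  apply hp
  subst h0
  simp [gram, qf, hk]

lemma LatticeBasis.swap {L : Set R2} {u v : R2} (h : LatticeBasis L u v) : LatticeBasis L v u := by
  obtain ⟨h1, rfl⟩ := h
  rw [linInd_iff] at h1
  refine ⟨(linInd_iff _ _).2 fun x y h => (h1 y x (by rw [add_comm, h])).symm, ?_⟩
  ext x; constructor
  · rintro ⟨m, n, rfl⟩; exact ⟨n, m, add_comm _ _⟩
  · rintro ⟨m, n, rfl⟩; exact ⟨n, m, add_comm _ _⟩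

lemma LatticeBasis.add {L : Set R2} {u v : R2} (h : LatticeBasis L u v) (e : ℤ) :
    LatticeBasis L u (v + (e : ℝ) • u) := by
  obtain ⟨h1, rfl⟩ := h
  rw [linInd_iff] at h1
  refine ⟨(linInd_iff _ _).2 fun x y h => ?_, ?_⟩
  · obtain ⟨h2, h3⟩ := h1 (x + y * e) y (by rw [← h]; module)
    subst h3; simpa using h2
  ext x; constructor
  · rintro ⟨m, n, rfl⟩; exact ⟨m - n * e, n, by push_cast; module⟩
  · rintro ⟨m, n, rfl⟩; exact ⟨m + n * e, n, by push_cast; module⟩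

lemma LatticeBasis.neg {L : Set R2} {u v : R2} (h : LatticeBasis L u v) :
    LatticeBasis L u (-v) := by
  obtain ⟨h1, rfl⟩ := h
  rw [linInd_iff] at h1
  refine ⟨(linInd_iff _ _).2 fun x y h => ?_, ?_⟩
  · obtain ⟨h2, h3⟩ := h1 x (-y) (by rw [← h]; module)
    exact ⟨h2, by simpa using h3⟩
  ext x; constructor
  · rintro ⟨m, n, rfl⟩; exact ⟨m, -n, by push_cast; module⟩
  · rintro ⟨m, n, rfl⟩; exact ⟨m, -n, by push_cast; module⟩

lemma LatticeBasis.smul {L : Set R2} {u v : R2} (h : LatticeBasis L u v) {t : ℝ} (ht : t ≠ 0) :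
    LatticeBasis ((fun x => t • x) '' L) (t • u) (t • v) := by
  obtain ⟨h1, rfl⟩ := h
  rw [linInd_iff] at h1
  refine ⟨(linInd_iff _ _).2 fun x y h => ?_, ?_⟩
  · have := h1 x y (by
      have h' : t • (x • u + y • v) = 0 := by rw [← h]; module
      exact (smul_eq_zero.1 h').resolve_left ht)
    exact this
  ext x; constructor
  · rintro ⟨_, ⟨m, n, rfl⟩, rfl⟩; exact ⟨m, n, by simp only; module⟩
  · rintro ⟨m, n, rfl⟩; exact ⟨_, ⟨m, n, rfl⟩, by simp only; module⟩

lemma LatticeBasis.ne_zero {L : Set R2} {u v : R2} (h : LatticeBasis L u v) : u ≠ 0 := by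
  rintro rfl
  have := (linInd_iff _ _).1 h.1 1 0 (by simp)
  simp at this

lemma detG_swap (u v : R2) : detG v u = detG u v := by
  unfold detG; rw [real_inner_comm]; ring

lemma detG_add (u v : R2) (e : ℝ) : detG u (v + e • u) = detG u v := by
  unfold detG
  rw [norm_add_sq_real, norm_smul, mul_pow, inner_add_right, inner_smul_right, inner_smul_right,
    real_inner_self_eq_norm_sq, real_inner_comm, Real.norm_eq_abs, sq_abs]; ring

lemma detG_neg (u v : R2) : detG u (-v) = detG u v := by
  unfold detG; simp

lemma detG_smul (t : ℝ) (u v : R2) : detG (t • u) (t • v) = t ^ 4 * detG u v := by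
  unfold detG
  rw [norm_smul, norm_smul, mul_pow, mul_pow, inner_smul_left, inner_smul_right,
    Real.norm_eq_abs, sq_abs]
  simp; ring

lemma exists_minimal_basis {L : Set R2} (h : HasArea L 1) :
    ∃ u v, LatticeBasis L u v ∧ detG u v = 1 ∧
      ∀ x y, LatticeBasis L x y → detG x y = 1 → ‖u‖ ^ 2 + ‖v‖ ^ 2 ≤ ‖x‖ ^ 2 + ‖y‖ ^ 2 := by
  obtain ⟨u₀, v₀, hb₀, hA⟩ := h
  rw [area_eq_iff _ _ zero_le_one, one_pow] at hA
  let w : ℤ × ℤ → R2 := fun p => (p.1 : ℝ) • u₀ + (p.2 : ℝ) • v₀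
  have hmem : ∀ x ∈ L, ∃ p, x = w p := by
    intro x hx
    rw [hb₀.2] at hx
    obtain ⟨m, n, rfl⟩ := hx
    exact ⟨(m, n), rfl⟩
  have hu₀ : 0 < ‖u₀‖ ^ 2 := by have := norm_pos_iff.2 hb₀.ne_zero; positivity
  -- only finitely many lattice points lie in a given disc
  have hfin : ∀ B : ℝ, {p : ℤ × ℤ | ‖w p‖ ^ 2 ≤ B}.Finite := by
    intro B
    have hsum := qf_summable hu₀ hA (le_refl 3)
    have hle := hsum.tendsto_cofinite_zero
    by_contra hinf
    have hB : 0 < B := by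
      by_contra! hB
      refine hinf (Set.Finite.subset (Set.finite_singleton (0 : ℤ × ℤ)) fun p hp => ?_)
      by_contra hp0
      have := qf_pos hu₀ hA (hexN_pos hp0)
      have e := gram_eq u₀ v₀ p
      unfold gram at e
      rw [e] at this
      have h2 : ‖w p‖ ^ 2 ≤ B := hp
      exact absurd (this.trans_le h2) (not_lt.2 hB)
    have hev := hle.eventually_lt_const (show (0 : ℝ) < B⁻¹ ^ 3 by positivity)
    rw [Filter.eventually_cofinite] at hev
    refine hinf ((hev.union (Set.finite_singleton (0 : ℤ × ℤ))).subset fun p hp => ?_)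
    by_cases hp0 : p = 0
    · right; exact hp0
    left
    have h1 := qf_pos hu₀ hA (hexN_pos hp0)
    have e := gram_eq u₀ v₀ p
    unfold gram at e
    have h2 : ‖w p‖ ^ 2 ≤ B := hp
    simp only [Set.mem_ofPred_eq, not_lt]
    have h3 : qf (‖u₀‖ ^ 2) ⟪u₀, v₀⟫ (‖v₀‖ ^ 2) p ≤ B := by rw [e]; exact h2
    gcongr
  -- pairs of index vectors whose images form a basis of determinant one
  let S := {q : (ℤ × ℤ) × (ℤ × ℤ) // LatticeBasis L (w q.1) (w q.2) ∧ detG (w q.1) (w q.2) = 1}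
  let f : S → ℝ := fun q => ‖w q.1.1‖ ^ 2 + ‖w q.1.2‖ ^ 2
  have hS : Nonempty S := ⟨⟨((1, 0), (0, 1)), by simpa [w] using ⟨hb₀, hA⟩⟩⟩
  have hf : Filter.Tendsto f Filter.cofinite Filter.atTop := by
    rw [Filter.tendsto_atTop]
    intro B
    rw [Filter.eventually_cofinite]
    refine Set.Finite.of_finite_image (f := Subtype.val)
      (((hfin B).prod (hfin B)).subset ?_) Subtype.val_injective.injOn
    rintro _ ⟨q, hq, rfl⟩
    have hq' : ‖w q.1.1‖ ^ 2 + ‖w q.1.2‖ ^ 2 < B := not_le.1 hq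
    exact ⟨by simp only [Set.mem_ofPred_eq]; nlinarith [sq_nonneg ‖w q.1.2‖],
      by simp only [Set.mem_ofPred_eq]; nlinarith [sq_nonneg ‖w q.1.1‖]⟩
  obtain ⟨q, hq⟩ := hf.exists_forall_le
  refine ⟨w q.1.1, w q.1.2, q.2.1, q.2.2, fun u v huv hd => ?_⟩
  obtain ⟨p1, rfl⟩ := hmem u (by rw [huv.2]; exact ⟨1, 0, by simp⟩)
  obtain ⟨p2, rfl⟩ := hmem v (by rw [huv.2]; exact ⟨0, 1, by simp⟩)
  exact hq ⟨(p1, p2), huv, hd⟩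

/-- A basis minimizing `‖u‖² + ‖v‖²` is Lagrange-reduced, up to exchanging `u` and `v` and to the sign
of `v`. -/
lemma exists_reduced {L : Set R2} (h : HasArea L 1) : ∃ u v, LatticeBasis L u v ∧ detG u v = 1 ∧
    -‖u‖ ^ 2 ≤ 2 * ⟪u, v⟫ ∧ ⟪u, v⟫ ≤ 0 ∧ ‖u‖ ^ 2 ≤ ‖v‖ ^ 2 := by
  obtain ⟨u, v, hq1, hq2, hmin⟩ := exists_minimal_basis h
  obtain ⟨u, v, hb, hd, hm, hle⟩ : ∃ u v, LatticeBasis L u v ∧ detG u v = 1 ∧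
      (∀ x y, LatticeBasis L x y → detG x y = 1 → ‖u‖ ^ 2 + ‖v‖ ^ 2 ≤ ‖x‖ ^ 2 + ‖y‖ ^ 2) ∧
      ‖u‖ ^ 2 ≤ ‖v‖ ^ 2 := by
    rcases le_total (‖u‖ ^ 2) (‖v‖ ^ 2) with h | h
    · exact ⟨u, v, hq1, hq2, hmin, h⟩
    · exact ⟨v, u, hq1.swap, by rwa [detG_swap], by rwa [add_comm], h⟩
  have hadd : ∀ e : ℤ, 0 ≤ 2 * e * ⟪u, v⟫ + (e : ℝ) ^ 2 * ‖u‖ ^ 2 := by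
    intro e
    have := hm _ _ (hb.add e) (by rwa [detG_add])
    rw [norm_add_sq_real, norm_smul, mul_pow, inner_smul_right, real_inner_comm,
      Real.norm_eq_abs, sq_abs] at this
    linarith
  have h1 := hadd 1
  have h2 := hadd (-1)
  push_cast at h1 h2
  rcases le_total ⟪u, v⟫ 0 with h | h
  · exact ⟨u, v, hb, hd, by linarith, h, hle⟩
  · exact ⟨u, -v, hb.neg, by rwa [detG_neg], by rw [inner_neg_right]; linarith,
      by rw [inner_neg_right]; linarith, by rwa [norm_neg]⟩

/-! ### The triangular lattice -/

lemma inner_vec2 (x y z w : ℝ) : ⟪vec2 x y, vec2 z w⟫ = x * z + y * w := by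
  simp [vec2, PiLp.inner_apply, Fin.sum_univ_two]; ring

lemma normSq_vec2 (x y : ℝ) : ‖vec2 x y‖ ^ 2 = x ^ 2 + y ^ 2 := by
  rw [← real_inner_self_eq_norm_sq, inner_vec2]; ring

lemma linInd_of_detG {u v : R2} (h : 0 < detG u v) : LinearIndependent ℝ ![u, v] := by
  rw [linInd_iff]
  intro x y hxy
  have h1 : ⟪x • u + y • v, u⟫ = 0 := by rw [hxy, inner_zero_left]
  have h2 : ⟪x • u + y • v, v⟫ = 0 := by rw [hxy, inner_zero_left]
  rw [inner_add_left, inner_smul_left, inner_smul_left, real_inner_self_eq_norm_sq] at h1 h2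
  rw [real_inner_comm] at h1
  simp only [conj_trivial] at h1 h2
  unfold detG at h
  constructor
  · refine (mul_eq_zero.1 (?_ : x * (‖u‖ ^ 2 * ‖v‖ ^ 2 - ⟪u, v⟫ ^ 2) = 0)).resolve_right h.ne'
    linear_combination ‖v‖ ^ 2 * h1 - ⟪u, v⟫ * h2
  · refine (mul_eq_zero.1 (?_ : y * (‖u‖ ^ 2 * ‖v‖ ^ 2 - ⟪u, v⟫ ^ 2) = 0)).resolve_right h.ne'
    linear_combination ‖u‖ ^ 2 * h2 - ⟪u, v⟫ * h1

/-- The basis is the defining one with its second vector negated, so that it is Lagrange-reduced with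
`⟪u, v⟫ ≤ 0` and has Gram form proportional to `hexN`. -/
lemma exists_tri_basis {A : ℝ} (hA : 0 < A) : ∃ u v, LatticeBasis (triLattice A) u v ∧
    ‖u‖ ^ 2 = 2 * A / √3 ∧ ⟪u, v⟫ = -(A / √3) ∧ ‖v‖ ^ 2 = 2 * A / √3 := by
  set t := √(2 * A / √3) with ht
  have h3 : (0 : ℝ) < √3 := by positivity
  have h33 : √3 ^ 2 = 3 := Real.sq_sqrt (by norm_num)
  have ht2 : t ^ 2 = 2 * A / √3 := Real.sq_sqrt (by positivity)
  have hu : ‖t • vec2 1 0‖ ^ 2 = 2 * A / √3 := by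
    rw [norm_smul, mul_pow, normSq_vec2, Real.norm_eq_abs, sq_abs, ht2]; ring
  have hv : ‖t • vec2 (1 / 2) (√3 / 2)‖ ^ 2 = 2 * A / √3 := by
    rw [norm_smul, mul_pow, normSq_vec2, Real.norm_eq_abs, sq_abs, ht2, div_pow √3, h33]; ring
  have hi : ⟪t • vec2 1 0, t • vec2 (1 / 2) (√3 / 2)⟫ = A / √3 := by
    rw [inner_smul_left, inner_smul_right, inner_vec2, conj_trivial, ← mul_assoc, ← sq, ht2]
    ring
  have hb : LatticeBasis (triLattice A) (t • vec2 1 0) (t • vec2 (1 / 2) (√3 / 2)) := by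
    refine ⟨linInd_of_detG ?_, rfl⟩
    rw [detG, hu, hv, hi]
    have : 2 * A / √3 * (2 * A / √3) - (A / √3) ^ 2 = A ^ 2 := by
      field_simp; rw [h33]; ring
    rw [this]; positivity
  exact ⟨_, _, hb.neg, hu, by rw [inner_neg_right, hi], by rwa [norm_neg]⟩

lemma gram_tri {A : ℝ} {u v : R2} (hu : ‖u‖ ^ 2 = 2 * A / √3) (hi : ⟪u, v⟫ = -(A / √3))
    (hv : ‖v‖ ^ 2 = 2 * A / √3) (p : ℤ × ℤ) : gram u v p = A * (2 / √3 * hexN p) := by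
  rw [gram, hu, hi, hv, qf, hexN]; ring

lemma zeta_tri {A : ℝ} (hA : 0 < A) {k : ℕ} (hk : k ≠ 0) {s : ℝ} (hs : s = 2 * (k : ℝ)) :
    zetaL (triLattice A) s = A⁻¹ ^ k * ((√3 / 2) ^ k * ∑' p, (hexN p)⁻¹ ^ k) := by
  obtain ⟨u, v, hb, hu, hi, hv⟩ := exists_tri_basis hA
  rw [zeta_eq hb hk hs, ← tsum_mul_left, ← tsum_mul_left]
  congr 1; ext p
  rw [gram_tri hu hi hv, mul_inv, mul_inv, inv_div, mul_pow, mul_pow]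

lemma rotation_of_gram {L M : Set R2} {u v u' v' : R2} (h : LatticeBasis L u v)
    (h' : LatticeBasis M u' v') (hu : ‖u‖ ^ 2 = ‖u'‖ ^ 2) (hi : ⟪u, v⟫ = ⟪u', v'⟫)
    (hv : ‖v‖ ^ 2 = ‖v'‖ ^ 2) : IsRotationOf L M := by
  let B := basisOfLinearIndependentOfCardEqFinrank h'.1 (by simp)
  let f : R2 →ₗ[ℝ] R2 := B.constr ℝ ![u, v]
  have hf : ∀ x y : ℝ, f (x • u' + y • v') = x • u + y • v := fun x y => by
    have e0 : f u' = u := by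
      have h0 : B 0 = u' := by simp [B]
      have := B.constr_basis ℝ ![u, v] 0
      rw [h0] at this
      exact this
    have e1 : f v' = v := by
      have h1 : B 1 = v' := by simp [B]
      have := B.constr_basis ℝ ![u, v] 1
      rw [h1] at this
      exact this
    rw [map_add, map_smul, map_smul, e0, e1]
  have hnorm : ∀ x, ‖f x‖ = ‖x‖ := fun x => by
    have hx : x = B.repr x 0 • u' + B.repr x 1 • v' := by
      conv_lhs => rw [← B.sum_repr x]
      simp [Fin.sum_univ_two, B]
    rw [hx, hf, ← sq_eq_sq₀ (norm_nonneg _) (norm_nonneg _), norm_add_sq_real, norm_add_sq_real]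
    simp only [norm_smul, mul_pow, inner_smul_left, inner_smul_right, hu, hv, hi]
  let F : R2 →ₗᵢ[ℝ] R2 := ⟨f, hnorm⟩
  refine ⟨F.toLinearIsometryEquiv rfl, ?_⟩
  rw [h.2, h'.2]
  ext x
  constructor
  · rintro ⟨m, n, rfl⟩; exact ⟨_, ⟨m, n, rfl⟩, hf m n⟩
  · rintro ⟨_, ⟨m, n, rfl⟩, rfl⟩; exact ⟨m, n, hf m n⟩

lemma zeta_rotation {L M : Set R2} (h : IsRotationOf L M) (s : ℝ) : zetaL L s = zetaL M s := by
  obtain ⟨f, rfl⟩ := h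
  unfold zetaL
  let e : {x : R2 // x ∈ M ∧ x ≠ 0} ≃ {x : R2 // x ∈ f '' M ∧ x ≠ 0} :=
    f.toEquiv.subtypeEquiv fun x => by simp
  rw [← e.tsum_eq]
  congr 1; ext x
  change ‖f x‖ ^ (-s) = _
  rw [f.norm_map]

/-- Strict minimality of the triangular lattice for the exponents `6` and `12`. -/
lemma zeta_lt {L : Set R2} (hA : HasArea L 1) (hL : ¬ IsRotationOf L (triLattice 1)) {k : ℕ}
    (hk : k = 3 ∨ k = 6) {s : ℝ} (hs : s = 2 * (k : ℝ)) :
    zetaL (triLattice 1) s < zetaL L s := by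
  have hk0 : k ≠ 0 := by omega
  obtain ⟨u, v, hb, hd, h1, h2, h3⟩ := exists_reduced hA
  have hu0 : 0 < ‖u‖ ^ 2 := by have := norm_pos_iff.2 hb.ne_zero; positivity
  rw [zeta_tri one_pos hk0 hs, zeta_eq hb hk0 hs, inv_one, one_pow, one_mul]
  refine reduced_cases hu0 hd h1 h2 h3 hk fun hσ => hL ?_
  obtain ⟨u', v', hb', hu', hi', hv'⟩ := exists_tri_basis one_pos
  have h33 : √3 ^ 2 = 3 := Real.sq_sqrt (by norm_num)
  have hpos : (0 : ℝ) < √3 := by positivity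
  unfold detG at hd
  -- the three coefficients `a + b`, `c + b`, `-b` have sum `√3` and pairwise products summing to `1`
  have hsq : (‖u‖ ^ 2 + ⟪u, v⟫ - (‖v‖ ^ 2 + ⟪u, v⟫)) ^ 2 + (‖u‖ ^ 2 + ⟪u, v⟫ - -⟪u, v⟫) ^ 2 +
      (‖v‖ ^ 2 + ⟪u, v⟫ - -⟪u, v⟫) ^ 2 = 0 := by
    linear_combination 2 * h33 - 6 * hd + 2 * (‖u‖ ^ 2 + ⟪u, v⟫ + ‖v‖ ^ 2 + √3) * hσ
  have e1 : ‖u‖ ^ 2 = -2 * ⟪u, v⟫ := by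
    have : (‖u‖ ^ 2 + ⟪u, v⟫ - -⟪u, v⟫) ^ 2 = 0 := by
      refine le_antisymm ?_ (sq_nonneg _)
      linarith [sq_nonneg (‖u‖ ^ 2 + ⟪u, v⟫ - (‖v‖ ^ 2 + ⟪u, v⟫)),
        sq_nonneg (‖v‖ ^ 2 + ⟪u, v⟫ - -⟪u, v⟫)]
    linear_combination pow_eq_zero_iff two_ne_zero |>.1 this
  have e2 : ‖v‖ ^ 2 = -2 * ⟪u, v⟫ := by
    have : (‖v‖ ^ 2 + ⟪u, v⟫ - -⟪u, v⟫) ^ 2 = 0 := by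
      refine le_antisymm ?_ (sq_nonneg _)
      linarith [sq_nonneg (‖u‖ ^ 2 + ⟪u, v⟫ - (‖v‖ ^ 2 + ⟪u, v⟫)),
        sq_nonneg (‖u‖ ^ 2 + ⟪u, v⟫ - -⟪u, v⟫)]
    linear_combination pow_eq_zero_iff two_ne_zero |>.1 this
  have e3 : ⟪u, v⟫ = -(1 / √3) := by
    have : √3 = -3 * ⟪u, v⟫ := by rw [← hσ, e1, e2]; ring
    field_simp
    linear_combination (√3 / 3) * this - h33 / 3
  refine rotation_of_gram hb hb' ?_ (e3.trans hi'.symm) ?_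
  · rw [e1, hu', e3]; ring
  · rw [e2, hv', e3]; ring

/-! ### Scaling and the energy inequality -/

lemma zeta_smul {L : Set R2} {u v : R2} (h : LatticeBasis L u v) {t : ℝ} (ht : t ≠ 0) {k : ℕ}
    (hk : k ≠ 0) {s : ℝ} (hs : s = 2 * (k : ℝ)) :
    zetaL ((fun x => t • x) '' L) s = (t ^ 2)⁻¹ ^ k * zetaL L s := by
  rw [zeta_eq h hk hs, zeta_eq (h.smul ht) hk hs, ← tsum_mul_left]
  congr 1; ext p
  rw [gram_eq, gram_eq, ← mul_pow, ← mul_inv, smul_comm _ t, smul_comm _ t, ← smul_add, norm_smul,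
    mul_pow, Real.norm_eq_abs, sq_abs]

lemma hasArea_smul {L : Set R2} {A t : ℝ} (h : HasArea L A) (ht : t ≠ 0) :
    HasArea ((fun x => t • x) '' L) (t ^ 2 * A) := by
  obtain ⟨u, v, hb, hA⟩ := h
  have hA0 : 0 ≤ A := by rw [← hA]; positivity
  rw [area_eq_iff _ _ hA0] at hA
  refine ⟨_, _, hb.smul ht, ?_⟩
  rw [area_eq_iff _ _ (by positivity), detG_smul, hA]; ring

/-- The lattice `ℤ²` has a vector of norm `1`, whereas the nonzero vectors of `Λ₁` have squared norm at
least `2 / √3 > 1`. -/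
lemma exists_not_rotation : ∃ L : Set R2, HasArea L 1 ∧ ¬ IsRotationOf L (triLattice 1) := by
  have hd : detG (vec2 1 0) (vec2 0 1) = 1 := by
    rw [detG, normSq_vec2, normSq_vec2, inner_vec2]; norm_num
  refine ⟨_, ⟨vec2 1 0, vec2 0 1, ⟨linInd_of_detG (by rw [hd]; exact one_pos), rfl⟩, ?_⟩, ?_⟩
  · rw [area_eq_iff _ _ zero_le_one, hd, one_pow]
  rintro ⟨f, hf⟩
  have hmem : vec2 1 0 ∈ f '' triLattice 1 := by
    rw [← hf]; exact ⟨1, 0, by simp⟩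
  obtain ⟨x, hx, hfx⟩ := hmem
  obtain ⟨u, v, hb, hu, hi, hv⟩ := exists_tri_basis one_pos
  rw [hb.2] at hx
  obtain ⟨m, n, rfl⟩ := hx
  have h1 : gram u v (m, n) = 1 := by
    rw [gram_eq, ← f.norm_map, hfx, normSq_vec2]; norm_num
  rw [gram_tri hu hi hv] at h1
  have h3 : √3 < 2 := by rw [Real.sqrt_lt' (by norm_num)]; norm_num
  have h4 : 1 < 2 / √3 := by rwa [one_lt_div (by positivity)]
  rcases hexN_eq_zero_or (m, n) with h | h
  · rw [h] at h1; norm_num at h1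
  · nlinarith

lemma HasArea.isBravais {L : Set R2} {A : ℝ} (h : HasArea L A) : IsBravais L := by
  obtain ⟨u, v, hb, -⟩ := h
  exact ⟨u, v, hb⟩

/-- By `zeta_lt` the numerator and the denominator of the ratio are positive, so that the division and the
real power in it are genuine. -/
lemma le_ratio_iff {L : Set R2} (h : HasArea L 1) (hL : ¬ IsRotationOf L (triLattice 1))
    {A : ℝ} (hA : 0 < A) :
    A ≤ ((zetaL L 12 - zetaL (triLattice 1) 12) /
        (2 * (zetaL L 6 - zetaL (triLattice 1) 6))) ^ ((1 : ℝ) / 3) ↔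
      2 * A ^ 3 * (zetaL L 6 - zetaL (triLattice 1) 6) ≤
        zetaL L 12 - zetaL (triLattice 1) 12 := by
  have h6 := sub_pos.2 (zeta_lt h hL (k := 3) (s := 6) (Or.inl rfl) (by norm_num))
  have h12 := sub_pos.2 (zeta_lt h hL (k := 6) (s := 12) (Or.inr rfl) (by norm_num))
  rw [one_div, Real.le_rpow_inv_iff_of_pos hA.le (by positivity) (by norm_num),
    le_div_iff₀ (by positivity)]
  norm_cast
  rw [mul_comm 2 (A ^ 3), mul_assoc]

lemma energy_le_iff {L : Set R2} (h : HasArea L 1) {A : ℝ} (hA : 0 < A) :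
    zetaL (triLattice A) 12 - 2 * zetaL (triLattice A) 6 ≤
        zetaL ((fun x => √A • x) '' L) 12 - 2 * zetaL ((fun x => √A • x) '' L) 6 ↔
      2 * A ^ 3 * (zetaL L 6 - zetaL (triLattice 1) 6) ≤
        zetaL L 12 - zetaL (triLattice 1) 12 := by
  obtain ⟨u, v, hb, -⟩ := h
  have hsA : √A ≠ 0 := by positivity
  have t12 := zeta_tri hA (k := 6) (s := 12) (by norm_num) (by norm_num)
  have t6 := zeta_tri hA (k := 3) (s := 6) (by norm_num) (by norm_num)
  have o12 := zeta_tri one_pos (k := 6) (s := 12) (by norm_num) (by norm_num)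
  have o6 := zeta_tri one_pos (k := 3) (s := 6) (by norm_num) (by norm_num)
  rw [inv_one, one_pow, one_mul] at o12 o6
  rw [← o12] at t12
  rw [← o6] at t6
  rw [t12, t6, zeta_smul hb hsA (k := 6) (by norm_num) (by norm_num),
    zeta_smul hb hsA (k := 3) (by norm_num) (by norm_num), Real.sq_sqrt hA.le,
    ← mul_le_mul_iff_right₀ (show 0 < A ^ 6 by positivity)]
  have e : ∀ x y : ℝ, A ^ 6 * (A⁻¹ ^ 6 * x - 2 * (A⁻¹ ^ 3 * y)) = x - 2 * A ^ 3 * y := fun x y => by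
    field_simp
  rw [e, e]
  constructor <;> intro h <;> linarith

/-- `Λ_A` minimizes the Lennard-Jones energy `E_LJ(L) = ζ_L(12) − 2ζ_L(6)` among Bravais
lattices of area `A` if and only if
`A ≤ inf { ((ζ_L(12) − ζ_{Λ₁}(12)) / (2(ζ_L(6) − ζ_{Λ₁}(6))))^{1/3} }`, the infimum being
over Bravais lattices of area `1` which are not rotations of `Λ₁`. -/
theorem triangular_minimizes_iff (A : ℝ) (hA : 0 < A) :
    (∀ L : Set R2, IsBravais L → HasArea L A →
      zetaL (triLattice A) 12 - 2 * zetaL (triLattice A) 6 ≤ zetaL L 12 - 2 * zetaL L 6) ↔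
    A ≤ sInf {t : ℝ | ∃ L : Set R2, IsBravais L ∧ HasArea L 1 ∧ ¬ IsRotationOf L (triLattice 1) ∧
      t = ((zetaL L 12 - zetaL (triLattice 1) 12) /
            (2 * (zetaL L 6 - zetaL (triLattice 1) 6))) ^ ((1 : ℝ) / 3)} := by
  constructor
  · intro hmin
    refine le_csInf ?_ ?_
    · obtain ⟨L, hL, hrot⟩ := exists_not_rotation
      exact ⟨_, L, hL.isBravais, hL, hrot, rfl⟩
    · rintro _ ⟨L, -, hL, hrot, rfl⟩
      rw [le_ratio_iff hL hrot hA, ← energy_le_iff hL hA]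
      have hLA := hasArea_smul hL (t := √A) (by positivity)
      rw [Real.sq_sqrt hA.le, mul_one] at hLA
      exact hmin _ hLA.isBravais hLA
  · intro hle L _ hL
    -- `L` is `√A` times a lattice `M` of area one
    have hM := hasArea_smul hL (t := (√A)⁻¹) (by positivity)
    rw [inv_pow, Real.sq_sqrt hA.le, inv_mul_cancel₀ hA.ne'] at hM
    have hLM : L = (fun x => √A • x) '' ((fun x => (√A)⁻¹ • x) '' L) := by
      have hs : √A ≠ 0 := by positivity
      simp [Set.image_image, smul_smul, hs]
    rw [hLM, energy_le_iff hM hA]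
    generalize (fun x : R2 => (√A)⁻¹ • x) '' L = M at hM
    by_cases hrot : IsRotationOf M (triLattice 1)
    · simp [zeta_rotation hrot]
    · rw [← le_ratio_iff hM hrot hA]
      -- the set is bounded below by `0`
      refine hle.trans (csInf_le ⟨0, ?_⟩ ⟨M, hM.isBravais, hM, hrot, rfl⟩)
      rintro _ ⟨L', -, hL', hrot', rfl⟩
      have h6 := sub_pos.2 (zeta_lt hL' hrot' (k := 3) (s := 6) (Or.inl rfl) (by norm_num))
      have h12 := sub_pos.2 (zeta_lt hL' hrot' (k := 6) (s := 12) (Or.inr rfl) (by norm_num))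
      positivity
end
end
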